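/- (Kac–Moody–Wakimoto, levels 0 and 1 for E₁₀.) Let g = g(A_{E10}) be the Serre-presented Lie algebra of the E₁₀ generalized Cartan matrix. For every c : Fin 10 → ℕ with c₁ ≤ 1 (level 0 or 1), α = ∑_i c_i α_i ≠ 0, and (α|α) ≤ 0, one has mult(α) = p^{(8)}(1 − (α|α)/2). -/

import Mathlib

/-! Serre presentation of the Kac–Moody Lie algebra `g(A)` of a generalized Cartan
matrix `A`. -/

/-- Generators `e i`, `f i`, `h i` of the Serre presentation. -/
inductive ChevalleyGen (ℓ : ℕ) : Type
  | e : Fin ℓ → ChevalleyGen ℓ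
  | f : Fin ℓ → ChevalleyGen ℓ
  | h : Fin ℓ → ChevalleyGen ℓ

namespace KacMoody

variable {ℓ : ℕ}

/-- The free Lie algebra over `ℂ` on the generators. -/
abbrev FreeLie (ℓ : ℕ) : Type := FreeLieAlgebra ℂ (ChevalleyGen ℓ)

noncomputable def E (i : Fin ℓ) : FreeLie ℓ := FreeLieAlgebra.of ℂ (ChevalleyGen.e i)
noncomputable def F (i : Fin ℓ) : FreeLie ℓ := FreeLieAlgebra.of ℂ (ChevalleyGen.f i)
noncomputable def H (i : Fin ℓ) : FreeLie ℓ := FreeLieAlgebra.of ℂ (ChevalleyGen.h i)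

open LieAlgebra in
/-- The defining relations of the Serre presentation: `⁅h i, h j⁆ = 0`,
`⁅e i, f j⁆ = δ_{ij} h i`, `⁅h i, e j⁆ = A i j • e j`, `⁅h i, f j⁆ = −A i j • f j`, and the
Serre relations `(ad (e i))^(1 − A i j) (e j) = 0`, `(ad (f i))^(1 − A i j) (f j) = 0` for
`i ≠ j`. -/
noncomputable def serreRelations (A : Matrix (Fin ℓ) (Fin ℓ) ℤ) : Set (FreeLie ℓ) :=
  {x : FreeLie ℓ | ∃ i j : Fin ℓ, x = ⁅H i, H j⁆} ∪
  {x : FreeLie ℓ | ∃ i j : Fin ℓ, x = ⁅E i, F j⁆ - if i = j then H i else 0} ∪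
  {x : FreeLie ℓ | ∃ i j : Fin ℓ, x = ⁅H i, E j⁆ - (A i j : ℂ) • E j} ∪
  {x : FreeLie ℓ | ∃ i j : Fin ℓ, x = ⁅H i, F j⁆ + (A i j : ℂ) • F j} ∪
  {x : FreeLie ℓ | ∃ i j : Fin ℓ, i ≠ j ∧ x = ((ad ℂ (FreeLie ℓ) (E i)) ^ (1 - A i j).toNat) (E j)} ∪
  {x : FreeLie ℓ | ∃ i j : Fin ℓ, i ≠ j ∧ x = ((ad ℂ (FreeLie ℓ) (F i)) ^ (1 - A i j).toNat) (F j)}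

/-- The Lie ideal of the free Lie algebra generated by the Serre relations. -/
noncomputable def serreIdeal (A : Matrix (Fin ℓ) (Fin ℓ) ℤ) : LieIdeal ℂ (FreeLie ℓ) :=
  LieSubmodule.lieSpan ℂ (FreeLie ℓ) (serreRelations A)

/-- The Serre-presented Lie algebra `g(A)` of a generalized Cartan matrix `A`: the quotient
of the free Lie algebra on the generators `e i`, `f i`, `h i` by the ideal generated by
the defining relations. -/
abbrev gA (A : Matrix (Fin ℓ) (Fin ℓ) ℤ) : Type := FreeLie ℓ ⧸ serreIdeal A

/-- The image of `h i` in `g(A)`. -/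
noncomputable def Hbar (A : Matrix (Fin ℓ) (Fin ℓ) ℤ) (i : Fin ℓ) : gA A :=
  LieSubmodule.Quotient.mk' (serreIdeal A) (H i)

open LieAlgebra in
/-- The root space `g_α` for `α = ∑ c i • α i`: all `x` with
`⁅h i, x⁆ = (∑ j, A i j * c j) • x` for every `i`. -/
noncomputable def rootSpace (A : Matrix (Fin ℓ) (Fin ℓ) ℤ) (c : Fin ℓ → ℤ) :
    Submodule ℂ (gA A) :=
  ⨅ i : Fin ℓ, Module.End.eigenspace (ad ℂ (gA A) (Hbar A i)) ((∑ j, A i j * c j : ℤ) : ℂ)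

/-- The multiplicity of the root `α = ∑ c i • α i`: the dimension of `g_α`. -/
noncomputable def mult (A : Matrix (Fin ℓ) (Fin ℓ) ℤ) (c : Fin ℓ → ℤ) : ℕ :=
  Module.finrank ℂ (rootSpace A c)

end KacMoody

/-- `p n` is the classical partition function: the number of partitions of `n`. -/
def p (n : ℕ) : ℕ := Fintype.card (Nat.Partition n)

/-- `pColored ℓ n` is the number of `ℓ`-tuples `(λ₁,…,λ_ℓ)` of partitions with
`|λ₁| + ⋯ + |λ_ℓ| = n` (partitions of `n` into parts of `ℓ` colors). -/
def pColored (ℓ n : ℕ) : ℕ :=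
  ∑ k ∈ Finset.Nat.antidiagonalTuple ℓ n, ∏ i, p (k i)

/-- The edges of the `E₁₀` Dynkin diagram (0-indexed): a chain `0–1–2–⋯–8` with the extra
node `9` attached to node `6`.  (In 1-indexed notation, `{1,2},…,{8,9}` and `{7,10}`;
node `1`, here `0`, is the over-extended node.) -/
def e10Edges : List (Fin 10 × Fin 10) :=
  [(0, 1), (1, 2), (2, 3), (3, 4), (4, 5), (5, 6), (6, 7), (7, 8), (6, 9)]

/-- The generalized Cartan matrix of `E₁₀`. -/
def AE10 : Matrix (Fin 10) (Fin 10) ℤ := fun i j =>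
  if i = j then 2 else if (i, j) ∈ e10Edges ∨ (j, i) ∈ e10Edges then -1 else 0

/-- The invariant symmetric bilinear form `(α|α) = ∑_{i,j} c i · A i j · c j` for
`α = ∑ c i • α i`. -/
def normE10 (c : Fin 10 → ℤ) : ℤ := ∑ i, ∑ j, c i * AE10 i j * c j

/-!
# Root multiplicities of over-extended Kac–Moody algebras at levels zero and one

Let `δ` be the null root of the affine subdiagram. Serre's relations give `sl₂`-strings, by which
root spaces of norm greater than `2` vanish and those of norm `2` are at most lines; so each finite
node carries a copy of the loop algebra `sl₂[t, t⁻¹]`, centrally extended by the coroot of `δ`, and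
these copies glue along the finite tree. Their Cartan parts form a Heisenberg algebra with one
oscillator per node and mode.

Level zero is spanned by the loop algebras, and the space at `n • δ` by the modes `h n`, which the
Heisenberg relations show to be independent. Level one is a module over the loop algebras. A root
vector there whose weight has norm `2` is a vacuum for the Heisenberg algebra, and vacuum
relations for affine `sl₂` (those behind the Frenkel–Kac construction) show that the Fock spaces
over these vacua exhaust level one. Every weight `c` of level one is `d + N • δ` with `d` of norm
`2` for exactly one integer `N`, so the space at `c` is the part of degree `N` of one Fock space,
with a basis indexed by `ℓ`-coloured partitions of `N`.

That the generators survive in `g(A)` is seen from the irreducible module of highest weight `ρ`.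
-/

namespace KacMoody

open LieAlgebra Matrix Submodule

section LinearAlgebra

variable {R M κ τ : Type*} [Ring R] [AddCommGroup M] [Module R M]

theorem mem_span_image_of_iSupIndep {W : κ → Submodule R M} (hW : iSupIndep W) {v : τ → M}
    {ω : τ → κ} (hv : ∀ t, v t ∈ W (ω t)) {c : κ} {x : M} (hx : x ∈ span R (Set.range v))
    (hc : x ∈ W c) : x ∈ span R (v '' {t | ω t = c}) := by
  have hsplit : Set.range v = v '' {t | ω t = c} ∪ v '' {t | ω t ≠ c} := by
    rw [← Set.image_union, ← Set.image_univ]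
    congr
    ext
    simp [em]
  rw [hsplit, span_union, mem_sup] at hx
  obtain ⟨y, hy, z, hz, rfl⟩ := hx
  have hyc : y ∈ W c := by
    refine span_le.2 ?_ hy
    rintro _ ⟨t, rfl, rfl⟩
    exact hv t
  have hzc : z ∈ W c := by simpa using sub_mem hc hyc
  have hz' : z ∈ ⨆ (d) (_ : d ≠ c), W d := by
    refine span_le.2 ?_ hz
    rintro _ ⟨t, ht, rfl⟩
    exact mem_iSup_of_mem (ω t) (mem_iSup_of_mem ht (hv t))
  rwa [disjoint_def.1 (hW c) z hzc hz', add_zero]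

theorem exists_eq_smul_of_rank_le_one {K V : Type*} [Field K] [AddCommGroup V] [Module K V]
    {W : Submodule K V} (hW : Module.rank K W ≤ 1) {x y : V} (hx : x ∈ W) (hy : y ∈ W)
    (hy0 : y ≠ 0) : ∃ a : K, x = a • y := by
  obtain ⟨v, -, hv⟩ := (rank_submodule_le_one_iff W).1 hW
  obtain ⟨b, rfl⟩ := mem_span_singleton.1 (hv hy)
  obtain ⟨a, rfl⟩ := mem_span_singleton.1 (hv hx)
  have hb : b ≠ 0 := by
    rintro rfl
    simp at hy0
  exact ⟨a / b, by rw [smul_smul, div_mul_cancel₀ _ hb]⟩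

end LinearAlgebra

section Stabilizer

variable {R L M : Type*} [CommRing R] [LieRing L] [LieAlgebra R L] [AddCommGroup M] [Module R M]
  [LieRingModule L M] [LieModule R L M]

/-- The Lie subalgebra of all elements whose action maps the subspace `W` into itself. -/
def lieStabilizer (W : Submodule R M) : LieSubalgebra R L where
  carrier := {x | ∀ m ∈ W, ⁅x, m⁆ ∈ W}
  zero_mem' m _ := by simp
  add_mem' hx hy m hm := by
    rw [add_lie]
    exact add_mem (hx m hm) (hy m hm)
  smul_mem' a x hx m hm := by
    rw [smul_lie]
    exact smul_mem W a (hx m hm)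
  lie_mem' hx hy m hm := by
    rw [lie_lie]
    exact sub_mem (hx _ (hy m hm)) (hy _ (hx m hm))

theorem mem_lieStabilizer_span {S : Set M} {x : L} (h : ∀ m ∈ S, ⁅x, m⁆ ∈ span R S) :
    x ∈ lieStabilizer (L := L) (span R S) := fun m hm => by
  induction hm using span_induction with
  | mem m hm => exact h m hm
  | zero => simp
  | add m n _ _ hm hn => rw [lie_add]; exact add_mem hm hn
  | smul a m _ hm => rw [lie_smul]; exact smul_mem _ a hm

end Stabilizer

/-- Elements `e i`, `f i`, `h i` of a Lie algebra satisfying the defining relations of `g(A)` other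
than the Serre relations. -/
structure ChevalleyRelations (K : Type*) [Field K] {ι : Type*} [DecidableEq ι]
    (A : Matrix ι ι ℤ) (L : Type*) [LieRing L] [LieAlgebra K L] where
  e : ι → L
  f : ι → L
  h : ι → L
  lie_h_h : ∀ i j, ⁅h i, h j⁆ = 0
  lie_e_f : ∀ i j, ⁅e i, f j⁆ = if i = j then h i else 0
  lie_h_e : ∀ i j, ⁅h i, e j⁆ = (A i j : K) • e j
  lie_h_f : ∀ i j, ⁅h i, f j⁆ = -((A i j : K) • f j)

/-- Elements `e i`, `f i`, `h i` which generate a Lie algebra and satisfy the defining relations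
of the Serre presentation of `g(A)`. -/
structure ChevalleyGenerators (K : Type*) [Field K] {ι : Type*} [DecidableEq ι]
    (A : Matrix ι ι ℤ) (L : Type*) [LieRing L] [LieAlgebra K L] extends
    ChevalleyRelations K A L where
  serre_e : ∀ i j, i ≠ j → (ad K L (e i) ^ (1 - A i j).toNat) (e j) = 0
  serre_f : ∀ i j, i ≠ j → (ad K L (f i) ^ (1 - A i j).toNat) (f j) = 0
  eq_top : ∀ S : LieSubalgebra K L, (∀ i, e i ∈ S) → (∀ i, f i ∈ S) → S = ⊤

namespace ChevalleyRelations

variable {K : Type*} [Field K] {ι : Type*} [DecidableEq ι] {A : Matrix ι ι ℤ}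
  {L : Type*} [LieRing L] [LieAlgebra K L] (G : ChevalleyRelations K A L)

/-- The Chevalley involution: exchange `e` and `f` and negate `h`. -/
def dual : ChevalleyRelations K A L where
  e := G.f
  f := G.e
  h i := -G.h i
  lie_h_h i j := by simp [G.lie_h_h]
  lie_e_f i j := by
    rw [← lie_skew, G.lie_e_f]
    by_cases h : i = j
    · simp [h]
    · simp [h, Ne.symm h]
  lie_h_e i j := by simp [G.lie_h_f]
  lie_h_f i j := by simp [G.lie_h_e]

theorem isSl2Triple {i : ι} (hi : A i i = 2) (hh : G.h i ≠ 0) :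
    IsSl2Triple (G.h i) (G.e i) (G.f i) where
  h_ne_zero := hh
  lie_e_f := by simp [G.lie_e_f]
  lie_h_e_nsmul := by rw [G.lie_h_e, hi, ← Nat.cast_smul_eq_nsmul K]; simp
  lie_h_f_nsmul := by rw [G.lie_h_f, hi, ← Nat.cast_smul_eq_nsmul K]; simp

end ChevalleyRelations

namespace ChevalleyGenerators

variable {K : Type*} [Field K] {ι : Type*} [DecidableEq ι] {A : Matrix ι ι ℤ}
  {L : Type*} [LieRing L] [LieAlgebra K L]

section Chevalley

variable (G : ChevalleyGenerators K A L)

/-- The Chevalley involution of a generating system. -/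
def dual : ChevalleyGenerators K A L where
  toChevalleyRelations := G.toChevalleyRelations.dual
  serre_e := G.serre_f
  serre_f := G.serre_e
  eq_top S he hf := G.eq_top S hf he

/-- The iterated bracket `⁅e j₁, ⁅e j₂, … ⁅e jₙ, e i⁆…⁆⁆` for `w = [j₁, …, jₙ]`. -/
def word (i : ι) (w : List ι) : L := w.foldr (fun j x => ⁅G.e j, x⁆) (G.e i)

@[simp] theorem word_nil (i : ι) : G.word i [] = G.e i := rfl

@[simp] theorem word_cons (i j : ι) (w : List ι) : G.word i (j :: w) = ⁅G.e j, G.word i w⁆ := rfl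

theorem word_replicate_succ_eq_zero (i : ι) (n : ℕ) :
    G.word i (List.replicate (n + 1) i) = 0 := by
  induction n with
  | zero => simp
  | succ n ih => rw [List.replicate_succ, word_cons, ih, lie_zero]

theorem exists_lie_h_word (k i : ι) (w : List ι) :
    ∃ a : K, ⁅G.h k, G.word i w⁆ = a • G.word i w := by
  induction w with
  | nil => exact ⟨A k i, G.lie_h_e k i⟩
  | cons j w ih =>
    obtain ⟨a, ha⟩ := ih
    exact ⟨A k j + a, by rw [word_cons, leibniz_lie, G.lie_h_e, smul_lie, ha, lie_smul, add_smul]⟩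

theorem lie_f_word_mem (i j : ι) (w : List ι) :
    ⁅G.f i, G.word j w⁆ ∈ span K (Set.range G.h ∪ Set.range (Function.uncurry G.word)) := by
  have hmem (j w) : G.word j w ∈ span K (Set.range G.h ∪ Set.range (Function.uncurry G.word)) :=
    subset_span (.inr ⟨(j, w), rfl⟩)
  induction w with
  | nil =>
    rw [word_nil, ← lie_skew, G.lie_e_f]
    split
    · exact neg_mem (subset_span (.inl ⟨_, rfl⟩))
    · simp
  | cons k w ih =>
    rw [word_cons, leibniz_lie]
    refine add_mem ?_ (mem_lieStabilizer_span (x := G.e k) ?_ _ ih)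
    · rw [← lie_skew (G.f i), G.lie_e_f]
      split
      · obtain ⟨a, ha⟩ := G.exists_lie_h_word k j w
        rw [neg_lie, ha]
        exact neg_mem (smul_mem _ _ (hmem j w))
      · simp
    · rintro _ (⟨i, rfl⟩ | ⟨⟨j, w⟩, rfl⟩)
      · rw [← lie_skew, G.lie_h_e]
        exact neg_mem (smul_mem _ _ (hmem k []))
      · exact hmem j (k :: w)

/-- The spanning family of the triangular decomposition. -/
def triangularFamily : (ι × List ι) ⊕ (ι × List ι) ⊕ ι → L :=
  Sum.elim (Function.uncurry G.word) (Sum.elim (Function.uncurry G.dual.word) G.h)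

theorem e_mem_lieStabilizer_triangular (k : ι) :
    G.e k ∈ lieStabilizer (span K (Set.range G.triangularFamily)) := by
  have hmem (t) : G.triangularFamily t ∈ span K (Set.range G.triangularFamily) :=
    subset_span ⟨t, rfl⟩
  apply mem_lieStabilizer_span
  rintro _ ⟨⟨i, w⟩ | ⟨i, w⟩ | i, rfl⟩
  · exact hmem (.inl (i, k :: w))
  · refine span_le.2 ?_ (G.dual.lie_f_word_mem k i w)
    rintro _ (⟨i, rfl⟩ | ⟨p, rfl⟩)
    · exact neg_mem (hmem (.inr (.inr i)))
    · exact hmem (.inr (.inl p))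
  · change ⁅G.e k, G.h i⁆ ∈ _
    rw [← lie_skew, G.lie_h_e]
    exact neg_mem (smul_mem _ _ (hmem (.inl (k, []))))

theorem f_mem_lieStabilizer_triangular (k : ι) :
    G.f k ∈ lieStabilizer (span K (Set.range G.triangularFamily)) := by
  have hspan : span K (Set.range G.dual.triangularFamily)
      = span K (Set.range G.triangularFamily) := by
    have hneg : Set.range G.dual.h = -Set.range G.h := by
      ext x
      simp [dual, ChevalleyRelations.dual, neg_eq_iff_eq_neg]
    simp only [triangularFamily, Set.Sum.elim_range, span_union, hneg, span_neg]
    exact sup_left_comm ..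
  exact hspan ▸ G.dual.e_mem_lieStabilizer_triangular k

theorem span_triangularFamily : span K (Set.range G.triangularFamily) = ⊤ := by
  have hstab := G.eq_top _ G.e_mem_lieStabilizer_triangular G.f_mem_lieStabilizer_triangular
  let S : LieSubalgebra K L :=
    { span K (Set.range G.triangularFamily) with
      lie_mem' := fun {x y} _ hy => by
        have hx : x ∈ lieStabilizer (span K (Set.range G.triangularFamily)) := by
          rw [hstab]; trivial
        exact hx y hy }
  have hS : S = ⊤ := G.eq_top S (fun i => subset_span ⟨.inl (i, []), rfl⟩)
    fun i => subset_span ⟨.inr (.inl (i, [])), rfl⟩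
  exact congrArg LieSubalgebra.toSubmodule hS

end Chevalley

/-- The weight `∑ αⱼ`, summed over the letters `j` of `w`. -/
def wordWeight (w : List ι) : ι → ℤ := fun k => w.count k

theorem wordWeight_cons (j : ι) (w : List ι) :
    wordWeight (j :: w) = Pi.single j 1 + wordWeight w := by
  ext k
  by_cases h : j = k
  · subst h; simp [wordWeight, add_comm]
  · simp [wordWeight, h, Ne.symm h]

theorem wordWeight_nonneg (w : List ι) : 0 ≤ wordWeight w := fun _ => Int.natCast_nonneg _

theorem eq_replicate_of_wordWeight_eq {w : List ι} {i : ι} {n : ℕ}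
    (h : wordWeight w = n • Pi.single i 1) : w = List.replicate n i := by
  have hcount (j : ι) : w.count j = if j = i then n else 0 := by
    have := congrFun h j
    simp only [wordWeight, Pi.smul_apply, Pi.single_apply] at this
    split_ifs at this ⊢ <;> simpa using this
  rw [List.eq_replicate_iff]
  have hall : ∀ j ∈ w, j = i := fun j hj => by
    by_contra hne
    exact (List.count_pos_iff.2 hj).ne' ((hcount j).trans (if_neg hne))
  refine ⟨?_, hall⟩
  have := hcount i
  rwa [List.count_eq_length.2 fun j hj => (hall j hj).symm, if_pos rfl] at this

theorem word_mem_of_wordWeight_eq_zero (G : ChevalleyGenerators K A L) {S : Submodule K L}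
    {o : ι} (hS : ∀ i ≠ o, G.e i ∈ lieStabilizer S)
    (hmem : ∀ i ≠ o, G.e i ∈ S) {i : ι} {w : List ι} (hw : wordWeight (i :: w) o = 0) :
    G.word i w ∈ S := by
  simp only [wordWeight, Nat.cast_eq_zero, List.count_eq_zero, List.mem_cons, not_or] at hw
  obtain ⟨hi, hw⟩ := hw
  induction w with
  | nil => exact hmem i (Ne.symm hi)
  | cons k w ih =>
    rw [List.mem_cons, not_or] at hw
    exact hS k (Ne.symm hw.1) _ (ih hw.2)

variable [Fintype ι] (G : ChevalleyGenerators K A L)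

/-- The simultaneous eigenspace of the `ad (h i)` with eigenvalues `⟨α, αᵢ^∨⟩`,
where `α = ∑ cᵢ αᵢ`. -/
def weightSpace (c : ι → ℤ) : Submodule K L :=
  ⨅ i, Module.End.eigenspace (ad K L (G.h i)) ((A *ᵥ c) i : K)

variable {G} {b c d : ι → ℤ} {x y : L}

theorem mem_weightSpace_iff : x ∈ G.weightSpace c ↔ ∀ i, ⁅G.h i, x⁆ = ((A *ᵥ c) i : K) • x := by
  simp [weightSpace, mem_iInf]

theorem lie_mem_weightSpace (hx : x ∈ G.weightSpace c) (hy : y ∈ G.weightSpace d)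
    (hb : c + d = b) : ⁅x, y⁆ ∈ G.weightSpace b := by
  subst hb
  rw [mem_weightSpace_iff] at *
  intro i
  rw [leibniz_lie, hx, hy, mulVec_add]
  simp [add_smul]

variable (G)

theorem weightSpace_dual (c : ι → ℤ) : G.dual.weightSpace c = G.weightSpace (-c) := by
  ext x
  simp only [mem_weightSpace_iff, dual, ChevalleyRelations.dual, neg_lie, mulVec_neg,
    neg_eq_iff_eq_neg]
  simp

theorem e_mem_weightSpace (i : ι) : G.e i ∈ G.weightSpace (Pi.single i 1) := by
  simp [mem_weightSpace_iff, G.lie_h_e]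

theorem f_mem_weightSpace (i : ι) : G.f i ∈ G.weightSpace (-Pi.single i 1) := by
  rw [← weightSpace_dual]
  exact G.dual.e_mem_weightSpace i

theorem h_mem_weightSpace (i : ι) : G.h i ∈ G.weightSpace 0 := by
  simp [mem_weightSpace_iff, G.lie_h_h]

theorem word_mem_weightSpace (i : ι) (w : List ι) :
    G.word i w ∈ G.weightSpace (wordWeight (i :: w)) := by
  induction w with
  | nil =>
    rw [wordWeight_cons, show wordWeight ([] : List ι) = 0 from rfl, add_zero]
    exact G.e_mem_weightSpace i
  | cons j w ih =>
    refine lie_mem_weightSpace (G.e_mem_weightSpace j) ih ?_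
    simp only [wordWeight_cons, add_left_comm]

theorem iSupIndep_weightSpace [CharZero K] (hA : Function.Injective A.mulVec) :
    iSupIndep G.weightSpace := by
  have hcomm (i j : ι) : Commute (ad K L (G.h j)) (ad K L (G.h i)) := by
    refine LinearMap.ext fun x => ?_
    simpa [G.lie_h_h] using leibniz_lie (G.h j) (G.h i) x
  have hindep := Module.End.independent_iInf_maxGenEigenspace_of_forall_mapsTo
    (fun i => ad K L (G.h i))
    fun i j φ => Module.End.mapsTo_maxGenEigenspace_of_comm (hcomm i j) φ
  have hinj : Function.Injective fun (c : ι → ℤ) (i : ι) => ((A *ᵥ c) i : K) := fun c d hcd =>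
    hA (funext fun i => Int.cast_injective (congrFun hcd i))
  exact (hindep.comp hinj).mono fun c => iInf_mono fun i =>
    (Module.End.genEigenspace _ _).mono le_top

section Positive

variable [CharZero K] (hA : Function.Injective A.mulVec)

include hA

theorem weightSpace_le_span_word (hc : ∃ i, 0 < c i) :
    G.weightSpace c ≤ span K {x | ∃ i w, G.word i w = x ∧ wordWeight (i :: w) = c} := by
  intro x hx
  have hmem (t) : G.triangularFamily t ∈ G.weightSpace
      (Sum.elim (fun p : ι × List ι => wordWeight (p.1 :: p.2))
        (Sum.elim (fun p => -wordWeight (p.1 :: p.2)) 0) t) := by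
    rcases t with p | p | i
    · exact G.word_mem_weightSpace _ _
    · exact G.weightSpace_dual _ ▸ G.dual.word_mem_weightSpace _ _
    · exact G.h_mem_weightSpace i
  refine span_mono ?_ (mem_span_image_of_iSupIndep (G.iSupIndep_weightSpace hA) hmem
    (G.span_triangularFamily ▸ mem_top : x ∈ _) hx)
  obtain ⟨i, hi⟩ := hc
  rintro _ ⟨p | p | j, rfl, rfl⟩
  · exact ⟨p.1, p.2, rfl, rfl⟩
  · have := wordWeight_nonneg (p.1 :: p.2) i
    simp at hi this
    omega
  · simp at hi

theorem weightSpace_eq_bot_of_mixed_sign (hpos : ∃ i, 0 < c i) (hneg : ∃ i, c i < 0) :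
    G.weightSpace c = ⊥ := by
  rw [eq_bot_iff]
  refine (G.weightSpace_le_span_word hA hpos).trans (span_le.2 ?_)
  rintro _ ⟨i, w, rfl, rfl⟩
  obtain ⟨j, hj⟩ := hneg
  exact absurd hj (wordWeight_nonneg (i :: w) j).not_gt

theorem weightSpace_single_le (i : ι) : G.weightSpace (Pi.single i 1) ≤ span K {G.e i} := by
  refine (G.weightSpace_le_span_word hA ⟨i, by simp⟩).trans (span_le.2 ?_)
  rintro _ ⟨j, w, rfl, h⟩
  obtain ⟨rfl, rfl⟩ := List.cons.inj
    (eq_replicate_of_wordWeight_eq (n := 1) (h.trans (one_smul ℕ _).symm))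
  exact mem_span_singleton_self _

theorem weightSpace_smul_single_eq_bot (i : ι) (n : ℕ) :
    G.weightSpace ((n + 2) • Pi.single i 1) = ⊥ := by
  rw [eq_bot_iff]
  refine (G.weightSpace_le_span_word hA ⟨i, by simp; omega⟩).trans (span_le.2 ?_)
  rintro _ ⟨j, w, rfl, h⟩
  have hw := eq_replicate_of_wordWeight_eq h
  rw [List.replicate_succ, List.cons.injEq] at hw
  rw [hw.1, hw.2, word_replicate_succ_eq_zero]
  exact zero_mem _

variable {S : Submodule K L} {o : ι} (hS : ∀ i ≠ o, G.e i ∈ lieStabilizer S)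

include hS

theorem weightSpace_le_of_level_zero (hmem : ∀ i ≠ o, G.e i ∈ S) (hc : ∃ i, 0 < c i)
    (hco : c o = 0) : G.weightSpace c ≤ S := by
  refine (G.weightSpace_le_span_word hA hc).trans (span_le.2 ?_)
  rintro _ ⟨i, w, rfl, rfl⟩
  exact G.word_mem_of_wordWeight_eq_zero hS hmem hco

theorem weightSpace_le_of_level_one (hmem : G.e o ∈ S) (hco : c o = 1) : G.weightSpace c ≤ S := by
  refine (G.weightSpace_le_span_word hA ⟨o, by omega⟩).trans (span_le.2 ?_)
  rintro _ ⟨i, w, rfl, rfl⟩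
  induction w with
  | nil =>
    have : i = o := by
      by_contra hne
      simp [wordWeight, hne] at hco
    exact this ▸ hmem
  | cons k w ih =>
    rw [wordWeight_cons, wordWeight_cons, ← add_left_comm, ← wordWeight_cons] at hco
    obtain rfl | hk := eq_or_ne k o
    · have hw : wordWeight (i :: w) k = 0 := by simpa using hco
      rw [word_cons, ← lie_skew]
      exact neg_mem (word_mem_of_wordWeight_eq_zero (S := (lieStabilizer S).toSubmodule) G
        (fun i hi x hx => (lieStabilizer S).lie_mem (hS i hi) hx) hS hw _ hmem)
    · exact hS k hk _ (ih (by simpa [Ne.symm hk] using hco))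

end Positive

end ChevalleyGenerators

section Sl2

variable {R L M : Type*} [CommRing R] [LieRing L] [LieAlgebra R L] [AddCommGroup M] [Module R M]
  [LieRingModule L M] [LieModule R L M] {h e f : L}

local notation "φ" => LieModule.toEnd R L M f

theorem sl2_lie_h_pow_f (t : IsSl2Triple h e f) {μ : R} {x : M} (hx : ⁅h, x⁆ = μ • x) (n : ℕ) :
    ⁅h, (φ ^ n) x⁆ = (μ - 2 * n) • (φ ^ n) x := by
  induction n with
  | zero => simpa using hx
  | succ n ih =>
    rw [pow_succ', Module.End.mul_apply, LieModule.toEnd_apply_apply, leibniz_lie h,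
      t.lie_lie_smul_f R, neg_lie, smul_lie, ih, lie_smul, ← neg_smul, ← add_smul]
    congr 1
    push_cast
    ring

theorem sl2_lie_e_pow_succ_f (t : IsSl2Triple h e f) {μ : R} {x : M} (hx : ⁅h, x⁆ = μ • x)
    (n : ℕ) :
    ⁅e, (φ ^ (n + 1)) x⁆ = (φ ^ (n + 1)) ⁅e, x⁆ + ((n + 1) * (μ - n)) • (φ ^ n) x := by
  have hstep (y : M) (n : ℕ) : (φ ^ (n + 1)) y = ⁅f, (φ ^ n) y⁆ := by
    rw [pow_succ', Module.End.mul_apply, LieModule.toEnd_apply_apply]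
  induction n with
  | zero => simp [leibniz_lie e, t.lie_e_f, hx, add_comm]
  | succ n ih =>
    rw [hstep, leibniz_lie e, t.lie_e_f, ih, sl2_lie_h_pow_f t hx, lie_add, lie_smul, ← hstep,
      ← hstep, add_comm, add_assoc, ← add_smul]
    congr 2
    push_cast
    ring

/-- Descending induction along `x, e x, e² x, …` reduces to the primitive vector at the end of the
`e`-string. -/
theorem sl2_eq_zero_of_pow_f_eq_zero [IsDomain R] [CharZero R] [Module.IsTorsionFree R M]
    (t : IsSl2Triple h e f) {N m k : ℕ} {x : M} (hx : ⁅h, x⁆ = (k : R) • x) (hmk : m ≤ k)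
    (hf : (φ ^ m) x = 0) (he : (LieModule.toEnd R L M e ^ N) x = 0) : x = 0 := by
  induction N generalizing m k x with
  | zero => simpa using he
  | succ N ih =>
    have hex : ⁅e, x⁆ = 0 := by
      refine ih (k := k + 2) (m := m + 1) ?_ (by omega) ?_ ?_
      · rw [leibniz_lie h, t.lie_h_e_smul R, hx, lie_smul, smul_lie, ← add_smul]
        push_cast
        rw [add_comm]
      · have hrel := sl2_lie_e_pow_succ_f t hx m
        rw [pow_succ', Module.End.mul_apply, hf] at hrel
        simpa [pow_succ'] using hrel.symm
      · rwa [pow_succ, Module.End.mul_apply] at he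
    by_contra hx0
    have P : t.HasPrimitiveVectorWith x (k : R) := ⟨hx0, hx, hex⟩
    exact P.pow_toEnd_f_ne_zero_of_eq_nat rfl hmk hf

end Sl2

section Form

variable {ι : Type*} [Fintype ι] {A : Matrix ι ι ℤ}

/-- The simple reflection `sᵢ` of the Weyl group of `A`, on the root lattice. -/
def simpleReflection [DecidableEq ι] (A : Matrix ι ι ℤ) (i : ι) (c : ι → ℤ) : ι → ℤ :=
  c - (A *ᵥ c) i • Pi.single i 1

theorem mulVec_simpleReflection_apply [DecidableEq ι] {i : ι} (hi : A i i = 2) (c : ι → ℤ) :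
    (A *ᵥ simpleReflection A i c) i = -(A *ᵥ c) i := by
  simp only [simpleReflection, mulVec_sub, mulVec_smul, mulVec_single_one, Pi.sub_apply,
    Pi.smul_apply, col_apply, hi, smul_eq_mul]
  ring

theorem simpleReflection_simpleReflection [DecidableEq ι] {i : ι} (hi : A i i = 2) (c : ι → ℤ) :
    simpleReflection A i (simpleReflection A i c) = c := by
  rw [simpleReflection, mulVec_simpleReflection_apply hi, simpleReflection]
  module

variable (hA : A.IsSymm)

include hA

theorem dotProduct_mulVec_comm (c d : ι → ℤ) : c ⬝ᵥ A *ᵥ d = d ⬝ᵥ A *ᵥ c := by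
  rw [dotProduct_mulVec, ← mulVec_transpose, hA.eq, dotProduct_comm]

theorem norm_add (c d : ι → ℤ) :
    (c + d) ⬝ᵥ A *ᵥ (c + d) = c ⬝ᵥ A *ᵥ c + 2 * (c ⬝ᵥ A *ᵥ d) + d ⬝ᵥ A *ᵥ d := by
  rw [mulVec_add, add_dotProduct, dotProduct_add, dotProduct_add, dotProduct_mulVec_comm hA d c]
  ring

theorem norm_zsmul_add {δ β : ι → ℤ} (hδ : δ ⬝ᵥ A *ᵥ δ = 0) (hβ : δ ⬝ᵥ A *ᵥ β = 0) (n : ℤ) :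
    (n • δ + β) ⬝ᵥ A *ᵥ (n • δ + β) = β ⬝ᵥ A *ᵥ β := by
  rw [norm_add hA, mulVec_smul, dotProduct_smul, smul_dotProduct, smul_dotProduct, hδ, hβ]
  simp

theorem dotProduct_mulVec_single [DecidableEq ι] (c : ι → ℤ) (i : ι) :
    c ⬝ᵥ A *ᵥ Pi.single i 1 = (A *ᵥ c) i := by
  rw [dotProduct_mulVec_comm hA, single_one_dotProduct]

theorem norm_simpleReflection [DecidableEq ι] {i : ι} (hi : A i i = 2) (c : ι → ℤ) :
    simpleReflection A i c ⬝ᵥ A *ᵥ simpleReflection A i c = c ⬝ᵥ A *ᵥ c := by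
  rw [simpleReflection, sub_eq_add_neg, ← neg_smul, norm_add hA,
    dotProduct_mulVec_comm hA c (_ • _)]
  simp only [mulVec_smul, smul_dotProduct, dotProduct_smul, single_dotProduct, mulVec_single_one,
    smul_eq_mul, one_mul, col_apply, hi]
  ring

end Form

namespace ChevalleyGenerators

variable {K : Type*} [Field K] {ι : Type*} [DecidableEq ι] {A : Matrix ι ι ℤ}
  {L : Type*} [LieRing L] [LieAlgebra K L] (G : ChevalleyGenerators K A L)

theorem exists_pow_ad_e_eq_zero (i : ι) (x : L) : ∃ n, (ad K L (G.e i) ^ n) x = 0 := by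
  rw [← LieSubalgebra.mem_engel_iff, G.eq_top (LieSubalgebra.engel K (G.e i))]
  · trivial
  · intro j
    rw [LieSubalgebra.mem_engel_iff]
    obtain rfl | hij := eq_or_ne i j
    · exact ⟨1, by simp⟩
    · exact ⟨_, G.serre_e i j hij⟩
  · intro j
    rw [LieSubalgebra.mem_engel_iff]
    refine ⟨3, ?_⟩
    have heh : ⁅G.e i, G.h i⁆ = -((A i i : K) • G.e i) := by rw [← lie_skew, G.lie_h_e]
    by_cases hij : i = j
    · subst hij
      simp [pow_succ, G.lie_e_f, heh]
    · simp [pow_succ, G.lie_e_f, hij]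

variable [Fintype ι] {c : ι → ℤ}

theorem pow_ad_f_mem_weightSpace (i : ι) (k : ℕ) {x : L} (hx : x ∈ G.weightSpace c) :
    (ad K L (G.f i) ^ k) x ∈ G.weightSpace (c - (k : ℤ) • Pi.single i 1) := by
  induction k with
  | zero => simpa using hx
  | succ k ih =>
    rw [pow_succ', Module.End.mul_apply, ad_apply]
    refine lie_mem_weightSpace (G.f_mem_weightSpace i) ih ?_
    rw [Nat.cast_succ, add_smul, one_smul]
    abel

variable [CharZero K]

theorem eq_zero_of_pow_ad_f_eq_zero {i : ι} (hi : A i i = 2) {k : ℕ} (hk : (A *ᵥ c) i = k) {x : L}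
    (hx : x ∈ G.weightSpace c) (hf : (ad K L (G.f i) ^ k) x = 0) : x = 0 := by
  obtain ⟨N, hN⟩ := G.exists_pow_ad_e_eq_zero i x
  have hxk : ⁅G.h i, x⁆ = (k : K) • x := by simpa [hk] using mem_weightSpace_iff.1 hx i
  by_cases hh : G.h i = 0
  · rw [hh, zero_lie, eq_comm, smul_eq_zero, Nat.cast_eq_zero] at hxk
    obtain rfl | hx0 := hxk
    · simpa using hf
    · exact hx0
  · exact sl2_eq_zero_of_pow_f_eq_zero (G.isSl2Triple hi hh) hxk le_rfl hf hN

theorem rank_weightSpace_le_simpleReflection {i : ι} (hi : A i i = 2) (hc : 0 ≤ (A *ᵥ c) i) :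
    Module.rank K (G.weightSpace c) ≤
      Module.rank K (G.weightSpace (simpleReflection A i c)) := by
  obtain ⟨k, hk⟩ := Int.eq_ofNat_of_zero_le hc
  rw [simpleReflection, hk]
  refine LinearMap.rank_le_of_injective
    ((ad K L (G.f i) ^ k).restrict fun x hx => G.pow_ad_f_mem_weightSpace i k hx)
    ((injective_iff_map_eq_zero _).2 fun x hx => ?_)
  exact Subtype.ext (G.eq_zero_of_pow_ad_f_eq_zero hi hk x.2 (congrArg Subtype.val hx))

variable (hA : Function.Injective A.mulVec)

include hA

theorem rank_weightSpace_smul_single_le {i : ι} (hi : A i i = 2) {n : ℤ} (hn : 0 < n) :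
    Module.rank K (G.weightSpace (n • Pi.single i 1)) ≤
      if (n • Pi.single i 1) ⬝ᵥ A *ᵥ (n • Pi.single i 1) = 2 then 1 else 0 := by
  lift n to ℕ using hn.le
  obtain _ | _ | n := n
  · simp at hn
  · rw [zero_add, Nat.cast_one, one_smul, if_pos (by simp [hi])]
    exact (Submodule.rank_mono (G.weightSpace_single_le hA i)).trans
      ((rank_span_le _).trans (by simp))
  · rw [natCast_zsmul, G.weightSpace_smul_single_eq_bot hA, rank_bot]
    exact zero_le

variable (hsymm : A.IsSymm) (hdiag : ∀ i, A i i = 2)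

include hsymm hdiag

/-- A positive vector of positive norm has a simple reflection which lowers its height; reflecting
repeatedly ends in a multiple of a simple root or in a vector of mixed sign. -/
theorem rank_weightSpace_le_of_pos (hpos : ∃ i, 0 < c i) (hc : 0 < c ⬝ᵥ A *ᵥ c) :
    Module.rank K (G.weightSpace c) ≤ if c ⬝ᵥ A *ᵥ c = 2 then 1 else 0 := by
  induction hn : (∑ i, c i).toNat using Nat.strong_induction_on generalizing c with
  | _ n ih =>
  by_cases hneg : ∃ i, c i < 0
  · rw [G.weightSpace_eq_bot_of_mixed_sign hA hpos hneg, rank_bot]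
    exact zero_le
  push Not at hneg
  obtain ⟨i, -, hi⟩ := Finset.exists_lt_of_sum_lt (s := Finset.univ) (f := 0)
    (g := fun i => c i * (A *ᵥ c) i) (by simpa [dotProduct] using hc)
  have hAci : 0 < (A *ᵥ c) i := (pos_iff_pos_of_mul_pos hi).1 ((hneg i).lt_of_ne fun h0 => by
    simp [← h0] at hi)
  by_cases hpos' : ∃ j, 0 < simpleReflection A i c j
  · rw [← norm_simpleReflection hsymm (hdiag i) c]
    refine (G.rank_weightSpace_le_simpleReflection (hdiag i) hAci.le).trans
      (ih _ ?_ hpos' (by rwa [norm_simpleReflection hsymm (hdiag i)]) rfl)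
    have hsum : 0 < ∑ j, c j := Fintype.sum_pos (lt_of_le_of_ne hneg (by rintro rfl; simp at hpos))
    simp only [simpleReflection, Pi.sub_apply, Pi.smul_apply, Finset.sum_sub_distrib, smul_eq_mul,
      ← Finset.mul_sum, Finset.sum_pi_single', Finset.mem_univ, if_true, mul_one]
    omega
  · push Not at hpos'
    have hsingle : c = c i • Pi.single i 1 := by
      ext j
      obtain rfl | hj := eq_or_ne j i
      · simp
      · have := hpos' j
        simp only [simpleReflection, Pi.sub_apply, Pi.smul_apply, Pi.single_eq_of_ne hj, smul_zero,
          sub_zero] at this ⊢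
        exact this.antisymm (hneg j)
    rw [hsingle]
    exact G.rank_weightSpace_smul_single_le hA (hdiag i) (pos_of_mul_pos_left hi hAci.le)

theorem rank_weightSpace_le (hc : 0 < c ⬝ᵥ A *ᵥ c) :
    Module.rank K (G.weightSpace c) ≤ if c ⬝ᵥ A *ᵥ c = 2 then 1 else 0 := by
  by_cases hpos : ∃ i, 0 < c i
  · exact G.rank_weightSpace_le_of_pos hA hsymm hdiag hpos hc
  · push Not at hpos
    have hnorm : (-c) ⬝ᵥ A *ᵥ (-c) = c ⬝ᵥ A *ᵥ c := by simp [mulVec_neg]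
    obtain ⟨i, hi⟩ : ∃ i, c i ≠ 0 := by
      by_contra! h0
      rw [funext h0] at hc
      simp at hc
    have := G.dual.rank_weightSpace_le_of_pos (c := -c) hA hsymm hdiag
      ⟨i, by simpa using (hpos i).lt_of_ne hi⟩ (hnorm ▸ hc)
    rwa [weightSpace_dual, neg_neg, hnorm] at this

theorem rank_weightSpace_le_one (hc : c ⬝ᵥ A *ᵥ c = 2) : Module.rank K (G.weightSpace c) ≤ 1 :=
  (G.rank_weightSpace_le hA hsymm hdiag (hc ▸ two_pos)).trans_eq (if_pos hc)

theorem weightSpace_eq_bot_of_two_lt (hc : 2 < c ⬝ᵥ A *ᵥ c) : G.weightSpace c = ⊥ := by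
  have := G.rank_weightSpace_le hA hsymm hdiag (two_pos.trans hc)
  rwa [if_neg hc.ne', nonpos_iff_eq_zero, Submodule.rank_eq_zero] at this

theorem lie_eq_zero_of_two_lt {d : ι → ℤ} {x y : L} (hx : x ∈ G.weightSpace c)
    (hy : y ∈ G.weightSpace d) (h : 2 < c ⬝ᵥ A *ᵥ c + 2 * (c ⬝ᵥ A *ᵥ d) + d ⬝ᵥ A *ᵥ d) :
    ⁅x, y⁆ = 0 := by
  rw [← norm_add hsymm] at h
  rw [← mem_bot K, ← G.weightSpace_eq_bot_of_two_lt hA hsymm hdiag h]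
  exact lie_mem_weightSpace hx hy rfl

end ChevalleyGenerators

/-! ### Root pairs -/

section Reflection

variable {ι : Type*} [Fintype ι] [DecidableEq ι] {A : Matrix ι ι ℤ} {s : Set ι} {b c : ι → ℤ}

/-- Reflection in a simple root indexed by `s` which changes the vector by at most that simple
root. -/
def ReflectionStep (A : Matrix ι ι ℤ) (s : Set ι) (b c : ι → ℤ) : Prop :=
  ∃ i ∈ s, ((A *ᵥ b) i).natAbs ≤ 1 ∧ simpleReflection A i b = c

theorem reflTransGen_foldl_simpleReflection {w : List ι} (hs : ∀ i ∈ w, i ∈ s)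
    (hw : ∀ k (hk : k < w.length),
      ((A *ᵥ (w.take k).foldl (fun c i => simpleReflection A i c) b) w[k]).natAbs ≤ 1) :
    Relation.ReflTransGen (ReflectionStep A s) b
      (w.foldl (fun c i => simpleReflection A i c) b) := by
  induction w generalizing b with
  | nil => exact .refl
  | cons i w ih =>
    exact .head ⟨i, hs i (by simp), hw 0 (by simp), rfl⟩ <|
      ih (fun j hj => hs j (List.mem_cons_of_mem i hj)) fun k hk => hw (k + 1) (by simpa using hk)

theorem norm_eq_of_reflTransGen (hsymm : A.IsSymm) (hdiag : ∀ i, A i i = 2)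
    (h : Relation.ReflTransGen (ReflectionStep A s) b c) : c ⬝ᵥ A *ᵥ c = b ⬝ᵥ A *ᵥ b := by
  induction h with
  | refl => rfl
  | tail _ hstep ih =>
    obtain ⟨i, -, -, rfl⟩ := hstep
    rw [norm_simpleReflection hsymm (hdiag i), ih]

end Reflection

namespace ChevalleyGenerators

variable {K : Type*} [Field K] {ι : Type*} [DecidableEq ι] [Fintype ι] {A : Matrix ι ι ℤ}
  {L : Type*} [LieRing L] [LieAlgebra K L] (G : ChevalleyGenerators K A L) {b d : ι → ℤ}

/-- The element of the Cartan subalgebra dual to a lattice vector `b` under the invariant form. -/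
def coroot (b : ι → ℤ) : L := ∑ i, (b i : K) • G.h i

theorem coroot_lie {x : L} (hx : x ∈ G.weightSpace d) :
    ⁅G.coroot b, x⁆ = ((b ⬝ᵥ A *ᵥ d : ℤ) : K) • x := by
  simp only [coroot, sum_lie, smul_lie, mem_weightSpace_iff.1 hx, smul_smul, ← Finset.sum_smul,
    dotProduct, Int.cast_sum, Int.cast_mul]

theorem coroot_add (b d : ι → ℤ) : G.coroot (b + d) = G.coroot b + G.coroot d := by
  simp [coroot, add_smul, Finset.sum_add_distrib]

theorem coroot_neg (b : ι → ℤ) : G.coroot (-b) = -G.coroot b := by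
  simp [coroot]

theorem coroot_single (i : ι) : G.coroot (Pi.single i 1) = G.h i := by
  simp [coroot, Pi.single_apply]

/-- There are root vectors of weights `b` and `-b` whose bracket is the coroot of `b`. -/
def HasRootPair (b : ι → ℤ) : Prop :=
  ∃ e ∈ G.weightSpace b, ∃ f ∈ G.weightSpace (-b), ⁅e, f⁆ = G.coroot b

theorem hasRootPair_single (i : ι) : G.HasRootPair (Pi.single i 1) :=
  ⟨G.e i, G.e_mem_weightSpace i, G.f i, G.f_mem_weightSpace i, by
    simp [G.lie_e_f, G.coroot_single]⟩

variable {G}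

theorem HasRootPair.neg (hb : G.HasRootPair b) : G.HasRootPair (-b) := by
  obtain ⟨e, he, f, hf, hef⟩ := hb
  exact ⟨f, hf, e, by rwa [neg_neg], by rw [← lie_skew, hef, coroot_neg]⟩

variable [CharZero K] (hA : Function.Injective A.mulVec) (hsymm : A.IsSymm)
  (hdiag : ∀ i, A i i = 2)

include hA hsymm hdiag

theorem HasRootPair.add (hb : G.HasRootPair b) (hd : G.HasRootPair d) (hb2 : b ⬝ᵥ A *ᵥ b = 2)
    (hd2 : d ⬝ᵥ A *ᵥ d = 2) (hbd : b ⬝ᵥ A *ᵥ d = -1) : G.HasRootPair (b + d) := by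
  obtain ⟨e, he, f, hf, hef⟩ := hb
  obtain ⟨e', he', f', hf', hef'⟩ := hd
  have hdb : d ⬝ᵥ A *ᵥ b = -1 := by rw [dotProduct_mulVec_comm hsymm, hbd]
  have hef'0 : ⁅e, f'⁆ = 0 := G.lie_eq_zero_of_two_lt hA hsymm hdiag he hf' <| by
    simp [mulVec_neg, hb2, hd2, hbd]
  have he'f0 : ⁅e', f⁆ = 0 := G.lie_eq_zero_of_two_lt hA hsymm hdiag he' hf <| by
    simp [mulVec_neg, hb2, hd2, hdb]
  have hf_cancel : ⁅⁅e', e⁆, f⁆ = e' := by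
    rw [lie_lie, hef, he'f0, lie_zero, sub_zero, ← lie_skew, coroot_lie G he', hbd]
    simp
  have hf'_cancel : ⁅⁅e', e⁆, f'⁆ = -e := by
    rw [lie_lie, hef', hef'0, lie_zero, zero_sub, ← lie_skew, coroot_lie G he, hdb]
    simp
  refine ⟨⁅e', e⁆, lie_mem_weightSpace he' he (add_comm _ _), ⁅f, f'⁆,
    lie_mem_weightSpace hf hf' (neg_add _ _).symm, ?_⟩
  rw [leibniz_lie, hf_cancel, hf'_cancel, hef', lie_neg, lie_skew, hef, coroot_add, add_comm]

theorem HasRootPair.reflect (hb : G.HasRootPair b) (hb2 : b ⬝ᵥ A *ᵥ b = 2) {i : ι}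
    (hi : ((A *ᵥ b) i).natAbs ≤ 1) : G.HasRootPair (simpleReflection A i b) := by
  have hi2 : (Pi.single i 1 : ι → ℤ) ⬝ᵥ A *ᵥ Pi.single i 1 = 2 := by simp [hdiag]
  have hbi : b ⬝ᵥ A *ᵥ Pi.single i 1 = (A *ᵥ b) i := by
    rw [dotProduct_mulVec_comm hsymm, single_one_dotProduct]
  rw [simpleReflection]
  obtain h | h | h : (A *ᵥ b) i = -1 ∨ (A *ᵥ b) i = 0 ∨ (A *ᵥ b) i = 1 := by omega
  · simpa [h] using hb.add hA hsymm hdiag (G.hasRootPair_single i) hb2 hi2 (hbi.trans h)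
  · simpa [h] using hb
  · have := hb.add hA hsymm hdiag (G.hasRootPair_single i).neg hb2 (by simpa [mulVec_neg] using hi2)
      (by rw [mulVec_neg, dotProduct_neg, hbi, h])
    simpa [h, sub_eq_add_neg] using this

theorem HasRootPair.of_reflTransGen {s : Set ι} (hb : G.HasRootPair b) (hb2 : b ⬝ᵥ A *ᵥ b = 2)
    (h : Relation.ReflTransGen (ReflectionStep A s) b d) : G.HasRootPair d := by
  induction h with
  | refl => exact hb
  | tail h hstep ih =>
    obtain ⟨i, -, hi, rfl⟩ := hstep
    exact ih.reflect hA hsymm hdiag ((norm_eq_of_reflTransGen hsymm hdiag h).trans hb2) hi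

theorem weightSpace_add_single_le {T : LieSubalgebra K L} {i : ι} (he : G.e i ∈ T)
    (hb2 : b ⬝ᵥ A *ᵥ b = 2) (hi : (A *ᵥ b) i = -1)
    (hb : G.weightSpace b ≤ T.toSubmodule) :
    G.weightSpace (b + Pi.single i 1) ≤ T.toSubmodule := fun z hz => by
  have hez : ⁅G.e i, z⁆ = 0 :=
    G.lie_eq_zero_of_two_lt hA hsymm hdiag (G.e_mem_weightSpace i) hz <| by
      rw [norm_add hsymm, hb2, dotProduct_mulVec_single hsymm b, hi]
      simp [mulVec_add, hdiag, hi]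
  have hfz : ⁅G.f i, z⁆ ∈ T :=
    hb (lie_mem_weightSpace (G.f_mem_weightSpace i) hz (neg_add_cancel_comm_assoc _ _))
  have hz_eq : ⁅G.e i, ⁅G.f i, z⁆⁆ = z := by
    rw [leibniz_lie, hez, lie_zero, add_zero, G.lie_e_f, if_pos rfl, mem_weightSpace_iff.1 hz,
      mulVec_add, Pi.add_apply, mulVec_single_one, col_apply, hdiag, hi]
    simp
  exact hz_eq ▸ T.lie_mem he hfz

theorem weightSpace_simpleReflection_le {T : LieSubalgebra K L} {i : ι} (he : G.e i ∈ T)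
    (hf : G.f i ∈ T) (hb2 : b ⬝ᵥ A *ᵥ b = 2) (hi : ((A *ᵥ b) i).natAbs ≤ 1)
    (hb : G.weightSpace b ≤ T.toSubmodule) :
    G.weightSpace (simpleReflection A i b) ≤ T.toSubmodule := by
  rw [simpleReflection]
  obtain h | h | h : (A *ᵥ b) i = -1 ∨ (A *ᵥ b) i = 0 ∨ (A *ᵥ b) i = 1 := by omega
  · simpa [h] using weightSpace_add_single_le hA hsymm hdiag he hb2 h hb
  · simpa [h] using hb
  · have := weightSpace_add_single_le (G := G.dual) (b := -b) hA hsymm hdiag hf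
      (by simpa [mulVec_neg] using hb2) (by rw [mulVec_neg, Pi.neg_apply, h])
      (by rwa [weightSpace_dual, neg_neg])
    rw [weightSpace_dual, neg_add, neg_neg, ← sub_eq_add_neg] at this
    rwa [h, one_smul]

theorem weightSpace_le_of_reflTransGen {s : Set ι} {T : LieSubalgebra K L}
    (he : ∀ i ∈ s, G.e i ∈ T) (hf : ∀ i ∈ s, G.f i ∈ T) (hb2 : b ⬝ᵥ A *ᵥ b = 2)
    (h : Relation.ReflTransGen (ReflectionStep A s) b d)
    (hd : G.weightSpace d ≤ T.toSubmodule) : G.weightSpace b ≤ T.toSubmodule := by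
  induction h with
  | refl => exact hd
  | @tail c _ h hstep ih =>
    obtain ⟨i, his, hi, rfl⟩ := hstep
    have hc2 := (norm_eq_of_reflTransGen hsymm hdiag h).trans hb2
    refine ih ?_
    have := weightSpace_simpleReflection_le hA hsymm hdiag (he i his) (hf i his)
      ((norm_simpleReflection hsymm (hdiag i) c).trans hc2)
      (by rwa [mulVec_simpleReflection_apply (hdiag i), Int.natAbs_neg]) hd
    rwa [simpleReflection_simpleReflection (hdiag i)] at this

end ChevalleyGenerators

/-! ### The loop realisation of affine `sl₂` -/

theorem exists_int_orbit {R M : Type*} [Semiring R] [AddCommMonoid M] [Module R M]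
    {S T : Module.End R M} (hST : Commute S T) {x : M} (hx : S (T x) = x) :
    ∃ X : ℤ → M, X 0 = x ∧ (∀ n, S (X n) = X (n + 1)) ∧ ∀ n, T (X n) = X (n - 1) := by
  let W : Submodule R M := LinearMap.eqLocus (S * T) 1
  have hSW : ∀ y ∈ W, S y ∈ W := fun y hy => by
    have := congrArg S hy
    rwa [← Module.End.mul_apply, ((Commute.refl S).mul_right hST).eq] at this
  have hTW : ∀ y ∈ W, T y ∈ W := fun y hy => by
    have := congrArg T hy
    rwa [← Module.End.mul_apply, ← (hST.mul_left (Commute.refl T)).eq] at this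
  let u : (Module.End R W)ˣ :=
    { val := S.restrict hSW
      inv := T.restrict hTW
      val_inv := LinearMap.ext fun y => Subtype.ext y.2
      inv_val := LinearMap.ext fun y => Subtype.ext <| by
        have := y.2
        rwa [LinearMap.mem_eqLocus, hST.eq] at this }
  have hxW : x ∈ W := hx
  let X (n : ℤ) : W := (u ^ n).val ⟨x, hxW⟩
  have hX (a n : ℤ) : X (a + n) = (u ^ a).val (X n) := by
    simp only [X, _root_.zpow_add, Units.val_mul, Module.End.mul_apply]
  refine ⟨fun n => X n, rfl, fun n => ?_, fun n => ?_⟩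
  · simp only [add_comm n, hX, _root_.zpow_one]
    rfl
  · simp only [sub_eq_neg_add, hX, _root_.zpow_neg_one]
    rfl

/-- Elements of a Lie algebra satisfying the relations of an affine `sl₂` with loop variable `t`
and central element `c`: `x n`, `y n`, `h n` are the standard basis vectors times `t ^ n`. -/
structure AffineSl2 (K : Type*) {L : Type*} [CommRing K] [LieRing L] [LieAlgebra K L] (c : L) where
  x : ℤ → L
  y : ℤ → L
  h : ℤ → L
  lie_x_y (a b : ℤ) : ⁅x a, y b⁆ = h (a + b) + if a + b = 0 then (a : K) • c else 0
  lie_h_x (a b : ℤ) : ⁅h a, x b⁆ = (2 : K) • x (a + b)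
  lie_h_y (a b : ℤ) : ⁅h a, y b⁆ = -(2 : K) • y (a + b)

/-- The image of an affine `sl₂` under a homomorphism of Lie algebras. -/
def AffineSl2.map {K L L' : Type*} [CommRing K] [LieRing L] [LieAlgebra K L] [LieRing L']
    [LieAlgebra K L'] {c : L} {c' : L'} (R : AffineSl2 K c) (φ : L →ₗ⁅K⁆ L') (hc : φ c = c') :
    AffineSl2 K c' where
  x n := φ (R.x n)
  y n := φ (R.y n)
  h n := φ (R.h n)
  lie_x_y a b := by rw [← LieHom.map_lie, R.lie_x_y, map_add, apply_ite φ, map_smul, hc, map_zero]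
  lie_h_x a b := by rw [← LieHom.map_lie, R.lie_h_x, map_smul]
  lie_h_y a b := by rw [← LieHom.map_lie, R.lie_h_y, map_smul]

/-- Elements of a Lie algebra satisfying the relations of `h`, `e`, `f`, `e t⁻¹` (called `eInv`) and
`f t` (called `fOne`) in an affine `sl₂` with loop variable `t` and central element `c`. -/
structure AffineSl2Seed (K L : Type*) [CommRing K] [LieRing L] [LieAlgebra K L] where
  c : L
  h : L
  e : L
  f : L
  eInv : L
  fOne : L
  c_lie (z : L) : ⁅c, z⁆ = 0
  lie_e_f : ⁅e, f⁆ = h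
  lie_eInv_fOne : ⁅eInv, fOne⁆ = h - c
  lie_h_e : ⁅h, e⁆ = (2 : K) • e
  lie_h_eInv : ⁅h, eInv⁆ = (2 : K) • eInv
  lie_h_f : ⁅h, f⁆ = -(2 : K) • f
  lie_h_fOne : ⁅h, fOne⁆ = -(2 : K) • fOne
  lie_eInv_e : ⁅eInv, e⁆ = 0
  lie_f_fOne : ⁅f, fOne⁆ = 0

namespace AffineSl2Seed

section CommRing

variable {K L : Type*} [CommRing K] [LieRing L] [LieAlgebra K L] (R : AffineSl2Seed K L)

/-- The image of a seed under the involution `e t ^ n ↔ f t ^ (-n)`. -/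
def flip : AffineSl2Seed K L where
  c := -R.c
  h := -R.h
  e := R.f
  f := R.e
  eInv := R.fOne
  fOne := R.eInv
  c_lie z := by rw [neg_lie, R.c_lie, neg_zero]
  lie_e_f := by rw [← lie_skew, R.lie_e_f]
  lie_eInv_fOne := by rw [← lie_skew, R.lie_eInv_fOne]; abel
  lie_h_e := by rw [neg_lie, R.lie_h_f, neg_smul, neg_neg]
  lie_h_eInv := by rw [neg_lie, R.lie_h_fOne, neg_smul, neg_neg]
  lie_h_f := by rw [neg_lie, R.lie_h_e, neg_smul]
  lie_h_fOne := by rw [neg_lie, R.lie_h_eInv, neg_smul]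
  lie_eInv_e := by rw [← lie_skew, R.lie_f_fOne, neg_zero]
  lie_f_fOne := by rw [← lie_skew, R.lie_eInv_e, neg_zero]

theorem flip_flip : R.flip.flip = R := by
  cases R
  simp [flip]

/-- The element `h t`. For the flipped seed it is `-h t⁻¹`. -/
def hOne : L := ⁅R.e, R.fOne⁆

theorem lie_c (z : L) : ⁅z, R.c⁆ = 0 := by rw [← lie_skew, R.c_lie, neg_zero]

theorem hOne_lie_f : ⁅R.hOne, R.f⁆ = -(2 : K) • R.fOne := by
  rw [hOne, lie_lie, R.lie_e_f, ← lie_skew R.fOne R.f, R.lie_f_fOne, neg_zero, lie_zero, zero_sub,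
    lie_skew, R.lie_h_fOne]

theorem hOne_lie_eInv : ⁅R.hOne, R.eInv⁆ = (2 : K) • R.e := by
  rw [hOne, lie_lie, ← lie_skew R.fOne, ← lie_skew R.e R.eInv, R.lie_eInv_e, R.lie_eInv_fOne,
    neg_zero, lie_zero, sub_zero, lie_neg, lie_skew, sub_lie, R.lie_h_e, R.c_lie, sub_zero]

theorem hOne_lie_flip_hOne : ⁅R.hOne, R.flip.hOne⁆ = -(2 : K) • R.c := by
  have : R.flip.hOne = ⁅R.f, R.eInv⁆ := rfl
  rw [this, leibniz_lie, R.hOne_lie_eInv, R.hOne_lie_f, smul_lie, lie_smul, ← lie_skew R.fOne,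
    ← lie_skew R.f R.e, R.lie_e_f, R.lie_eInv_fOne]
  module

theorem h_lie_hOne : ⁅R.h, R.hOne⁆ = 0 := by
  rw [hOne, leibniz_lie, R.lie_h_e, R.lie_h_fOne, smul_lie, lie_smul]
  module

theorem hOne_lie_h : ⁅R.hOne, R.h⁆ = 0 := by rw [← lie_skew, R.h_lie_hOne, neg_zero]

theorem hOne_lie_h_add_smul_c (k : K) : ⁅R.hOne, R.h + k • R.c⁆ = 0 := by
  rw [lie_add, lie_smul, R.lie_c, R.hOne_lie_h, smul_zero, add_zero]

theorem h_lie_flip_hOne : ⁅R.h, R.flip.hOne⁆ = 0 := by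
  have := R.flip.h_lie_hOne
  rwa [show R.flip.h = -R.h from rfl, neg_lie, neg_eq_zero] at this

theorem commute_ad_hOne : Commute (ad K L R.hOne) (ad K L R.flip.hOne) := by
  refine LinearMap.ext fun z => ?_
  simp only [Module.End.mul_apply, ad_apply]
  rw [leibniz_lie, hOne_lie_flip_hOne, smul_lie, R.c_lie, smul_zero, zero_add]

end CommRing

variable {K L : Type*} [Field K] [CharZero K] [LieRing L] [LieAlgebra K L] (R : AffineSl2Seed K L)

theorem exists_x : ∃ x : ℤ → L, x 0 = R.e ∧ (∀ n, ⁅R.hOne, x n⁆ = (2 : K) • x (n + 1)) ∧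
    ∀ n, ⁅R.flip.hOne, x n⁆ = -(2 : K) • x (n - 1) := by
  have hcomm : Commute ((2⁻¹ : K) • ad K L R.hOne) (-(2⁻¹ : K) • ad K L R.flip.hOne) :=
    (R.commute_ad_hOne.smul_right _).smul_left _
  obtain ⟨x, hx0, hx1, hx2⟩ := exists_int_orbit hcomm (x := R.e) <| by
    have : ⁅R.flip.hOne, R.e⁆ = -(2 : K) • R.eInv := R.flip.hOne_lie_f
    simp [this, R.hOne_lie_eInv]
  refine ⟨x, hx0, fun n => ?_, fun n => ?_⟩
  · simp [← hx1]
  · simp [← hx2]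

/-- The element `e t ^ n`. -/
noncomputable def x (n : ℤ) : L := R.exists_x.choose n

/-- The element `f t ^ n`. -/
noncomputable def y (n : ℤ) : L := R.flip.x (-n)

theorem x_zero : R.x 0 = R.e := R.exists_x.choose_spec.1

theorem y_zero : R.y 0 = R.f := R.flip.x_zero

theorem hOne_lie_x (n : ℤ) : ⁅R.hOne, R.x n⁆ = (2 : K) • R.x (n + 1) :=
  R.exists_x.choose_spec.2.1 n

theorem flip_hOne_lie_x (n : ℤ) : ⁅R.flip.hOne, R.x n⁆ = -(2 : K) • R.x (n - 1) :=
  R.exists_x.choose_spec.2.2 n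

theorem flip_y (n : ℤ) : R.flip.y n = R.x (-n) := by rw [y, flip_flip]

theorem hOne_lie_y (n : ℤ) : ⁅R.hOne, R.y n⁆ = -(2 : K) • R.y (n + 1) := by
  have := R.flip.flip_hOne_lie_x (-n)
  rwa [flip_flip, ← neg_add'] at this

theorem flip_hOne_lie_y (n : ℤ) : ⁅R.flip.hOne, R.y n⁆ = (2 : K) • R.y (n - 1) := by
  rw [y, hOne_lie_x, y, neg_sub, sub_eq_neg_add, add_comm]

theorem y_one : R.y 1 = R.fOne := by
  have := R.hOne_lie_y 0
  rw [y_zero, hOne_lie_f] at this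
  exact (smul_right_injective L (neg_ne_zero.2 (two_ne_zero' K)) this).symm

theorem h_lie_x (n : ℤ) : ⁅R.h, R.x n⁆ = (2 : K) • R.x n := by
  induction n using Int.induction_on with
  | zero => rw [x_zero, R.lie_h_e]
  | succ n ih =>
    refine smul_right_injective L (two_ne_zero' K) ?_
    simp only
    rw [← lie_smul, ← hOne_lie_x, leibniz_lie, R.h_lie_hOne, ih, lie_smul, zero_lie, zero_add,
      hOne_lie_x]
  | pred n ih =>
    refine smul_right_injective L (neg_ne_zero.2 (two_ne_zero' K)) ?_
    simp only
    rw [← lie_smul, ← flip_hOne_lie_x, leibniz_lie, R.h_lie_flip_hOne, ih, lie_smul, zero_lie,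
      zero_add, flip_hOne_lie_x, smul_comm]

theorem hOne_lie_lie_x_y (a b : ℤ) :
    ⁅R.hOne, ⁅R.x a, R.y b⁆⁆ = (2 : K) • (⁅R.x (a + 1), R.y b⁆ - ⁅R.x a, R.y (b + 1)⁆) := by
  rw [leibniz_lie, hOne_lie_x, hOne_lie_y, smul_lie, lie_smul]
  module

theorem flip_hOne_lie_lie_x_y (a b : ℤ) :
    ⁅R.flip.hOne, ⁅R.x a, R.y b⁆⁆ = (2 : K) • (⁅R.x a, R.y (b - 1)⁆ - ⁅R.x (a - 1), R.y b⁆) := by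
  rw [leibniz_lie, flip_hOne_lie_x, flip_hOne_lie_y, smul_lie, lie_smul]
  module

theorem lie_x_succ_y_of_lie_hOne_eq_zero {a b : ℤ} (hab : ⁅R.hOne, ⁅R.x a, R.y b⁆⁆ = 0) :
    ⁅R.x (a + 1), R.y b⁆ = ⁅R.x a, R.y (b + 1)⁆ := by
  rw [hOne_lie_lie_x_y] at hab
  exact sub_eq_zero.1 ((smul_eq_zero.1 hab).resolve_left two_ne_zero)

theorem lie_x_y_neg_and_lie_x_succ_y_neg (a : ℤ) :
    ⁅R.x a, R.y (-a)⁆ = R.h + (a : K) • R.c ∧ ⁅R.x (a + 1), R.y (-a)⁆ = R.hOne := by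
  have hshift {a : ℤ} (h : ⁅R.x a, R.y (-a)⁆ = R.h + (a : K) • R.c) :
      ⁅R.x (a + 1), R.y (-a)⁆ = ⁅R.x a, R.y (-a + 1)⁆ :=
    R.lie_x_succ_y_of_lie_hOne_eq_zero (by rw [h, hOne_lie_h_add_smul_c])
  have hlower {a : ℤ} (h : ⁅R.x (a + 1), R.y (-a)⁆ = R.hOne) :
      ⁅R.x (a + 1), R.y (-(a + 1))⁆ = ⁅R.x a, R.y (-a)⁆ + R.c := by
    have := R.flip_hOne_lie_lie_x_y (a + 1) (-a)
    rw [h, ← lie_skew, hOne_lie_flip_hOne, neg_smul, neg_neg, add_sub_cancel_right,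
      ← neg_add'] at this
    rw [smul_right_injective L (two_ne_zero' K) this, add_sub_cancel]
  induction a using Int.induction_on with
  | zero =>
    have h0 : ⁅R.x 0, R.y (-0)⁆ = R.h + ((0 : ℤ) : K) • R.c := by
      simp [x_zero, y_zero, R.lie_e_f]
    exact ⟨h0, by rw [hshift h0, neg_zero, zero_add, x_zero, y_one, hOne]⟩
  | succ n ih =>
    have h1 : ⁅R.x (n + 1), R.y (-(n + 1))⁆ = R.h + ((n + 1 : ℤ) : K) • R.c := by
      rw [hlower ih.2, ih.1]
      push_cast
      module
    exact ⟨h1, by rw [hshift h1, neg_add, neg_add_cancel_right, ih.2]⟩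
  | pred n ih =>
    have h1 : ⁅R.x (-n - 1 + 1), R.y (-(-n - 1))⁆ = R.hOne := by
      rw [sub_add_cancel, neg_sub, sub_neg_eq_add, add_comm 1, ← ih.2, hshift ih.1, neg_neg]
    refine ⟨?_, h1⟩
    have h2 := hlower h1
    rw [sub_add_cancel, ih.1] at h2
    rw [← sub_eq_iff_eq_add.2 h2]
    push_cast
    module

theorem lie_x_y_neg (a : ℤ) : ⁅R.x a, R.y (-a)⁆ = R.h + (a : K) • R.c :=
  (R.lie_x_y_neg_and_lie_x_succ_y_neg a).1

theorem lie_x_succ_y_neg (a : ℤ) : ⁅R.x (a + 1), R.y (-a)⁆ = R.hOne :=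
  (R.lie_x_y_neg_and_lie_x_succ_y_neg a).2

theorem lie_lie_x_y_neg_x (a n : ℤ) : ⁅⁅R.x a, R.y (-a)⁆, R.x n⁆ = (2 : K) • R.x n := by
  rw [lie_x_y_neg, add_lie, smul_lie, R.c_lie, smul_zero, add_zero, h_lie_x]

section Commuting

variable {R}

theorem lie_lie_x_y_x_swap (hxx : ∀ a b, ⁅R.x a, R.x b⁆ = 0) (a b n : ℤ) :
    ⁅⁅R.x a, R.y b⁆, R.x n⁆ = ⁅⁅R.x n, R.y b⁆, R.x a⁆ := by
  rw [lie_lie, hxx, lie_zero, sub_zero, ← lie_skew (R.y b), lie_neg, lie_skew]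

theorem lie_lie_x_y_x_of_periodic (hxx : ∀ a b, ⁅R.x a, R.x b⁆ = 0) {N : ℤ}
    (hN : ∀ n, Function.Periodic (fun a => ⁅⁅R.x a, R.y (N - a)⁆, R.x n⁆) 1) (a n : ℤ) :
    ⁅⁅R.x a, R.y (N - a)⁆, R.x n⁆ = (2 : K) • R.x (n + N) := by
  have hconst (a b : ℤ) : ⁅⁅R.x a, R.y (N - a)⁆, R.x n⁆ = ⁅⁅R.x b, R.y (N - b)⁆, R.x n⁆ := by
    simpa using ((hN n).int_mul_eq a).trans ((hN n).int_mul_eq b).symm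
  rw [hconst a (n + N), lie_lie_x_y_x_swap hxx, sub_add_cancel_right, lie_lie_x_y_neg_x]

theorem lie_lie_x_y_x (hxx : ∀ a b, ⁅R.x a, R.x b⁆ = 0) (N : ℤ) :
    ∀ a n, ⁅⁅R.x a, R.y (N - a)⁆, R.x n⁆ = (2 : K) • R.x (n + N) := by
  induction N using Int.induction_on with
  | zero =>
    intro a n
    rw [zero_sub, lie_lie_x_y_neg_x, add_zero]
  | succ N ih =>
    refine lie_lie_x_y_x_of_periodic hxx fun n a => ?_
    have h := leibniz_lie R.hOne ⁅R.x a, R.y (N - a)⁆ (R.x n)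
    rw [ih, lie_smul, hOne_lie_x, hOne_lie_lie_x_y, hOne_lie_x, lie_smul, ih, smul_lie, sub_lie,
      add_right_comm, right_eq_add] at h
    have h := sub_eq_zero.1 ((smul_eq_zero.1 h).resolve_left two_ne_zero)
    simp only
    rw [show (N : ℤ) + 1 - (a + 1) = N - a by ring, h, sub_add_eq_add_sub]
  | pred N ih =>
    refine lie_lie_x_y_x_of_periodic hxx fun n a => ?_
    have h := leibniz_lie R.flip.hOne ⁅R.x (a + 1), R.y (-N - (a + 1))⁆ (R.x n)
    rw [ih, lie_smul, flip_hOne_lie_x, flip_hOne_lie_lie_x_y, flip_hOne_lie_x, lie_smul, ih,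
      smul_lie, sub_lie, sub_add_eq_add_sub, smul_comm (2 : K) (-(2 : K)), right_eq_add,
      add_sub_cancel_right] at h
    have h := sub_eq_zero.1 ((smul_eq_zero.1 h).resolve_left two_ne_zero)
    simp only
    rw [show -(N : ℤ) - 1 - (a + 1) = -N - (a + 1) - 1 by ring, h,
      show -(N : ℤ) - 1 - a = -N - (a + 1) by ring]

theorem lie_lie_x_y_y (hyy : ∀ a b, ⁅R.y a, R.y b⁆ = 0) (N a n : ℤ) :
    ⁅⁅R.x a, R.y (N - a)⁆, R.y n⁆ = -(2 : K) • R.y (n + N) := by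
  have h := lie_lie_x_y_x (R := R.flip) (fun a b => by simpa [y] using hyy (-a) (-b)) (-N) (a - N)
    (-n)
  rw [flip_y, show -(-N - (a - N)) = a by ring, show a - N = -(N - a) by ring,
    show -n + -N = -(n + N) by ring] at h
  rw [← lie_skew (R.x a), neg_lie, neg_smul]
  exact congrArg Neg.neg h

theorem lie_x_y_eq_of_ne_zero (hxx : ∀ a b, ⁅R.x a, R.x b⁆ = 0) (hyy : ∀ a b, ⁅R.y a, R.y b⁆ = 0)
    {N : ℤ} (hN : N ≠ 0) (a : ℤ) : ⁅R.x a, R.y (N - a)⁆ = ⁅R.x 0, R.y N⁆ := by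
  let P (a : ℤ) : L := ⁅R.x a, R.y (N - a)⁆
  have hdiff (a n : ℤ) : P (a + 1) - P a = P (n + 1) - P (n + N) := by
    have h : ⁅⁅R.x a, R.y (N - 1 - a)⁆, ⁅R.x (n + 1), R.y (-n)⁆⁆ =
        (2 : K) • (P (n + N) - P (n + 1)) := by
      rw [leibniz_lie, lie_lie_x_y_x hxx, lie_lie_x_y_y hyy, smul_lie, lie_smul,
        show n + 1 + (N - 1) = n + N by ring]
      simp only [P]
      rw [show N - (n + N) = -n by ring, show -n + (N - 1) = N - (n + 1) by ring]
      module
    rw [lie_x_succ_y_neg, ← lie_skew, hOne_lie_lie_x_y, ← smul_neg, neg_sub,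
      show N - 1 - a + 1 = N - a by ring, show N - 1 - a = N - (a + 1) by ring] at h
    rw [← neg_sub (P a), ← neg_sub (P (n + N)), neg_inj]
    exact smul_right_injective L (two_ne_zero' K) h
  let d : L := P (0 + 1) - P 0
  have hd (a : ℤ) : P (a + 1) - P a = d := (hdiff a 0).trans (hdiff 0 0).symm
  have hlin (a : ℤ) : P a = P 0 + a • d := by
    have hper : Function.Periodic (fun a : ℤ => P a - a • d) 1 := fun a => by
      simp only
      rw [eq_add_of_sub_eq (hd a)]
      module
    have := hper.int_mul_eq a
    simp only [mul_one, zero_smul, sub_zero, Int.cast_id] at this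
    exact eq_add_of_sub_eq this
  have hPN : P N = P 0 := by simpa [d] using (hdiff 0 0).symm
  have hd0 : d = 0 := by
    rw [hlin N, add_eq_left, ← Int.cast_smul_eq_zsmul K] at hPN
    exact (smul_eq_zero.1 hPN).resolve_left (Int.cast_ne_zero.2 hN)
  have := hlin a
  rw [hd0, smul_zero, add_zero] at this
  simpa [P] using this

end Commuting

/-- The affine `sl₂` generated by a seed whose elements `e t ^ n` commute, as do its `f t ^ n`. -/
noncomputable def toAffineSl2 (hxx : ∀ a b, ⁅R.x a, R.x b⁆ = 0) (hyy : ∀ a b, ⁅R.y a, R.y b⁆ = 0) :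
    AffineSl2 K R.c where
  x := R.x
  y := R.y
  h n := ⁅R.x 0, R.y n⁆
  lie_x_y a b := by
    split_ifs with h
    · rw [eq_neg_of_add_eq_zero_right h, add_neg_cancel, lie_x_y_neg, x_zero, y_zero, R.lie_e_f]
    · rw [add_zero, ← lie_x_y_eq_of_ne_zero hxx hyy h a, add_sub_cancel_left]
  lie_h_x a b := by
    have := lie_lie_x_y_x hxx a 0 b
    rwa [sub_zero, add_comm] at this
  lie_h_y a b := by
    have := lie_lie_x_y_y hyy a 0 b
    rwa [sub_zero, add_comm] at this

end AffineSl2Seed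

/-- The centralizer of a single element, as a Lie subalgebra. -/
def elementCentralizer (K : Type*) {L : Type*} [CommRing K] [LieRing L] [LieAlgebra K L] (c : L) :
    LieSubalgebra K L where
  toSubmodule := (ad K L c).ker
  lie_mem' {a b} ha hb := by
    have ha : ⁅c, a⁆ = 0 := ha
    have hb : ⁅c, b⁆ = 0 := hb
    change ⁅c, ⁅a, b⁆⁆ = 0
    rw [leibniz_lie, ha, hb, zero_lie, lie_zero, add_zero]

namespace ChevalleyGenerators

/-! ### Loop realisation along an isotropic vector -/

variable {K : Type*} [Field K] {ι : Type*} [DecidableEq ι] [Fintype ι] {A : Matrix ι ι ℤ}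
  {L : Type*} [LieRing L] [LieAlgebra K L] (G : ChevalleyGenerators K A L) {δ β γ : ι → ℤ} {i j : ι}

/-- A realisation of affine `sl₂` inside a Kac–Moody algebra which extends the `sl₂` of the node `i`
and whose loop variable has the weight `δ`. -/
structure LoopSl2 (δ : ι → ℤ) (i : ι) extends AffineSl2 K (G.coroot δ) where
  x_zero : x 0 = G.e i
  y_zero : y 0 = G.f i
  h_zero : h 0 = G.h i
  x_mem (n : ℤ) : x n ∈ G.weightSpace (n • δ + Pi.single i 1)
  y_mem (n : ℤ) : y n ∈ G.weightSpace (n • δ - Pi.single i 1)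

variable {G}

theorem mem_weightSpace_zsmul_add {u v : L} {k l : K} {X : ℤ → L} (hu : u ∈ G.weightSpace δ)
    (hv : v ∈ G.weightSpace (-δ)) (hk : k ≠ 0) (hl : l ≠ 0) (hX0 : X 0 ∈ G.weightSpace β)
    (huX : ∀ n, ⁅u, X n⁆ = k • X (n + 1)) (hvX : ∀ n, ⁅v, X n⁆ = l • X (n - 1)) (n : ℤ) :
    X n ∈ G.weightSpace (n • δ + β) := by
  induction n using Int.induction_on with
  | zero => rwa [zero_smul, zero_add]
  | succ n ih =>
    rw [← smul_mem_iff _ hk, ← huX]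
    exact lie_mem_weightSpace hu ih (by module)
  | pred n ih =>
    rw [← smul_mem_iff _ hl, ← hvX]
    exact lie_mem_weightSpace hv ih (by module)

theorem coroot_lie_zsmul_add (hδ : δ ⬝ᵥ A *ᵥ δ = 0) (hβ : δ ⬝ᵥ A *ᵥ β = 0) {n : ℤ} {z : L}
    (hz : z ∈ G.weightSpace (n • δ + β)) : ⁅G.coroot δ, z⁆ = 0 := by
  rw [coroot_lie G hz, mulVec_add, mulVec_smul, dotProduct_add, dotProduct_smul, hδ, hβ]
  simp

theorem h_lie_zsmul_add (hi : (A *ᵥ δ) i = 0) {n : ℤ} {z : L}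
    (hz : z ∈ G.weightSpace (n • δ + β)) : ⁅G.h i, z⁆ = (((A *ᵥ β) i : ℤ) : K) • z := by
  rw [mem_weightSpace_iff.1 hz i, mulVec_add, mulVec_smul, Pi.add_apply, Pi.smul_apply, hi,
    smul_zero, zero_add]

variable [CharZero K] (hA : Function.Injective A.mulVec) (hsymm : A.IsSymm)
  (hdiag : ∀ i, A i i = 2) (hδ : δ ⬝ᵥ A *ᵥ δ = 0)

include hA hsymm hdiag hδ

theorem lie_eq_zero_of_two_lt_zsmul_add (hβ : δ ⬝ᵥ A *ᵥ β = 0) (hγ : δ ⬝ᵥ A *ᵥ γ = 0) {m n : ℤ}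
    {x y : L} (hx : x ∈ G.weightSpace (m • δ + β)) (hy : y ∈ G.weightSpace (n • δ + γ))
    (h : 2 < β ⬝ᵥ A *ᵥ β + 2 * (β ⬝ᵥ A *ᵥ γ) + γ ⬝ᵥ A *ᵥ γ) : ⁅x, y⁆ = 0 := by
  refine G.lie_eq_zero_of_two_lt hA hsymm hdiag hx hy ?_
  rw [← norm_add hsymm] at h ⊢
  rwa [add_add_add_comm, ← add_smul, norm_zsmul_add hsymm hδ]
  rw [mulVec_add, dotProduct_add, hβ, hγ, add_zero]

theorem exists_eq_smul_of_norm_eq_two (hβ : δ ⬝ᵥ A *ᵥ β = 0) (hβ2 : β ⬝ᵥ A *ᵥ β = 2) {n : ℤ}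
    {x y : L} (hx : x ∈ G.weightSpace (n • δ + β)) (hy : y ∈ G.weightSpace (n • δ + β))
    (hy0 : y ≠ 0) : ∃ a : K, x = a • y :=
  exists_eq_smul_of_rank_le_one (G.rank_weightSpace_le_one hA hsymm hdiag
    (by rw [norm_zsmul_add hsymm hδ hβ, hβ2])) hx hy hy0

theorem exists_affineSl2Seed (hi : (A *ᵥ δ) i = 0)
    (hpair : G.HasRootPair (δ - Pi.single i 1)) :
    ∃ R : AffineSl2Seed K (elementCentralizer K (G.coroot δ)),
      (R.c : L) = G.coroot δ ∧ (R.h : L) = G.h i ∧ (R.e : L) = G.e i ∧ (R.f : L) = G.f i ∧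
      (R.eInv : L) ∈ G.weightSpace ((-1 : ℤ) • δ + Pi.single i 1) ∧
      (R.fOne : L) ∈ G.weightSpace ((1 : ℤ) • δ + -Pi.single i 1) := by
  obtain ⟨u, hu, v, hv, huv⟩ := hpair
  replace hu : u ∈ G.weightSpace ((1 : ℤ) • δ + -Pi.single i 1) := by
    rwa [one_smul, ← sub_eq_add_neg]
  replace hv : v ∈ G.weightSpace ((-1 : ℤ) • δ + Pi.single i 1) := by
    rwa [neg_one_smul, ← sub_eq_neg_add, ← neg_sub]
  have he : G.e i ∈ G.weightSpace ((0 : ℤ) • δ + Pi.single i 1) := by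
    simpa using G.e_mem_weightSpace i
  have hf : G.f i ∈ G.weightSpace ((0 : ℤ) • δ + -Pi.single i 1) := by
    simpa using G.f_mem_weightSpace i
  have hh : G.h i ∈ G.weightSpace ((0 : ℤ) • δ + 0) := by
    simpa using G.h_mem_weightSpace i
  have hα : δ ⬝ᵥ A *ᵥ Pi.single i 1 = 0 := by rw [dotProduct_mulVec_single hsymm, hi]
  have hα' : δ ⬝ᵥ A *ᵥ -Pi.single i 1 = 0 := by rw [mulVec_neg, dotProduct_neg, hα, neg_zero]
  have hcent {n : ℤ} {β : ι → ℤ} {z : L} (hβ : δ ⬝ᵥ A *ᵥ β = 0)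
      (hz : z ∈ G.weightSpace (n • δ + β)) : z ∈ elementCentralizer K (G.coroot δ) :=
    coroot_lie_zsmul_add hδ hβ hz
  refine ⟨
    { c := ⟨G.coroot δ, lie_self _⟩
      h := ⟨G.h i, hcent (by simp) hh⟩
      e := ⟨G.e i, hcent hα he⟩
      f := ⟨G.f i, hcent hα' hf⟩
      eInv := ⟨v, hcent hα hv⟩
      fOne := ⟨u, hcent hα' hu⟩
      c_lie := fun z => Subtype.ext z.2
      lie_e_f := Subtype.ext (by simp [G.lie_e_f])
      lie_eInv_fOne := Subtype.ext (by
        change ⁅v, u⁆ = G.h i - G.coroot δ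
        rw [← lie_skew, huv, sub_eq_add_neg δ, coroot_add, coroot_neg, coroot_single]
        abel)
      lie_h_e := Subtype.ext (by simp [h_lie_zsmul_add hi he, hdiag])
      lie_h_eInv := Subtype.ext (by simp [h_lie_zsmul_add hi hv, hdiag])
      lie_h_f := Subtype.ext (by simp [h_lie_zsmul_add hi hf, mulVec_neg, hdiag])
      lie_h_fOne := Subtype.ext (by simp [h_lie_zsmul_add hi hu, mulVec_neg, hdiag])
      lie_eInv_e := Subtype.ext (lie_eq_zero_of_two_lt_zsmul_add hA hsymm hdiag hδ hα hα hv he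
        (by simp [hdiag]))
      lie_f_fOne := Subtype.ext (lie_eq_zero_of_two_lt_zsmul_add hA hsymm hdiag hδ hα' hα' hf hu
        (by simp [hdiag, mulVec_neg])) }, rfl, rfl, rfl, rfl, hv, hu⟩

theorem nonempty_loopSl2 (hi : (A *ᵥ δ) i = 0) (hpair : G.HasRootPair (δ - Pi.single i 1)) :
    Nonempty (G.LoopSl2 δ i) := by
  obtain ⟨R, hc, hh, he, hf, heInv, hfOne⟩ :=
    exists_affineSl2Seed hA hsymm hdiag hδ hi hpair
  have hα : δ ⬝ᵥ A *ᵥ Pi.single i 1 = 0 := by rw [dotProduct_mulVec_single hsymm, hi]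
  have hα' : δ ⬝ᵥ A *ᵥ -Pi.single i 1 = 0 := by rw [mulVec_neg, dotProduct_neg, hα, neg_zero]
  have he_mem : (R.e : L) ∈ G.weightSpace (Pi.single i 1) := he ▸ G.e_mem_weightSpace i
  have hf_mem : (R.f : L) ∈ G.weightSpace (-Pi.single i 1) := hf ▸ G.f_mem_weightSpace i
  have hu : (R.hOne : L) ∈ G.weightSpace δ := lie_mem_weightSpace he_mem hfOne (by module)
  have hv : (R.flip.hOne : L) ∈ G.weightSpace (-δ) := lie_mem_weightSpace hf_mem heInv (by module)
  have hx_mem (n : ℤ) : (R.x n : L) ∈ G.weightSpace (n • δ + Pi.single i 1) :=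
    mem_weightSpace_zsmul_add (X := fun n => (R.x n : L)) hu hv two_ne_zero
      (neg_ne_zero.2 two_ne_zero) (by rwa [R.x_zero])
      (fun n => congrArg Subtype.val (R.hOne_lie_x n))
      (fun n => congrArg Subtype.val (R.flip_hOne_lie_x n)) n
  have hy_mem (n : ℤ) : (R.y n : L) ∈ G.weightSpace (n • δ + -Pi.single i 1) :=
    mem_weightSpace_zsmul_add (X := fun n => (R.y n : L)) hu hv (neg_ne_zero.2 two_ne_zero)
      two_ne_zero (by rwa [R.y_zero]) (fun n => congrArg Subtype.val (R.hOne_lie_y n))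
      (fun n => congrArg Subtype.val (R.flip_hOne_lie_y n)) n
  have hxx (a b : ℤ) : ⁅R.x a, R.x b⁆ = 0 := Subtype.ext <|
    lie_eq_zero_of_two_lt_zsmul_add hA hsymm hdiag hδ hα hα (hx_mem a) (hx_mem b) (by simp [hdiag])
  have hyy (a b : ℤ) : ⁅R.y a, R.y b⁆ = 0 := Subtype.ext <|
    lie_eq_zero_of_two_lt_zsmul_add hA hsymm hdiag hδ hα' hα' (hy_mem a) (hy_mem b)
      (by simp [hdiag, mulVec_neg])
  exact ⟨{
    toAffineSl2 := (R.toAffineSl2 hxx hyy).map (LieSubalgebra.incl _) hc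
    x_zero := (congrArg Subtype.val R.x_zero).trans he
    y_zero := (congrArg Subtype.val R.y_zero).trans hf
    h_zero := by
      change ((⁅R.x 0, R.y 0⁆ : elementCentralizer K (G.coroot δ)) : L) = G.h i
      rw [R.x_zero, R.y_zero, R.lie_e_f, hh]
    x_mem := hx_mem
    y_mem := fun n => sub_eq_add_neg (n • δ) (Pi.single i 1) ▸ hy_mem n }⟩

end ChevalleyGenerators

theorem eq_apply_zero_of_shift {M : Type*} {F : ℤ → ℤ → M}
    (hF : ∀ m n, F (m + 1) n = F m (n + 1)) (m n : ℤ) : F m n = F 0 (m + n) := by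
  induction m using Int.induction_on generalizing n with
  | zero => rw [zero_add]
  | succ m ih => rw [hF, ih, add_assoc, add_comm n]
  | pred m ih =>
    have := hF (-m - 1) (n - 1)
    rw [sub_add_cancel, sub_add_cancel, ih] at this
    rw [← this, sub_add_eq_add_sub, add_sub_assoc]

theorem exists_eq_mul_parent {J M : Type*} [MulOneClass M] {r : J → J → Prop}
    (hr : WellFounded r) (parent : J → J) (z : J → M) :
    ∃ s : J → M, ∀ j, r (parent j) j → s j = z j * s (parent j) := by
  classical
  refine ⟨hr.fix fun j s => if h : r (parent j) j then z j * s (parent j) h else 1, fun j hj => ?_⟩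
  rw [hr.fix_eq, dif_pos hj]

namespace AffineSl2

variable {K L : Type*} [CommRing K] [LieRing L] [LieAlgebra K L] {c : L} (R : AffineSl2 K c)

theorem h_eq_lie (n : ℤ) : R.h n = ⁅R.x 0, R.y n⁆ := by
  rw [R.lie_x_y, zero_add, Int.cast_zero, zero_smul, ite_self, add_zero]

theorem lie_x_neg_y (n : ℤ) : ⁅R.x (-n), R.y n⁆ = R.h 0 - (n : K) • c := by
  rw [R.lie_x_y, neg_add_cancel, if_pos rfl, Int.cast_neg, neg_smul, sub_eq_add_neg]

theorem ne_zero_of_x_zero_ne_zero [IsDomain K] [CharZero K] [Module.IsTorsionFree K L]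
    (hc : ⁅c, R.x 0⁆ = 0) (hx : R.x 0 ≠ 0) (n : ℤ) : R.x n ≠ 0 ∧ R.y n ≠ 0 ∧ R.h n ≠ 0 := by
  have key (k : ℤ) : ⁅⁅R.x (-k), R.y k⁆, R.x 0⁆ ≠ 0 := by
    rw [lie_x_neg_y, sub_lie, smul_lie, hc, smul_zero, sub_zero, R.lie_h_x, zero_add]
    exact smul_ne_zero two_ne_zero hx
  have hx' (k : ℤ) : R.x k ≠ 0 := fun h => key (-k) (by rw [neg_neg, h, zero_lie, zero_lie])
  refine ⟨hx' n, fun h => key n (by rw [h, lie_zero, zero_lie]), fun h => ?_⟩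
  refine smul_ne_zero (two_ne_zero (α := K)) (hx' (n + 0)) ?_
  rw [← R.lie_h_x, h, zero_lie]

end AffineSl2

namespace ChevalleyGenerators

/-! ### Gluing the affine `sl₂`s along a tree -/

variable {K : Type*} [Field K] {ι : Type*} [DecidableEq ι] [Fintype ι] {A : Matrix ι ι ℤ}
  {L : Type*} [LieRing L] [LieAlgebra K L] {G : ChevalleyGenerators K A L} {δ : ι → ℤ} {i j : ι}

namespace LoopSl2

theorem h_mem (P : G.LoopSl2 δ i) (n : ℤ) : P.h n ∈ G.weightSpace (n • δ) := by
  rw [P.h_eq_lie]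
  exact lie_mem_weightSpace (P.x_mem 0) (P.y_mem n) (by module)

/-- The image of `P` under the automorphism of the loop realisation rescaling the loop variable by
`s`. -/
def scale (P : G.LoopSl2 δ i) (s : Kˣ) : G.LoopSl2 δ i where
  x n := (s ^ n : Kˣ) • P.x n
  y n := (s ^ n : Kˣ) • P.y n
  h n := (s ^ n : Kˣ) • P.h n
  x_zero := by rw [zpow_zero, one_smul, P.x_zero]
  y_zero := by rw [zpow_zero, one_smul, P.y_zero]
  h_zero := by rw [zpow_zero, one_smul, P.h_zero]
  x_mem n := smul_mem _ _ (P.x_mem n)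
  y_mem n := smul_mem _ _ (P.y_mem n)
  lie_x_y a b := by
    simp only [Units.smul_def, smul_lie, lie_smul, P.lie_x_y, smul_smul, ← Units.val_mul,
      ← _root_.zpow_add, add_comm b a, smul_add]
    split_ifs with hab
    · rw [hab, zpow_zero, Units.val_one, one_smul, one_smul]
    · rw [smul_zero]
  lie_h_x a b := by
    simp only [Units.smul_def, smul_lie, lie_smul, P.lie_h_x, _root_.zpow_add, Units.val_mul]
    module
  lie_h_y a b := by
    simp only [Units.smul_def, smul_lie, lie_smul, P.lie_h_y, _root_.zpow_add, Units.val_mul]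
    module

/-- The relation between the positive root vectors of two nodes whose loop variables differ by the
scalar `z`. -/
def Shift (P : G.LoopSl2 δ i) (Q : G.LoopSl2 δ j) (z : Kˣ) : Prop :=
  ∀ a b, ⁅P.x (a + 1), Q.x b⁆ = z • ⁅P.x a, Q.x (b + 1)⁆

variable {P : G.LoopSl2 δ i} {Q : G.LoopSl2 δ j}

theorem Shift.symm {z : Kˣ} (h : P.Shift Q z) : Q.Shift P z⁻¹ := fun a b => by
  rw [← lie_skew, ← lie_skew (Q.x a), h b a, smul_neg, inv_smul_smul]

theorem Shift.scale {z : Kˣ} (h : P.Shift Q z) (s t : Kˣ) :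
    (P.scale s).Shift (Q.scale t) (z * s / t) := fun a b => by
  simp only [LoopSl2.scale, Units.smul_def, smul_lie, lie_smul, h a b, smul_smul, ← Units.val_mul]
  congr 2
  rw [div_mul_eq_mul_div, eq_div_iff_mul_eq', _root_.zpow_add_one, _root_.zpow_add_one]
  simp only [mul_comm, mul_left_comm, mul_assoc]

section

variable (hsymm : A.IsSymm) (hδ : δ ⬝ᵥ A *ᵥ δ = 0) (hi : (A *ᵥ δ) i = 0) (P : G.LoopSl2 δ i)
  (Q : G.LoopSl2 δ j)

include hsymm hδ hi in
theorem coroot_lie_x (n : ℤ) : ⁅G.coroot δ, P.x n⁆ = 0 :=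
  coroot_lie_zsmul_add hδ (by rw [dotProduct_mulVec_single hsymm, hi]) (P.x_mem n)

include hδ in
theorem coroot_lie_h (n : ℤ) : ⁅G.coroot δ, P.h n⁆ = 0 :=
  coroot_lie_zsmul_add (β := 0) hδ (by simp) (by simpa using P.h_mem n)

include hi in
theorem h_zero_lie_x (n : ℤ) : ⁅P.h 0, Q.x n⁆ = (A i j : K) • Q.x n := by
  rw [P.h_zero, h_lie_zsmul_add hi (Q.x_mem n)]
  simp

include hsymm hδ hi in
theorem ne_zero [CharZero K] (he : G.e i ≠ 0) (n : ℤ) : P.x n ≠ 0 ∧ P.y n ≠ 0 ∧ P.h n ≠ 0 :=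
  P.ne_zero_of_x_zero_ne_zero (coroot_lie_x hsymm hδ hi P 0) (P.x_zero ▸ he) n

end

variable [CharZero K] (hA : Function.Injective A.mulVec) (hsymm : A.IsSymm)
  (hdiag : ∀ i, A i i = 2) (hδ : δ ⬝ᵥ A *ᵥ δ = 0) (hi : (A *ᵥ δ) i = 0) (hj : (A *ᵥ δ) j = 0)
  (P : G.LoopSl2 δ i) (Q : G.LoopSl2 δ j)

include hA hsymm hdiag hδ hi hj

theorem lie_x_y_eq_zero (hij : A i j < 1) (a b : ℤ) : ⁅P.x a, Q.y b⁆ = 0 := by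
  refine lie_eq_zero_of_two_lt_zsmul_add hA hsymm hdiag hδ (γ := -Pi.single j 1) ?_ ?_ (P.x_mem a)
    (sub_eq_add_neg (b • δ) (Pi.single j 1) ▸ Q.y_mem b) ?_
  · rw [dotProduct_mulVec_single hsymm, hi]
  · rw [mulVec_neg, dotProduct_neg, dotProduct_mulVec_single hsymm, hj, neg_zero]
  · simp [mulVec_neg, hdiag]
    linarith

theorem lie_x_x_eq_zero (hij : -1 < A i j) (a b : ℤ) : ⁅P.x a, Q.x b⁆ = 0 := by
  refine lie_eq_zero_of_two_lt_zsmul_add hA hsymm hdiag hδ ?_ ?_ (P.x_mem a) (Q.x_mem b) ?_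
  · rw [dotProduct_mulVec_single hsymm, hi]
  · rw [dotProduct_mulVec_single hsymm, hj]
  · simp [hdiag]
    linarith

theorem lie_y_y_eq_zero (hij : -1 < A i j) (a b : ℤ) : ⁅P.y a, Q.y b⁆ = 0 := by
  refine lie_eq_zero_of_two_lt_zsmul_add hA hsymm hdiag hδ (β := -Pi.single i 1)
    (γ := -Pi.single j 1) ?_ ?_ (sub_eq_add_neg (a • δ) (Pi.single i 1) ▸ P.y_mem a)
    (sub_eq_add_neg (b • δ) (Pi.single j 1) ▸ Q.y_mem b) ?_
  · rw [mulVec_neg, dotProduct_neg, dotProduct_mulVec_single hsymm, hi, neg_zero]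
  · rw [mulVec_neg, dotProduct_neg, dotProduct_mulVec_single hsymm, hj, neg_zero]
  · simp [mulVec_neg, hdiag]
    linarith

theorem lie_y_lie_x_x (hij : A i j < 1) (a b n : ℤ) :
    ⁅P.y b, ⁅P.x a, Q.x n⁆⁆ = -⁅P.h (a + b), Q.x n⁆ := by
  have hyx : ⁅P.y b, Q.x n⁆ = 0 := by
    rw [← lie_skew, lie_x_y_eq_zero hA hsymm hdiag hδ hj hi Q P (by rwa [hsymm.apply]), neg_zero]
  rw [leibniz_lie, hyx, lie_zero, add_zero, ← lie_skew (P.y b), P.lie_x_y, neg_lie, add_lie]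
  split_ifs
  · rw [smul_lie, coroot_lie_x hsymm hδ hj Q, smul_zero, add_zero]
  · rw [zero_lie, add_zero]

theorem lie_x_x_ne_zero (he : G.e j ≠ 0) (hij : A i j = -1) (a n : ℤ) : ⁅P.x a, Q.x n⁆ ≠ 0 := by
  intro h
  have hyxx := lie_y_lie_x_x hA hsymm hdiag hδ hi hj P Q (by omega) a (-a) n
  rw [h, lie_zero, add_neg_cancel, h_zero_lie_x hi, hij] at hyxx
  exact (ne_zero hsymm hδ hj Q he n).1 (by simpa using hyxx.symm)

theorem exists_lie_x_eq_smul (he : G.e j ≠ 0) (hij : A i j = -1) (a n : ℤ) :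
    ∃ ζ : K, ⁅P.x (a + 1), Q.x n⁆ = ζ • ⁅P.x a, Q.x (n + 1)⁆ := by
  refine exists_eq_smul_of_norm_eq_two (G := G) hA hsymm hdiag hδ
    (β := Pi.single i 1 + Pi.single j 1) (n := a + 1 + n) ?_ ?_ ?_ ?_
    (lie_x_x_ne_zero hA hsymm hdiag hδ hi hj P Q he hij _ _)
  · rw [mulVec_add, dotProduct_add, dotProduct_mulVec_single hsymm, dotProduct_mulVec_single hsymm,
      hi, hj, add_zero]
  · rw [norm_add hsymm]
    simp [hdiag, hij]
  · exact lie_mem_weightSpace (P.x_mem _) (Q.x_mem _) (by module)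
  · exact lie_mem_weightSpace (P.x_mem _) (Q.x_mem _) (by module)

/- Applying `y`s of either node to `⁅x, x⁆` reduces to the brackets with `h 0`, which are known. -/
theorem exists_shift (hei : G.e i ≠ 0) (hej : G.e j ≠ 0) (hij : A i j = -1) :
    ∃ z, P.Shift Q z := by
  have hji : A j i = -1 := by rw [hsymm.apply, hij]
  choose ζ hζ using exists_lie_x_eq_smul hA hsymm hdiag hδ hi hj P Q hej hij
  have h_one (a n : ℤ) : ⁅P.h 1, Q.x n⁆ = -ζ a n • Q.x (n + 1) := by
    have h := congrArg (⁅P.y (-a), ·⁆) (hζ a n)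
    simp only [lie_smul, lie_y_lie_x_x hA hsymm hdiag hδ hi hj P Q (by omega : A i j < 1)] at h
    rw [add_neg_cancel, h_zero_lie_x hi, hij, add_neg_cancel_comm] at h
    rw [← neg_inj, h]
    simp
  have h_neg_one (a n : ℤ) : ⁅Q.h (-1), P.x (a + 1)⁆ = -ζ a n • P.x a := by
    have h := congrArg (⁅Q.y (-1 - n), ·⁆) (hζ a n)
    simp only [lie_smul, ← lie_skew (P.x _) (Q.x _), lie_neg, smul_neg, neg_inj,
      lie_y_lie_x_x hA hsymm hdiag hδ hj hi Q P (by omega : A j i < 1)] at h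
    rw [show n + (-1 - n) = -1 by ring, show n + 1 + (-1 - n) = 0 by ring,
      h_zero_lie_x hj, hji] at h
    rw [← neg_inj, h]
    simp
  have hζ_const (a n : ℤ) : ζ a n = ζ 0 0 := by
    have h₁ := smul_left_injective K (ne_zero hsymm hδ hj Q hej _).1
      ((h_one a n).symm.trans (h_one 0 n))
    have h₂ := smul_left_injective K (ne_zero hsymm hδ hi P hei _).1
      ((h_neg_one 0 n).symm.trans (h_neg_one 0 0))
    exact neg_injective (h₁.trans h₂)
  have hz : ζ 0 0 ≠ 0 := fun h0 => lie_x_x_ne_zero hA hsymm hdiag hδ hi hj P Q hej hij _ _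
    ((hζ 0 0).trans (by rw [h0, zero_smul]))
  exact ⟨Units.mk0 _ hz, fun a n => by rw [hζ, hζ_const, Units.smul_def, Units.val_mk0]⟩

variable {P Q}

theorem Shift.lie_h_x (h : P.Shift Q 1) (hij : A i j = -1) (m n : ℤ) :
    ⁅P.h m, Q.x n⁆ = -Q.x (m + n) := by
  have hF : ∀ m n, ⁅P.h (m + 1), Q.x n⁆ = ⁅P.h m, Q.x (n + 1)⁆ := fun m n => by
    have := congrArg (⁅P.y m, ·⁆) (h 0 n)
    simp only [one_smul, lie_y_lie_x_x hA hsymm hdiag hδ hi hj P Q (by omega : A i j < 1)] at this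
    rwa [neg_inj, zero_add, zero_add, add_comm] at this
  rw [eq_apply_zero_of_shift (F := fun m n => ⁅P.h m, Q.x n⁆) hF, h_zero_lie_x hi, hij]
  simp

theorem Shift.lie_h_y (h : P.Shift Q 1) (hij : A i j = -1) (he : G.e j ≠ 0) (m n : ℤ) :
    ⁅P.h m, Q.y n⁆ = Q.y (m + n) := by
  have hα : δ ⬝ᵥ A *ᵥ -Pi.single j 1 = 0 := by
    rw [mulVec_neg, dotProduct_neg, dotProduct_mulVec_single hsymm, hj, neg_zero]
  have hy (k : ℤ) : Q.y k ∈ G.weightSpace (k • δ + -Pi.single j 1) :=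
    sub_eq_add_neg (k • δ) (Pi.single j 1) ▸ Q.y_mem k
  by_cases hm : m = 0
  · rw [hm, P.h_zero, h_lie_zsmul_add hi (hy n), mulVec_neg, Pi.neg_apply, mulVec_single_one,
      col_apply, hij, zero_add]
    simp
  obtain ⟨φ, hφ⟩ : ∃ φ : K, ⁅P.h m, Q.y n⁆ = φ • Q.y (m + n) :=
    exists_eq_smul_of_norm_eq_two hA hsymm hdiag hδ hα (by simp [mulVec_neg, hdiag])
      (lie_mem_weightSpace (P.h_mem m) (hy n) (by module)) (hy _) (ne_zero hsymm hδ hj Q he _).2.1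
  have hcomm : ⁅P.h m, ⁅Q.x (-n), Q.y n⁆⁆ = 0 := by
    have hh : P.h m ∈ G.weightSpace (m • δ + 0) := by simpa using P.h_mem m
    rw [Q.lie_x_neg_y, Q.h_zero, lie_sub, lie_smul, ← lie_skew, ← lie_skew (P.h m) (G.coroot δ),
      coroot_lie_h hδ P, h_lie_zsmul_add hj hh]
    simp
  rw [leibniz_lie, h.lie_h_x hA hsymm hdiag hδ hi hj hij, hφ, neg_lie, lie_smul, Q.lie_x_y,
    Q.lie_x_y, if_neg (by omega), if_neg (by omega), add_assoc, neg_add_cancel,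
    neg_add_cancel_comm_assoc, add_zero, add_zero, neg_add_eq_zero] at hcomm
  have hφ1 : (1 : K) = φ := smul_left_injective K (ne_zero hsymm hδ hj Q he m).2.2 (by
    simpa using hcomm)
  rw [hφ, ← hφ1, one_smul]

end LoopSl2

/-- A realisation of the untwisted affine algebra attached to the simply laced subdiagram `node`:
the loop variables of the affine `sl₂`s of its nodes agree. -/
structure LoopSystem (G : ChevalleyGenerators K A L) (δ : ι → ℤ) {J : Type*} (node : J → ι) where
  loop (j : J) : G.LoopSl2 δ (node j)
  lie_h_x (i j : J) (m n : ℤ) :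
    ⁅(loop i).h m, (loop j).x n⁆ = (A (node i) (node j) : K) • (loop j).x (m + n)
  lie_h_y (i j : J) (m n : ℤ) :
    ⁅(loop i).h m, (loop j).y n⁆ = -(A (node i) (node j) : K) • (loop j).y (m + n)

variable {J : Type*} {node : J → ι}

theorem LoopSystem.lie_h_h (S : G.LoopSystem δ node) (i j : J) (m n : ℤ) :
    ⁅(S.loop i).h m, (S.loop j).h n⁆ =
      if m + n = 0 then ((m * A (node i) (node j) : ℤ) : K) • G.coroot δ else 0 := by
  rw [(S.loop j).h_eq_lie, leibniz_lie, S.lie_h_x, S.lie_h_y, smul_lie, lie_smul,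
    (S.loop j).lie_x_y, (S.loop j).lie_x_y, zero_add, add_zero]
  split
  · push_cast
    module
  · module

variable [CharZero K] (hA : Function.Injective A.mulVec) (hsymm : A.IsSymm)
  (hdiag : ∀ i, A i i = 2) (hδ : δ ⬝ᵥ A *ᵥ δ = 0) (hnode : ∀ j, (A *ᵥ δ) (node j) = 0)
  (he : ∀ i, G.e i ≠ 0)

include hA hsymm hdiag hδ hnode he

theorem nonempty_loopSystem_of_shift (hoff : ∀ i j, i ≠ j →
      A (node i) (node j) = 0 ∨ A (node i) (node j) = -1) (P : ∀ j, G.LoopSl2 δ (node j))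
    (hP : ∀ i j, A (node i) (node j) = -1 → (P i).Shift (P j) 1) :
    Nonempty (G.LoopSystem δ node) := by
  refine ⟨P, fun i j m n => ?_, fun i j m n => ?_⟩ <;> obtain rfl | hij := eq_or_ne i j
  · rw [(P i).lie_h_x, hdiag, Int.cast_ofNat]
  · obtain h | h := hoff i j hij
    · rw [(P i).h_eq_lie, lie_lie,
        LoopSl2.lie_x_x_eq_zero hA hsymm hdiag hδ (hnode i) (hnode j) _ _ (by omega), ← lie_skew,
        ← lie_skew ((P i).y m), LoopSl2.lie_x_y_eq_zero hA hsymm hdiag hδ (hnode j) (hnode i) _ _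
          (by rw [hsymm.apply]; omega), h]
      simp
    · rw [(hP i j h).lie_h_x hA hsymm hdiag hδ (hnode i) (hnode j) h, h]
      simp
  · rw [(P i).lie_h_y, hdiag, Int.cast_ofNat]
  · obtain h | h := hoff i j hij
    · rw [(P i).h_eq_lie, lie_lie,
        LoopSl2.lie_y_y_eq_zero hA hsymm hdiag hδ (hnode i) (hnode j) _ _ (by omega),
        LoopSl2.lie_x_y_eq_zero hA hsymm hdiag hδ (hnode i) (hnode j) _ _ (by omega), h]
      simp
    · rw [(hP i j h).lie_h_y hA hsymm hdiag hδ (hnode i) (hnode j) h (he _), h]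
      simp

theorem nonempty_loopSystem {r : J → J → Prop} (hr : WellFounded r) (parent : J → J)
    (hoff : ∀ i j, i ≠ j → A (node i) (node j) = 0 ∨
      A (node i) (node j) = -1 ∧ (r (parent i) i ∧ parent i = j ∨ r (parent j) j ∧ parent j = i))
    (hpair : ∀ j, G.HasRootPair (δ - Pi.single (node j) 1)) :
    Nonempty (G.LoopSystem δ node) := by
  have P (j : J) : G.LoopSl2 δ (node j) :=
    (nonempty_loopSl2 hA hsymm hdiag hδ (hnode j) (hpair j)).some
  have hshift : ∀ i j, ∃ z, A (node i) (node j) = -1 → (P i).Shift (P j) z := fun i j => by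
    by_cases hij : A (node i) (node j) = -1
    · exact (LoopSl2.exists_shift hA hsymm hdiag hδ (hnode i) (hnode j) (P i) (P j) (he _) (he _)
        hij).imp fun _ h _ => h
    · exact ⟨1, fun h => absurd h hij⟩
  choose z hz using hshift
  obtain ⟨s, hs⟩ := exists_eq_mul_parent hr parent fun j => z (parent j) j
  have hs_parent (j : J) (hj : r (parent j) j) (hAj : A (node (parent j)) (node j) = -1) :
      ((P (parent j)).scale (s (parent j))).Shift ((P j).scale (s j)) 1 := by
    have := (hz _ _ hAj).scale (s (parent j)) (s j)
    rwa [← hs j hj, div_self'] at this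
  refine nonempty_loopSystem_of_shift hA hsymm hdiag hδ hnode he
    (fun i j hij => (hoff i j hij).imp_right And.left) (fun j => (P j).scale (s j)) fun i j h => ?_
  have hij : i ≠ j := by
    rintro rfl
    rw [hdiag] at h
    omega
  obtain h0 | ⟨-, ⟨hi, rfl⟩ | ⟨hj, rfl⟩⟩ := hoff i j hij
  · omega
  · simpa using (hs_parent i hi (by rwa [hsymm.apply])).symm
  · exact hs_parent j hj h

end ChevalleyGenerators

/-! ### Vacuum vectors of level one affine `sl₂` -/

theorem sum_range_sub_sum_range_add {M : Type*} [AddCommGroup M] (a : ℕ → M) (N p : ℕ)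
    (ha : ∀ n, N ≤ n → a n = 0) :
    ∑ n ∈ Finset.range N, (a n - a (p + n)) = ∑ n ∈ Finset.range p, a n := by
  have h : ∑ n ∈ Finset.range (N + p), a n = ∑ n ∈ Finset.range N, a n := by
    rw [Finset.sum_range_add, Finset.sum_eq_zero (s := Finset.range p) fun n _ => ha _ (by omega),
      add_zero]
  rw [Finset.sum_sub_distrib, ← h, add_comm N, Finset.sum_range_add, add_sub_cancel_right]

section

variable {K : Type*} [Field K] {V : Type*} [AddCommGroup V] [Module K V]

/-- The operators `e n`, `f n`, `h n` are the modes of the generators of affine `sl₂` in a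
representation of level one. -/
structure IsLevelOneAction (e f h : ℤ → V →ₗ[K] V) : Prop where
  f_e (a b : ℤ) (w : V) :
    f b (e a w) = e a (f b w) - h (a + b) w - if a + b = 0 then (a : K) • w else 0
  h_e (m n : ℤ) (w : V) : h m (e n w) = e n (h m w) + (2 : K) • e (m + n) w
  f_h (m n : ℤ) (w : V) : f n (h m w) = h m (f n w) + (2 : K) • f (m + n) w
  h_h (m n : ℤ) (w : V) :
    h m (h n w) = h n (h m w) + if m + n = 0 then (2 * m : K) • w else 0
  e_e (a b : ℤ) (w : V) : e a (e b w) = e b (e a w)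

/-- `v` is a vacuum vector of a level one representation of affine `sl₂`. The last field is the null
vector relation which makes the module generated by `v` integrable. -/
structure IsLevelOneVacuum (e f h : ℤ → V →ₗ[K] V) (v : V) : Prop extends
    IsLevelOneAction e f h where
  e_vacuum (n : ℤ) (hn : 0 ≤ n) : e n v = 0
  f_vacuum (n : ℤ) (hn : 0 ≤ n) : f n v = 0
  h_vacuum (n : ℤ) (hn : 0 ≤ n) : h n v = 0
  e_e_vacuum : e (-1) (e (-1) v) = 0

/-- Three times the Sugawara operator `L₋₁` at level one, truncated to its first `N`
terms; on any given vector all but finitely many terms vanish. -/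
noncomputable def sugawara (e f h : ℤ → V →ₗ[K] V) (N : ℕ) : V →ₗ[K] V :=
  ∑ n ∈ Finset.range N, ((1 / 2 : K) • h (-1 - n) ∘ₗ h n + e (-1 - n) ∘ₗ f n + f (-1 - n) ∘ₗ e n)

theorem sugawara_apply (e f h : ℤ → V →ₗ[K] V) (N : ℕ) (v : V) :
    sugawara e f h N v = ∑ n ∈ Finset.range N,
      ((1 / 2 : K) • h (-1 - n) (h n v) + e (-1 - n) (f n v) + f (-1 - n) (e n v)) := by
  simp [sugawara, LinearMap.sum_apply]

namespace IsLevelOneVacuum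

variable {e f h : ℤ → V →ₗ[K] V} {v : V} (S : IsLevelOneVacuum e f h v)

include S

theorem e_h (m n : ℤ) (w : V) : e n (h m w) = h m (e n w) - (2 : K) • e (m + n) w := by
  rw [S.h_e, add_sub_cancel_right]

theorem sum_e_f_eq_sum_f_e_add (p : ℕ) (w : V) :
    ∑ n ∈ Finset.range p, e (-1 - n) (f (n - p) w) =
      ∑ n ∈ Finset.range p, f (-1 - n) (e (n - p) w) + (p : K) • h (-1 - p) w := by
  have hsum : (p : K) • h (-1 - p) w = ∑ _n ∈ Finset.range p, h (-1 - p) w := by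
    rw [Finset.sum_const, Finset.card_range, Nat.cast_smul_eq_nsmul]
  rw [← Finset.sum_range_reflect fun n : ℕ => f (-1 - n) (e (n - p) w), hsum,
    ← Finset.sum_add_distrib]
  refine Finset.sum_congr rfl fun n hn => ?_
  have := Finset.mem_range.1 hn
  rw [show ((p - 1 - n : ℕ) : ℤ) = p - 1 - n by omega, show (p : ℤ) - 1 - n - p = -1 - n by ring,
    show -1 - ((p : ℤ) - 1 - n) = n - p by ring, S.f_e, if_neg (by omega),
    show -1 - (n : ℤ) + (n - p) = -1 - p by ring]
  abel

variable [CharZero K]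

include S

theorem sugawara_term_e (q n : ℕ) :
    (1 / 2 : K) • h (-1 - n) (h n (e (-q) v)) + e (-1 - n) (f n (e (-q) v)) +
        f (-1 - n) (e n (e (-q) v)) =
      if n < q then (2 : K) • e (-1 - q) v + (e (n - q) (h (-1 - n) v) - e (-1 - n) (h (n - q) v))
      else if n = q then (q : K) • e (-1 - q) v else 0 := by
  rw [S.h_e, S.h_vacuum _ (by positivity), S.f_e, S.f_vacuum _ (by positivity), S.e_e,
    S.e_vacuum n (by positivity), neg_add_eq_sub, ← sub_eq_add_neg]
  simp only [map_zero, zero_add, add_zero, zero_sub, map_smul, map_sub, map_neg]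
  obtain hn | rfl | hn := lt_trichotomy n q
  · rw [if_pos hn, if_neg (by omega), S.h_e, show -1 - (n : ℤ) + (n - q) = -1 - q by ring, map_zero]
    module
  · simp [S.e_vacuum 0 le_rfl, S.h_vacuum 0 le_rfl]
  · rw [if_neg hn.not_gt, if_neg hn.ne', S.e_vacuum _ (by omega), S.h_vacuum _ (by omega),
      if_neg (by omega)]
    simp

theorem sugawara_e (q N : ℕ) (hN : q < N) :
    sugawara e f h N (e (-q) v) = (3 * q : K) • e (-1 - q) v := by
  rw [sugawara_apply, Finset.sum_congr rfl fun n _ => S.sugawara_term_e q n,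
    ← Finset.sum_subset (s₁ := Finset.range (q + 1)) (Finset.range_subset_range.2 hN)
      fun n _ hn => by
        rw [Finset.mem_range] at hn
        rw [if_neg (by omega), if_neg (by omega)],
    Finset.sum_range_succ, Finset.sum_congr rfl fun n hn => if_pos (Finset.mem_range.1 hn),
    Finset.sum_add_distrib, Finset.sum_sub_distrib]
  have hreflect : ∑ n ∈ Finset.range q, e (n - q) (h (-1 - n) v) =
      ∑ n ∈ Finset.range q, e (-1 - n) (h (n - q) v) := by
    rw [← Finset.sum_range_reflect]
    refine Finset.sum_congr rfl fun n hn => ?_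
    have := Finset.mem_range.1 hn
    rw [show ((q - 1 - n : ℕ) : ℤ) = q - 1 - n by omega, show (q : ℤ) - 1 - n - q = -1 - n by ring,
      show -1 - ((q : ℤ) - 1 - n) = n - q by ring]
  rw [hreflect]
  simp only [Finset.sum_const, Finset.card_range, lt_self_iff_false, if_false, if_true]
  rw [← Nat.cast_smul_eq_nsmul K]
  module

theorem sugawara_term_h {p : ℕ} (hp : 0 < p) (n : ℕ) (w : V) :
    (1 / 2 : K) • h (-1 - n) (h n (h (-p) w)) + e (-1 - n) (f n (h (-p) w)) +
        f (-1 - n) (e n (h (-p) w)) =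
      h (-p) ((1 / 2 : K) • h (-1 - n) (h n w) + e (-1 - n) (f n w) + f (-1 - n) (e n w)) +
      ((if n = p then (p : K) • h (-1 - p) w else 0) +
      (2 : K) • ((e (-1 - n) (f (n - p) w) - e (-1 - (p + n : ℕ)) (f ((p + n : ℕ) - p) w)) -
        (f (-1 - n) (e (n - p) w) - f (-1 - (p + n : ℕ)) (e ((p + n : ℕ) - p) w)))) := by
  rw [S.h_h n, S.f_h, S.e_h]
  simp only [map_add, map_sub, map_smul]
  rw [S.h_h (-1 - n) (-p), if_neg (by omega), add_zero, S.e_h, S.f_h,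
    show -(p : ℤ) + n = n - p by ring,
    show -(p : ℤ) + (-1 - n) = -1 - (p + n : ℕ) by push_cast; ring,
    show ((p + n : ℕ) : ℤ) - p = n by push_cast; ring]
  obtain rfl | hn := eq_or_ne n p
  · rw [if_pos (by ring), if_pos rfl]
    simp only [map_smul]
    push_cast
    module
  · rw [if_neg (by omega), if_neg hn]
    simp only [map_zero]
    module

theorem sugawara_h {p N : ℕ} (hp : 0 < p) (hpN : p < N) {w : V}
    (he : ∀ k : ℤ, (N : ℤ) - p ≤ k → e k w = 0) (hf : ∀ k : ℤ, (N : ℤ) - p ≤ k → f k w = 0) :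
    sugawara e f h N (h (-p) w) = h (-p) (sugawara e f h N w) + (3 * p : K) • h (-1 - p) w := by
  rw [sugawara_apply, sugawara_apply, map_sum,
    Finset.sum_congr rfl fun n _ => S.sugawara_term_h hp n w, Finset.sum_add_distrib,
    Finset.sum_add_distrib, ← Finset.smul_sum, Finset.sum_sub_distrib,
    sum_range_sub_sum_range_add (fun n : ℕ => e (-1 - n) (f (n - p) w)) N p
      fun n hn => by rw [hf _ (by omega), map_zero],
    sum_range_sub_sum_range_add (fun n : ℕ => f (-1 - n) (e (n - p) w)) N p
      fun n hn => by rw [he _ (by omega), map_zero],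
    Finset.sum_ite_eq', if_pos (Finset.mem_range.2 hpN), S.sum_e_f_eq_sum_f_e_add]
  module

theorem e_neg_two_vacuum : e (-2) v = h (-1) (e (-1) v) := by
  have hnull := congrArg (f 0) S.e_e_vacuum
  rw [S.f_e, S.f_e, S.f_vacuum 0 le_rfl, map_zero, add_zero, if_neg (by norm_num),
    if_neg (by norm_num)] at hnull
  simp only [map_zero, sub_zero, zero_sub, map_neg] at hnull
  have hhe := S.h_e (-1) (-1) v
  rw [show (-1 : ℤ) + -1 = -2 by ring] at hhe
  have htwo : (2 : K) • (e (-2) v - h (-1) (e (-1) v)) = 0 := by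
    rw [← hnull, sub_eq_add_neg, eq_sub_of_add_eq hhe.symm]
    module
  exact sub_eq_zero.1 ((smul_eq_zero.1 htwo).resolve_left two_ne_zero)

theorem sugawara_h_e {q k : ℕ} (hk : k < q) :
    sugawara e f h (2 * q + 3) (h (-1 - k) (e (k - q) v)) =
      (3 * (q - k) : K) • h (-1 - k) (e (k - (q + 1 : ℕ)) v) +
      (3 * (k + 1) : K) • h (-1 - (k + 1 : ℕ)) (e ((k + 1 : ℕ) - (q + 1 : ℕ)) v) := by
  have hh := S.sugawara_h (p := k + 1) (N := 2 * q + 3) (w := e (k - q) v) (by omega) (by omega)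
    (fun n hn => by rw [S.e_e, S.e_vacuum n (by omega), map_zero])
    (fun n hn => by
      rw [S.f_e, S.f_vacuum n (by omega), S.h_vacuum _ (by omega), if_neg (by omega)]
      simp)
  have he := S.sugawara_e (q - k) (2 * q + 3) (by omega)
  rw [show -((q - k : ℕ) : ℤ) = k - q by omega] at he
  rw [show -((k + 1 : ℕ) : ℤ) = -1 - k by push_cast; ring, he] at hh
  rw [hh, map_smul, show -1 - ((q - k : ℕ) : ℤ) = k - (q + 1 : ℕ) by omega,
    show ((k + 1 : ℕ) : ℤ) - (q + 1 : ℕ) = k - q by push_cast; ring, Nat.cast_sub hk.le]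
  push_cast
  rfl

/- Translation covariance of the vertex operator: the case `r = 1` is the null vector relation, and
the Sugawara operator takes the relation for `r` to the one for `r + 1`. -/
theorem smul_e_vacuum (r : ℕ) :
    (r : K) • e (-1 - r) v = ∑ k ∈ Finset.range r, h (-1 - k) (e (k - r) v) := by
  obtain _ | r := r
  · simp
  induction r with
  | zero => simpa [show (-1 - 1 : ℤ) = -2 by norm_num] using S.e_neg_two_vacuum
  | succ r ih =>
    have hq : (3 * (r + 1 : ℕ) : K) ≠ 0 :=
      mul_ne_zero three_ne_zero (Nat.cast_ne_zero.2 r.succ_ne_zero)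
    generalize r + 1 = q at *
    set g : ℕ → V := fun k => h (-1 - k) (e (k - (q + 1 : ℕ)) v)
    have happly := congrArg (sugawara e f h (2 * q + 3)) ih
    have he := S.sugawara_e (1 + q) (2 * q + 3) (by omega)
    rw [show -((1 + q : ℕ) : ℤ) = -1 - q by push_cast; ring] at he
    rw [map_smul, map_sum, he,
      Finset.sum_congr rfl fun k hk => S.sugawara_h_e (Finset.mem_range.1 hk),
      Finset.sum_add_distrib] at happly
    have hleft : ∑ k ∈ Finset.range q, (3 * (q - k) : K) • g k =
        ∑ k ∈ Finset.range (q + 1), (3 * (q - k) : K) • g k := by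
      rw [Finset.sum_range_succ]
      simp
    have hright : ∑ k ∈ Finset.range q, (3 * (k + 1) : K) • g (k + 1) =
        ∑ k ∈ Finset.range (q + 1), (3 * k : K) • g k := by
      rw [Finset.sum_range_succ']
      simp
    rw [hleft, hright, ← Finset.sum_add_distrib, Finset.sum_congr rfl fun (k : ℕ) _ =>
      show (3 * (q - k) : K) • g k + (3 * k : K) • g k = (3 * q : K) • g k by module,
      ← Finset.smul_sum, smul_smul] at happly
    refine smul_right_injective V hq (Eq.trans ?_ happly)
    simp only [smul_smul, add_comm 1 q]
    congr 1
    ring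

theorem e_vacuum_mem {W : Submodule K V} (he : e (-1) v ∈ W)
    (hW : ∀ k : ℕ, ∀ w ∈ W, h (-1 - k) w ∈ W) (n : ℤ) : e n v ∈ W := by
  obtain hn | hn := le_or_gt 0 n
  · rw [S.e_vacuum n hn]
    exact W.zero_mem
  obtain ⟨r, rfl⟩ : ∃ r : ℕ, n = -1 - r := ⟨(-1 - n).toNat, by omega⟩
  clear hn
  induction r using Nat.strong_induction_on with
  | _ r ih =>
    obtain rfl | hr := eq_or_ne r 0
    · simpa using he
    rw [← W.smul_mem_iff (Nat.cast_ne_zero.2 hr : (r : K) ≠ 0), S.smul_e_vacuum]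
    refine W.sum_mem fun k hk => hW _ _ ?_
    have hkr := Finset.mem_range.1 hk
    have := ih (r - 1 - k) (by omega)
    rwa [show -1 - ((r - 1 - k : ℕ) : ℤ) = k - r by omega] at this

end IsLevelOneVacuum

end

theorem AffineSl2.lie_h_h {K L : Type*} [CommRing K] [LieRing L] [LieAlgebra K L] {c : L}
    (R : AffineSl2 K c) (m n : ℤ) :
    ⁅R.h m, R.h n⁆ = if m + n = 0 then (2 * m : K) • c else 0 := by
  rw [R.h_eq_lie n, leibniz_lie, R.lie_h_x, R.lie_h_y, smul_lie, lie_smul, R.lie_x_y, R.lie_x_y,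
    zero_add, add_zero]
  split
  · push_cast
    module
  · simp

section Extremal

variable {ι : Type*} [Fintype ι] {A : Matrix ι ι ℤ} {δ β c : ι → ℤ}

/-- A real root of level one, the level being normalised by the isotropic vector `δ`. The roots of
level one are the vectors `c + n • δ` with `c` extremal and `0 ≤ n`. -/
structure IsExtremal (A : Matrix ι ι ℤ) (δ c : ι → ℤ) : Prop where
  level : δ ⬝ᵥ A *ᵥ c = -1
  norm : c ⬝ᵥ A *ᵥ c = 2

variable (hsymm : A.IsSymm) (hδ : δ ⬝ᵥ A *ᵥ δ = 0)

include hsymm hδ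

theorem norm_add_zsmul_of_level_one (hc : δ ⬝ᵥ A *ᵥ c = -1) (n : ℤ) :
    (c + n • δ) ⬝ᵥ A *ᵥ (c + n • δ) = c ⬝ᵥ A *ᵥ c - 2 * n := by
  rw [norm_add hsymm, mulVec_smul, dotProduct_smul, dotProduct_smul, smul_dotProduct,
    dotProduct_mulVec_comm hsymm c δ, hδ, hc]
  simp
  ring

theorem IsExtremal.reflect (hc : IsExtremal A δ c) (hβ : δ ⬝ᵥ A *ᵥ β = 0)
    (hβ2 : β ⬝ᵥ A *ᵥ β = 2) : IsExtremal A δ (c + β + (c ⬝ᵥ A *ᵥ β + 1) • δ) := by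
  have hlevel : δ ⬝ᵥ A *ᵥ (c + β) = -1 := by
    rw [mulVec_add, dotProduct_add, hc.level, hβ, add_zero]
  refine ⟨?_, ?_⟩
  · rw [mulVec_add, dotProduct_add, hlevel, mulVec_smul, dotProduct_smul, hδ, smul_zero, add_zero]
  · rw [norm_add_zsmul_of_level_one hsymm hδ hlevel, norm_add hsymm, hc.norm, hβ2]
    ring

end Extremal

namespace ChevalleyGenerators

variable {K : Type*} [Field K] {ι : Type*} [DecidableEq ι] [Fintype ι] {A : Matrix ι ι ℤ}
  {L : Type*} [LieRing L] [LieAlgebra K L] (G : ChevalleyGenerators K A L) {δ β c : ι → ℤ}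

/-! ### Affine `sl₂`s acting on the part of level one -/

/-- An affine `sl₂` inside a Kac–Moody algebra attached to the real root `β`, whose loop variable
has the weight `δ`. -/
structure RootLoopSl2 (δ β : ι → ℤ) extends AffineSl2 K (G.coroot δ) where
  h_zero : h 0 = G.coroot β
  x_mem (n : ℤ) : x n ∈ G.weightSpace (n • δ + β)
  y_mem (n : ℤ) : y n ∈ G.weightSpace (n • δ - β)

/-- The part of level one, on which the central element `G.coroot δ` of the loop realisation acts
by `-1`. -/
def levelOne (δ : ι → ℤ) : Submodule K L := (ad K L (G.coroot δ)).eigenspace (-1)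

variable {G}

/-- A loop realisation at the node `i` as one attached to the simple root of `i`. -/
def LoopSl2.toRootLoopSl2 {i : ι} (P : G.LoopSl2 δ i) : G.RootLoopSl2 δ (Pi.single i 1) where
  toAffineSl2 := P.toAffineSl2
  h_zero := by rw [P.h_zero, coroot_single]
  x_mem := P.x_mem
  y_mem := P.y_mem

theorem mem_levelOne_iff {x : L} : x ∈ G.levelOne δ ↔ ⁅G.coroot δ, x⁆ = -x := by
  simp [levelOne]

theorem mem_levelOne_of_mem_weightSpace (hc : δ ⬝ᵥ A *ᵥ c = -1) {x : L}
    (hx : x ∈ G.weightSpace c) : x ∈ G.levelOne δ := by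
  rw [mem_levelOne_iff, coroot_lie G hx, hc]
  simp

/-- The action on the part of level one of an element commuting with its grading element. -/
def levelOneAction {y : L} (hy : ⁅G.coroot δ, y⁆ = 0) : G.levelOne δ →ₗ[K] G.levelOne δ :=
  (ad K L y).restrict fun x hx => by
    rw [mem_levelOne_iff] at hx ⊢
    rw [ad_apply, leibniz_lie, hy, hx, zero_lie, zero_add, lie_neg]

@[simp] theorem coe_levelOneAction {y : L} (hy : ⁅G.coroot δ, y⁆ = 0) (w : G.levelOne δ) :
    (levelOneAction hy w : L) = ⁅y, (w : L)⁆ := rfl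

namespace RootLoopSl2

variable (R : G.RootLoopSl2 δ β)

/-- The Chevalley involution of an affine `sl₂`, which negates its root. -/
def neg : G.RootLoopSl2 δ (-β) where
  x := R.y
  y := R.x
  h n := -R.h n
  h_zero := by rw [R.h_zero, coroot_neg]
  x_mem n := by simpa [sub_eq_add_neg] using R.y_mem n
  y_mem n := by simpa [sub_eq_add_neg] using R.x_mem n
  lie_x_y a b := by
    rw [← lie_skew, R.lie_x_y, add_comm b a]
    split
    · rw [show b = -a by omega]
      push_cast
      module
    · simp
  lie_h_x a b := by rw [neg_lie, R.lie_h_y]; simp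
  lie_h_y a b := by rw [neg_lie, R.lie_h_x]; simp

theorem h_mem (n : ℤ) : R.h n ∈ G.weightSpace (n • δ) := by
  rw [R.h_eq_lie]
  exact lie_mem_weightSpace (R.x_mem 0) (R.y_mem n) (by module)

section

variable (hδ : δ ⬝ᵥ A *ᵥ δ = 0) (hβ : δ ⬝ᵥ A *ᵥ β = 0)

include hδ

theorem coroot_lie_h (n : ℤ) : ⁅G.coroot δ, R.h n⁆ = 0 :=
  coroot_lie_zsmul_add (β := 0) hδ (by simp) (by simpa using R.h_mem n)

include hβ

theorem coroot_lie_x (n : ℤ) : ⁅G.coroot δ, R.x n⁆ = 0 := coroot_lie_zsmul_add hδ hβ (R.x_mem n)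

theorem coroot_lie_y (n : ℤ) : ⁅G.coroot δ, R.y n⁆ = 0 :=
  R.neg.coroot_lie_x hδ (by simp [mulVec_neg, hβ]) n

/-- The modes of `R.x` on the part of level one, shifted by `p`; the weight of the loop variable
raises the degree, so that nonnegative modes annihilate extremal vectors. -/
def xMode (p n : ℤ) : G.levelOne δ →ₗ[K] G.levelOne δ :=
  levelOneAction (R.coroot_lie_x hδ hβ (p - n))

/-- The modes of `R.y` on the part of level one, shifted by `-p`. -/
def yMode (p n : ℤ) : G.levelOne δ →ₗ[K] G.levelOne δ :=
  levelOneAction (R.coroot_lie_y hδ hβ (-n - p))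

omit hβ in
/-- The modes of `R.h` on the part of level one, with zero mode shifted by `-p`. -/
def hMode (p n : ℤ) : G.levelOne δ →ₗ[K] G.levelOne δ :=
  levelOneAction (R.coroot_lie_h hδ (-n)) - if n = 0 then (p : K) • LinearMap.id else 0

theorem yMode_xMode (p a b : ℤ) (w : G.levelOne δ) :
    R.yMode hδ hβ p b (R.xMode hδ hβ p a w) = R.xMode hδ hβ p a (R.yMode hδ hβ p b w) -
      R.hMode hδ p (a + b) w - if a + b = 0 then (a : K) • w else 0 := by
  have hw := mem_levelOne_iff.1 w.2
  apply Subtype.ext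
  simp only [xMode, yMode, hMode, LinearMap.sub_apply, Submodule.coe_sub, coe_levelOneAction]
  rw [leibniz_lie, ← lie_skew (R.y _), R.lie_x_y, show p - a + (-b - p) = -(a + b) by ring]
  by_cases h : a + b = 0
  · simp only [h, neg_zero, if_true, neg_lie, add_lie, smul_lie, hw, LinearMap.smul_apply,
      LinearMap.id_apply, Submodule.coe_smul]
    push_cast
    module
  · rw [if_neg (by omega), if_neg h, if_neg h, add_zero, neg_lie]
    simp only [LinearMap.zero_apply, Submodule.coe_zero, sub_zero]
    abel

omit hβ in
theorem hMode_hMode (p m n : ℤ) (w : G.levelOne δ) :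
    R.hMode hδ p m (R.hMode hδ p n w) =
      R.hMode hδ p n (R.hMode hδ p m w) + if m + n = 0 then (2 * m : K) • w else 0 := by
  have hw := mem_levelOne_iff.1 w.2
  have hh : ⁅R.h (-m), ⁅R.h (-n), (w : L)⁆⁆ = ⁅R.h (-n), ⁅R.h (-m), (w : L)⁆⁆ +
      (if m + n = 0 then (2 * m : K) else 0) • (w : L) := by
    rw [leibniz_lie, R.lie_h_h, add_comm]
    by_cases h : m + n = 0
    · rw [if_pos (by omega), if_pos h, smul_lie, hw]
      push_cast
      module
    · rw [if_neg (by omega), if_neg h, zero_lie, zero_smul]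
  apply Subtype.ext
  simp only [hMode, LinearMap.sub_apply, Submodule.coe_sub, Submodule.coe_add,
    coe_levelOneAction, map_sub, hh]
  split_ifs <;> simp <;> abel

end

theorem isLevelOneAction [CharZero K] (hA : Function.Injective A.mulVec) (hsymm : A.IsSymm)
    (hdiag : ∀ i, A i i = 2) (hδ : δ ⬝ᵥ A *ᵥ δ = 0) (hβ : δ ⬝ᵥ A *ᵥ β = 0)
    (hβ2 : β ⬝ᵥ A *ᵥ β = 2) (p : ℤ) :
    IsLevelOneAction (R.xMode hδ hβ p) (R.yMode hδ hβ p) (R.hMode hδ p) where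
  f_e := R.yMode_xMode hδ hβ p
  h_e m n w := by
    apply Subtype.ext
    simp only [xMode, hMode, LinearMap.sub_apply, Submodule.coe_sub, Submodule.coe_add,
      Submodule.coe_smul, coe_levelOneAction, map_sub]
    rw [leibniz_lie, R.lie_h_x, show -m + (p - n) = p - (m + n) by ring]
    split <;> simp <;> abel
  f_h m n w := by
    apply Subtype.ext
    simp only [yMode, hMode, LinearMap.sub_apply, Submodule.coe_sub, Submodule.coe_add,
      Submodule.coe_smul, coe_levelOneAction, map_sub]
    rw [leibniz_lie, ← lie_skew (R.y _), R.lie_h_y, show -m + (-n - p) = -(m + n) - p by ring]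
    split <;> simp <;> abel
  h_h := R.hMode_hMode hδ p
  e_e a b w := by
    apply Subtype.ext
    simp only [xMode, coe_levelOneAction]
    rw [leibniz_lie, lie_eq_zero_of_two_lt_zsmul_add hA hsymm hdiag hδ hβ hβ (R.x_mem _)
      (R.x_mem _) (by rw [hβ2]; norm_num), zero_lie, zero_add]

end RootLoopSl2

section Extremal

variable [CharZero K] (hA : Function.Injective A.mulVec) (hsymm : A.IsSymm)
  (hdiag : ∀ i, A i i = 2) (hδ : δ ⬝ᵥ A *ᵥ δ = 0) (hβ : δ ⬝ᵥ A *ᵥ β = 0)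

include hA hsymm hdiag hδ hβ

theorem lie_eq_zero_of_isExtremal (hc : IsExtremal A δ c) {n : ℤ} {x v : L}
    (hx : x ∈ G.weightSpace (n • δ + β)) (hv : v ∈ G.weightSpace c)
    (h : 2 * n < 2 * (c ⬝ᵥ A *ᵥ β) + β ⬝ᵥ A *ᵥ β) : ⁅x, v⁆ = 0 := by
  refine G.lie_eq_zero_of_two_lt hA hsymm hdiag hx hv ?_
  rw [norm_zsmul_add hsymm hδ hβ, add_dotProduct, smul_dotProduct, hc.level, hc.norm,
    dotProduct_mulVec_comm hsymm β c, smul_eq_mul]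
  linarith

namespace RootLoopSl2

variable (hβ2 : β ⬝ᵥ A *ᵥ β = 2) (R : G.RootLoopSl2 δ β) (hc : IsExtremal A δ c) {v : L}
  (hv : v ∈ G.weightSpace c)

omit [CharZero K] hA hsymm hdiag hδ hβ in
include hv in
theorem lie_x_mem_weightSpace_reflect :
    ⁅R.x (c ⬝ᵥ A *ᵥ β + 1), v⁆ ∈ G.weightSpace (c + β + (c ⬝ᵥ A *ᵥ β + 1) • δ) :=
  lie_mem_weightSpace (R.x_mem _) hv (by abel)

include hc hv

omit hβ in
theorem lie_h_eq_zero {n : ℤ} (hn : n < 0) : ⁅R.h n, v⁆ = 0 := by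
  refine lie_eq_zero_of_isExtremal hA hsymm hdiag hδ (β := 0) (n := n) (by simp) hc ?_ hv ?_
  · simpa using R.h_mem n
  · rw [mulVec_zero, dotProduct_zero, dotProduct_zero]
    omega

include hβ2

theorem lie_y_eq_zero {n : ℤ} (hn : n + c ⬝ᵥ A *ᵥ β < 1) : ⁅R.y n, v⁆ = 0 := by
  refine lie_eq_zero_of_isExtremal hA hsymm hdiag hδ (β := -β) (by simp [mulVec_neg, hβ]) hc
    (R.neg.x_mem n) hv ?_
  simp only [mulVec_neg, dotProduct_neg, neg_dotProduct, hβ2]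
  omega

theorem lie_x_ne_zero (hv0 : v ≠ 0) : ⁅R.x (c ⬝ᵥ A *ᵥ β + 1), v⁆ ≠ 0 := fun h => by
  have hxy : ⁅⁅R.x (c ⬝ᵥ A *ᵥ β + 1), R.y (-(c ⬝ᵥ A *ᵥ β + 1))⁆, v⁆ = 0 := by
    rw [lie_lie, h, R.lie_y_eq_zero hA hsymm hdiag hδ hβ hβ2 hc hv (by omega), lie_zero, lie_zero,
      sub_zero]
  rw [R.lie_x_y, add_neg_cancel, if_pos rfl, add_lie, R.h_zero, coroot_lie G hv, smul_lie,
    coroot_lie G hv, hc.level, dotProduct_mulVec_comm hsymm β c] at hxy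
  refine hv0 (neg_eq_zero.1 (Eq.trans ?_ hxy))
  push_cast
  module

theorem isLevelOneVacuum : IsLevelOneVacuum (R.xMode hδ hβ (c ⬝ᵥ A *ᵥ β))
    (R.yMode hδ hβ (c ⬝ᵥ A *ᵥ β)) (R.hMode hδ (c ⬝ᵥ A *ᵥ β))
    ⟨v, mem_levelOne_of_mem_weightSpace hc.level hv⟩ where
  toIsLevelOneAction := R.isLevelOneAction hA hsymm hdiag hδ hβ hβ2 _
  e_vacuum n hn := Subtype.ext <|
    lie_eq_zero_of_isExtremal hA hsymm hdiag hδ hβ hc (R.x_mem _) hv (by omega)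
  f_vacuum n hn := Subtype.ext <|
    R.lie_y_eq_zero hA hsymm hdiag hδ hβ hβ2 hc hv (by omega)
  h_vacuum n hn := Subtype.ext <| by
    simp only [hMode, LinearMap.sub_apply, Submodule.coe_sub, coe_levelOneAction]
    obtain rfl | hn0 := eq_or_ne n 0
    · simp [R.h_zero, coroot_lie G hv, dotProduct_mulVec_comm hsymm β c]
    · simp [hn0, R.lie_h_eq_zero hA hsymm hdiag hδ hc hv (by omega : -n < 0)]
  e_e_vacuum := Subtype.ext <| by
    simp only [xMode, coe_levelOneAction, sub_neg_eq_add]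
    refine lie_eq_zero_of_isExtremal hA hsymm hdiag hδ hβ (hc.reflect hsymm hδ hβ hβ2) (R.x_mem _)
      (R.lie_x_mem_weightSpace_reflect hv) ?_
    rw [add_dotProduct, add_dotProduct, smul_dotProduct, hβ, hβ2, smul_zero]
    omega

theorem lie_x_mem {W : Submodule K L} (hx : ⁅R.x (c ⬝ᵥ A *ᵥ β + 1), v⁆ ∈ W)
    (hW : ∀ k : ℕ, R.h (k + 1) ∈ lieStabilizer W) (n : ℤ) : ⁅R.x n, v⁆ ∈ W := by
  have hmem := (R.isLevelOneVacuum hA hsymm hdiag hδ hβ hβ2 hc hv).e_vacuum_mem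
    (W := W.comap (G.levelOne δ).subtype) (by simpa [xMode] using hx) (fun k w hw => by
      simpa [hMode, show (-1 - k : ℤ) ≠ 0 by omega, neg_add_eq_sub, add_comm] using hW k w hw)
    (c ⬝ᵥ A *ᵥ β - n)
  simpa [xMode] using hmem

end RootLoopSl2

end Extremal

end ChevalleyGenerators

/-! ### Fock spaces -/

/-- The degree of a monomial in creation operators, the pair `(j, n)` standing for the one of degree
`n + 1` at the node `j`. -/
def fockDegree {J : Type*} (s : Multiset (J × ℕ)) : ℕ := (s.map fun a => a.2 + 1).sum

section

variable {J : Type*}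

@[simp] theorem fockDegree_zero : fockDegree (0 : Multiset (J × ℕ)) = 0 := rfl

@[simp] theorem fockDegree_cons (a : J × ℕ) (s : Multiset (J × ℕ)) :
    fockDegree (a ::ₘ s) = a.2 + 1 + fockDegree s := by
  simp [fockDegree]

theorem fockDegree_eq_zero_iff {s : Multiset (J × ℕ)} : fockDegree s = 0 ↔ s = 0 := by
  refine ⟨fun h => ?_, fun h => h ▸ rfl⟩
  induction s using Multiset.induction_on with
  | empty => rfl
  | cons a s _ =>
    rw [fockDegree_cons] at h
    omega

end

namespace ChevalleyGenerators

variable {K : Type*} [Field K] {ι : Type*} [DecidableEq ι] [Fintype ι] {A : Matrix ι ι ℤ}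
  {L : Type*} [LieRing L] [LieAlgebra K L] {G : ChevalleyGenerators K A L} {δ c : ι → ℤ}
  {J : Type*} {node : J → ι}

namespace LoopSystem

variable (S : G.LoopSystem δ node)

/-- The creation operator of degree `a.2 + 1` at the node `a.1`. -/
def creation (a : J × ℕ) : L := (S.loop a.1).h (a.2 + 1)

theorem creation_lie_creation (a b : J × ℕ) : ⁅S.creation a, S.creation b⁆ = 0 := by
  rw [creation, creation, S.lie_h_h, if_neg (by omega)]

instance : LeftCommutative fun (a : J × ℕ) (x : L) => ⁅S.creation a, x⁆ :=
  ⟨fun a b x => by rw [leibniz_lie, S.creation_lie_creation, zero_lie, zero_add]⟩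

/-- The monomial `s` in the creation operators, applied to `x`. -/
def fockMonomial (s : Multiset (J × ℕ)) (x : L) : L :=
  s.foldr (fun a x => ⁅S.creation a, x⁆) x

@[simp] theorem fockMonomial_zero (x : L) : S.fockMonomial 0 x = x := rfl

@[simp] theorem fockMonomial_cons (a : J × ℕ) (s : Multiset (J × ℕ)) (x : L) :
    S.fockMonomial (a ::ₘ s) x = ⁅S.creation a, S.fockMonomial s x⁆ :=
  Multiset.foldr_cons _ _ _ _

theorem fockMonomial_smul (s : Multiset (J × ℕ)) (a : K) (x : L) :
    S.fockMonomial s (a • x) = a • S.fockMonomial s x := by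
  induction s using Multiset.induction_on with
  | empty => rfl
  | cons b s ih => rw [fockMonomial_cons, fockMonomial_cons, ih, lie_smul]

theorem fockMonomial_mem_weightSpace {x : L} (hx : x ∈ G.weightSpace c) (s : Multiset (J × ℕ)) :
    S.fockMonomial s x ∈ G.weightSpace (c + fockDegree s • δ) := by
  induction s using Multiset.induction_on with
  | empty => simpa using hx
  | cons a s ih =>
    rw [fockMonomial_cons]
    refine lie_mem_weightSpace ((S.loop a.1).h_mem _) ih ?_
    rw [fockDegree_cons]
    module

theorem coroot_lie_fockMonomial (hδ : δ ⬝ᵥ A *ᵥ δ = 0) (hc : δ ⬝ᵥ A *ᵥ c = -1) {x : L}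
    (hx : x ∈ G.weightSpace c) (s : Multiset (J × ℕ)) :
    ⁅G.coroot δ, S.fockMonomial s x⁆ = -S.fockMonomial s x := by
  rw [coroot_lie G (S.fockMonomial_mem_weightSpace hx s), mulVec_add, mulVec_smul, dotProduct_add,
    dotProduct_smul, hδ, hc]
  simp

variable [Fintype J] [DecidableEq J]

/-- The annihilation operator dual to `S.creation a`, built from the inverse of the Cartan
matrix. -/
noncomputable def annihilation (a : J × ℕ) : L :=
  ∑ j, (((A.submatrix node node).map (Int.cast : ℤ → K))⁻¹ a.1 j / (a.2 + 1)) •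
    (S.loop j).h (-(a.2 + 1))

theorem annihilation_mem_weightSpace (a : J × ℕ) :
    S.annihilation a ∈ G.weightSpace (-(a.2 + 1 : ℤ) • δ) :=
  sum_mem fun j _ => smul_mem _ _ ((S.loop j).h_mem _)

variable [CharZero K] (hdet : (A.submatrix node node).det ≠ 0)

include hdet

theorem annihilation_lie_creation (a b : J × ℕ) :
    ⁅S.annihilation a, S.creation b⁆ = if a = b then -G.coroot δ else 0 := by
  simp only [annihilation, creation, sum_lie, smul_lie, S.lie_h_h]
  obtain hab | hab := ne_or_eq a.2 b.2
  · rw [if_neg fun h => hab (congrArg Prod.snd h)]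
    refine Finset.sum_eq_zero fun j _ => ?_
    rw [if_neg (by omega), smul_zero]
  set C : Matrix J J K := (A.submatrix node node).map (Int.cast : ℤ → K) with hC
  have hCdet : IsUnit C.det := by
    rw [isUnit_iff_ne_zero, hC, ← Int.cast_det]
    exact_mod_cast hdet
  have hterm (j : J) : C⁻¹ a.1 j / (a.2 + 1) * ((-(a.2 + 1) * A (node j) (node b.1) : ℤ) : K) =
      -(C⁻¹ a.1 j * C j b.1) := by
    have : (a.2 + 1 : K) ≠ 0 := Nat.cast_add_one_ne_zero _
    simp only [hC, map_apply, submatrix_apply]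
    push_cast
    field_simp
  simp only [hab, neg_add_cancel, if_true, smul_smul] at hterm ⊢
  simp only [hterm, ← Finset.sum_smul, Finset.sum_neg_distrib]
  rw [← mul_apply, nonsing_inv_mul C hCdet, one_apply]
  simp only [Prod.ext_iff, hab, and_true]
  split <;> simp

variable (hA : Function.Injective A.mulVec) (hsymm : A.IsSymm) (hdiag : ∀ i, A i i = 2)
  (hδ : δ ⬝ᵥ A *ᵥ δ = 0) (hc : IsExtremal A δ c) {x : L} (hx : x ∈ G.weightSpace c)

include hA hsymm hdiag hδ hc hx

theorem annihilation_lie_fockMonomial (a : J × ℕ) (s : Multiset (J × ℕ)) :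
    ⁅S.annihilation a, S.fockMonomial s x⁆ = (s.count a : K) • S.fockMonomial (s.erase a) x := by
  induction s using Multiset.induction_on with
  | empty =>
    have : ⁅S.annihilation a, x⁆ = 0 :=
      lie_eq_zero_of_isExtremal hA hsymm hdiag hδ (β := 0) (n := -(a.2 + 1)) (by simp) hc
        (by simpa using S.annihilation_mem_weightSpace a) hx
        (by rw [mulVec_zero, dotProduct_zero, dotProduct_zero]; omega)
    simpa using this
  | cons b s ih =>
    rw [fockMonomial_cons, leibniz_lie, ih, S.annihilation_lie_creation hdet, lie_smul]
    obtain rfl | hab := eq_or_ne a b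
    · rw [if_pos rfl, neg_lie, S.coroot_lie_fockMonomial hδ hc.level hx, neg_neg,
        Multiset.erase_cons_head, Multiset.count_cons_self]
      by_cases ha : a ∈ s
      · rw [← fockMonomial_cons, Multiset.cons_erase ha]
        push_cast
        module
      · simp [Multiset.count_eq_zero_of_notMem ha]
    · rw [if_neg hab, zero_lie, zero_add, Multiset.count_cons_of_ne hab,
        Multiset.erase_cons_tail s hab.symm, fockMonomial_cons]

theorem exists_dual_fockMonomial (t : Multiset (J × ℕ)) : ∃ U : L →ₗ[K] L,
    ∀ s, fockDegree s = fockDegree t → U (S.fockMonomial s x) = if s = t then x else 0 := by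
  induction t using Multiset.induction_on with
  | empty =>
    refine ⟨LinearMap.id, fun s hs => ?_⟩
    rw [fockDegree_zero, fockDegree_eq_zero_iff] at hs
    simp [hs]
  | cons a t ih =>
    obtain ⟨U, hU⟩ := ih
    refine ⟨(t.count a + 1 : K)⁻¹ • U ∘ₗ ad K L (S.annihilation a), fun s hs => ?_⟩
    rw [LinearMap.smul_apply, LinearMap.comp_apply, ad_apply,
      S.annihilation_lie_fockMonomial hdet hA hsymm hdiag hδ hc hx, map_smul]
    by_cases ha : a ∈ s
    · obtain ⟨u, rfl⟩ := Multiset.exists_cons_of_mem ha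
      rw [fockDegree_cons, fockDegree_cons] at hs
      rw [Multiset.erase_cons_head, hU u (by omega), Multiset.count_cons_self]
      obtain rfl | hut := eq_or_ne u t
      · rw [if_pos rfl, if_pos rfl, Nat.cast_succ, smul_smul,
          inv_mul_cancel₀ (Nat.cast_add_one_ne_zero _), one_smul]
      · simp [hut]
    · rw [Multiset.count_eq_zero_of_notMem ha,
        if_neg fun h : s = a ::ₘ t => ha (h ▸ Multiset.mem_cons_self a t)]
      simp

theorem linearIndependent_fockMonomial (hx0 : x ≠ 0) (n : ℕ) :
    LinearIndependent K fun s : {s : Multiset (J × ℕ) // fockDegree s = n} =>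
      S.fockMonomial s x := by
  rw [linearIndependent_iff']
  intro T g hg t ht
  obtain ⟨U, hU⟩ := S.exists_dual_fockMonomial hdet hA hsymm hdiag hδ hc hx t
  have hUg := congrArg U hg
  rw [map_sum, Finset.sum_eq_single_of_mem t ht fun s _ hst => by
    rw [map_smul, hU s (s.2.trans t.2.symm), if_neg (Subtype.coe_ne_coe.2 hst), smul_zero],
    map_smul, hU t rfl, if_pos rfl, map_zero] at hUg
  exact (smul_eq_zero.1 hUg).resolve_right hx0

end LoopSystem

/-! ### Invariance of the Fock space -/

namespace LoopSystem

variable (S : G.LoopSystem δ node)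

/-- The elements of level one built by creation operators from the extremal root vectors. -/
def fockVector (p : Multiset (J × ℕ) × Σ c : {c // IsExtremal A δ c}, G.weightSpace c.1) : L :=
  S.fockMonomial p.1 p.2.2

/-- The sum of the Fock spaces over all extremal root vectors. -/
def fockSpace : Submodule K L := span K (Set.range S.fockVector)

theorem fockMonomial_mem_fockSpace (hc : IsExtremal A δ c) {x : L} (hx : x ∈ G.weightSpace c)
    (s : Multiset (J × ℕ)) : S.fockMonomial s x ∈ S.fockSpace :=
  subset_span ⟨(s, ⟨⟨c, hc⟩, ⟨x, hx⟩⟩), rfl⟩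

theorem mem_lieStabilizer_fockSpace {y : L}
    (h : ∀ ⦃c⦄, IsExtremal A δ c → ∀ x ∈ G.weightSpace c, ∀ s,
      ⁅y, S.fockMonomial s x⁆ ∈ S.fockSpace) :
    y ∈ lieStabilizer S.fockSpace := by
  refine mem_lieStabilizer_span ?_
  rintro _ ⟨⟨s, c, x⟩, rfl⟩
  exact h c.2 x x.2 s

theorem creation_mem_lieStabilizer (a : J × ℕ) : S.creation a ∈ lieStabilizer S.fockSpace :=
  S.mem_lieStabilizer_fockSpace fun _ hc _ hx s => by
    rw [← fockMonomial_cons]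
    exact S.fockMonomial_mem_fockSpace hc hx _

variable [CharZero K] (hA : Function.Injective A.mulVec) (hsymm : A.IsSymm)
  (hdiag : ∀ i, A i i = 2) (hδ : δ ⬝ᵥ A *ᵥ δ = 0)

include hA hsymm hdiag hδ

theorem h_mem_lieStabilizer (j : J) (n : ℤ) : (S.loop j).h n ∈ lieStabilizer S.fockSpace := by
  refine S.mem_lieStabilizer_fockSpace fun c hc x hx s => ?_
  obtain hn | rfl | hn := lt_trichotomy n 0
  · induction s using Multiset.induction_on with
    | empty =>
      have := (S.loop j).toRootLoopSl2.lie_h_eq_zero hA hsymm hdiag hδ hc hx hn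
      exact this ▸ zero_mem _
    | cons b s ih =>
      rw [fockMonomial_cons, leibniz_lie]
      refine add_mem ?_ (S.creation_mem_lieStabilizer b _ ih)
      rw [creation, S.lie_h_h]
      split
      · rw [smul_lie, S.coroot_lie_fockMonomial hδ hc.level hx]
        exact smul_mem _ _ (neg_mem (S.fockMonomial_mem_fockSpace hc hx s))
      · rw [zero_lie]
        exact zero_mem _
  · rw [(S.loop j).h_zero, mem_weightSpace_iff.1 (S.fockMonomial_mem_weightSpace hx s)]
    exact smul_mem _ _ (S.fockMonomial_mem_fockSpace hc hx s)
  · obtain ⟨k, rfl⟩ := Int.le.dest hn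
    have : S.creation (j, k) ∈ lieStabilizer S.fockSpace := S.creation_mem_lieStabilizer _
    rw [creation, add_comm] at this
    simpa using this _ (S.fockMonomial_mem_fockSpace hc hx s)

theorem x_mem_lieStabilizer {β : ι → ℤ} (hβ : δ ⬝ᵥ A *ᵥ β = 0) (hβ2 : β ⬝ᵥ A *ᵥ β = 2)
    (R : G.RootLoopSl2 δ β) (hR : ∀ n, R.h n ∈ lieStabilizer S.fockSpace)
    (hhx : ∀ j m n, ∃ a : K, ⁅(S.loop j).h m, R.x n⁆ = a • R.x (m + n)) (n : ℤ) :
    R.x n ∈ lieStabilizer S.fockSpace := by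
  refine S.mem_lieStabilizer_fockSpace fun c hc x hx s => ?_
  induction s using Multiset.induction_on generalizing n with
  | empty =>
    exact R.lie_x_mem hA hsymm hdiag hδ hβ hβ2 hc hx (S.fockMonomial_mem_fockSpace
      (hc.reflect hsymm hδ hβ hβ2) (R.lie_x_mem_weightSpace_reflect hx) 0) (fun k => hR _) n
  | cons b s ih =>
    obtain ⟨a, ha⟩ := hhx b.1 (b.2 + 1) n
    rw [fockMonomial_cons, leibniz_lie]
    refine add_mem ?_ (S.creation_mem_lieStabilizer b _ (ih n))
    rw [creation, ← lie_skew (R.x n), ha, neg_lie, smul_lie]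
    exact neg_mem (smul_mem _ _ (ih _))

end LoopSystem
end ChevalleyGenerators

/-! ### Over-extended diagrams -/

/-- A Cartan matrix obtained from a simply laced diagram of finite type, whose nodes are given by
`node`, by adding the affine node and then the over-extended one. The reflections in `reachable`
witness that the affine simple root is `δ` minus a root of the finite diagram. -/
structure OverextendedDiagram {ι : Type*} [Fintype ι] [DecidableEq ι] (A : Matrix ι ι ℤ)
    (J : Type*) [Fintype J] [LinearOrder J] where
  node : J → ι
  affineNode : ι
  overNode : ι
  δ : ι → ℤ
  isSymm : A.IsSymm
  diag (i : ι) : A i i = 2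
  eq_node (i : ι) : i ≠ overNode → i ≠ affineNode → ∃ j, node j = i
  node_ne_overNode (j : J) : node j ≠ overNode
  δ_affineNode : δ affineNode = 1
  δ_overNode : δ overNode = 0
  mulVec_δ : A *ᵥ δ = -Pi.single overNode 1
  posDef (y : J → ℤ) : y ≠ 0 → 0 < y ⬝ᵥ A.submatrix node node *ᵥ y
  parent : J → J
  eq_zero_or_parent_eq (i j : J) : i < j →
    A (node i) (node j) = 0 ∨ A (node i) (node j) = -1 ∧ parent j = i
  reachable (j : J) : Relation.ReflTransGen (ReflectionStep A (Set.range node))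
    (Pi.single affineNode 1) (δ - Pi.single (node j) 1)

namespace OverextendedDiagram

variable {ι : Type*} [Fintype ι] [DecidableEq ι] {A : Matrix ι ι ℤ} {J : Type*} [Fintype J]
  [LinearOrder J] (D : OverextendedDiagram A J) {c : ι → ℤ}

theorem δ_dotProduct_mulVec (c : ι → ℤ) : D.δ ⬝ᵥ A *ᵥ c = -c D.overNode := by
  rw [dotProduct_mulVec_comm D.isSymm, D.mulVec_δ, dotProduct_neg, dotProduct_single_one]

theorem norm_δ : D.δ ⬝ᵥ A *ᵥ D.δ = 0 := by
  rw [D.δ_dotProduct_mulVec, D.δ_overNode, neg_zero]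

theorem mulVec_δ_node (j : J) : (A *ᵥ D.δ) (D.node j) = 0 := by
  simp [D.mulVec_δ, D.node_ne_overNode]

include D in
theorem norm_single (i : ι) : (Pi.single i 1 : ι → ℤ) ⬝ᵥ A *ᵥ Pi.single i 1 = 2 := by
  simp [D.diag]

theorem δ_dotProduct_mulVec_node (j : J) : D.δ ⬝ᵥ A *ᵥ Pi.single (D.node j) 1 = 0 := by
  rw [D.δ_dotProduct_mulVec, Pi.single_eq_of_ne (D.node_ne_overNode j).symm, neg_zero]

theorem isExtremal_single_overNode : IsExtremal A D.δ (Pi.single D.overNode 1) where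
  level := by rw [D.δ_dotProduct_mulVec, Pi.single_eq_same]
  norm := D.norm_single _

theorem node_injective : Function.Injective D.node := by
  refine Function.Injective.of_lt_imp_ne fun i j hij h => ?_
  have := D.eq_zero_or_parent_eq i j hij
  rw [h, D.diag] at this
  omega

theorem eq_zsmul_δ_add (hc : c D.overNode = 0) :
    ∃ y : J → ℤ, c = c D.affineNode • D.δ + ∑ j, y j • Pi.single (D.node j) 1 := by
  refine ⟨fun j => c (D.node j) - c D.affineNode * D.δ (D.node j), ?_⟩
  ext i
  simp only [Pi.add_apply, Pi.smul_apply, Finset.sum_apply, smul_eq_mul, Pi.single_apply,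
    mul_ite, mul_one, mul_zero]
  by_cases hi : ∃ j, D.node j = i
  · obtain ⟨j, rfl⟩ := hi
    simp [D.node_injective.eq_iff]
  · rw [Finset.sum_eq_zero fun j _ => if_neg fun h => hi ⟨j, h.symm⟩]
    obtain rfl | hio := eq_or_ne i D.overNode
    · simp [hc, D.δ_overNode]
    · obtain rfl : i = D.affineNode := by_contra fun hia => hi (D.eq_node i hio hia)
      simp [D.δ_affineNode]

include D in
theorem nonempty : Nonempty J := by
  by_contra! hJ
  have hne : D.overNode ≠ D.affineNode := fun h => by
    simpa [← h, D.δ_overNode] using D.δ_affineNode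
  obtain ⟨y, hy⟩ := D.eq_zsmul_δ_add (c := Pi.single D.affineNode 1) (Pi.single_eq_of_ne hne 1)
  have hδ : Pi.single D.affineNode 1 = D.δ := by simpa using hy
  simpa [hδ, D.norm_δ] using D.norm_single D.affineNode

theorem norm_sum_node (y : J → ℤ) :
    (∑ j, y j • Pi.single (D.node j) 1) ⬝ᵥ A *ᵥ (∑ j, y j • Pi.single (D.node j) 1) =
      y ⬝ᵥ A.submatrix D.node D.node *ᵥ y := by
  simp only [mulVec_sum, mulVec_smul, mulVec_single_one, sum_dotProduct, smul_dotProduct,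
    single_one_dotProduct, Finset.sum_apply, Pi.smul_apply, col_apply, smul_eq_mul]
  simp only [dotProduct, mulVec, submatrix_apply, mul_comm]

theorem eq_zsmul_δ_of_norm_nonpos (hc : c D.overNode = 0) (hnorm : c ⬝ᵥ A *ᵥ c ≤ 0) :
    c = c D.affineNode • D.δ := by
  obtain ⟨y, hy⟩ := D.eq_zsmul_δ_add hc
  have hover : D.δ ⬝ᵥ A *ᵥ (∑ j, y j • Pi.single (D.node j) 1) = 0 := by
    simp [D.δ_dotProduct_mulVec, (D.node_ne_overNode _).symm]
  rw [hy, norm_zsmul_add D.isSymm D.norm_δ hover, D.norm_sum_node] at hnorm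
  have hy0 : y = 0 := by_contra fun h => hnorm.not_gt (D.posDef y h)
  simpa [hy0] using hy

include D in
theorem mulVec_injective : Function.Injective A.mulVec :=
  (injective_iff_map_eq_zero A.mulVecLin).2 fun x hx => by
    rw [mulVecLin_apply] at hx
    have hover : x D.overNode = 0 := by simpa [hx] using D.δ_dotProduct_mulVec x
    have hsmul := D.eq_zsmul_δ_of_norm_nonpos hover (by rw [hx, dotProduct_zero])
    rw [hsmul, mulVec_smul, D.mulVec_δ] at hx
    have haffine : x D.affineNode = 0 := by simpa using congrFun hx D.overNode
    rwa [haffine, zero_smul] at hsmul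

theorem det_submatrix_ne_zero : (A.submatrix D.node D.node).det ≠ 0 := fun h => by
  obtain ⟨y, hy, hker⟩ := exists_mulVec_eq_zero_iff.2 h
  simpa [hker] using D.posDef y hy

theorem single_ne_zsmul_δ (i : ι) (n : ℤ) : Pi.single i 1 ≠ n • D.δ := fun h => by
  have := D.norm_single i
  rw [h, mulVec_smul, dotProduct_smul, smul_dotProduct, D.norm_δ] at this
  simp at this

variable {K : Type*} [Field K] [CharZero K] {L : Type*} [LieRing L] [LieAlgebra K L]
  {G : ChevalleyGenerators K A L}

theorem nonempty_loopSystem (he : ∀ i, G.e i ≠ 0) : Nonempty (G.LoopSystem D.δ D.node) := by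
  refine ChevalleyGenerators.nonempty_loopSystem D.mulVec_injective D.isSymm D.diag D.norm_δ
    D.mulVec_δ_node he wellFounded_lt D.parent (fun i j hij => ?_) fun j =>
      (G.hasRootPair_single D.affineNode).of_reflTransGen D.mulVec_injective D.isSymm D.diag
        (D.norm_single _) (D.reachable j)
  obtain hij | hij := hij.lt_or_gt
  · exact (D.eq_zero_or_parent_eq i j hij).imp_right fun ⟨h, hp⟩ => ⟨h, .inr ⟨hp ▸ hij, hp⟩⟩
  · rw [← D.isSymm.apply]
    exact (D.eq_zero_or_parent_eq j i hij).imp_right fun ⟨h, hp⟩ => ⟨h, .inl ⟨hp ▸ hij, hp⟩⟩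

end OverextendedDiagram

theorem nonempty_basis_of_le_span {K V τ : Type*} [Field K] [AddCommGroup V] [Module K V]
    {W : Submodule K V} {v : τ → V} (hv : LinearIndependent K v) (hmem : ∀ t, v t ∈ W)
    (hspan : W ≤ span K (Set.range v)) : Nonempty (Module.Basis τ K W) :=
  ⟨(Module.Basis.span hv).map <| LinearEquiv.ofEq _ _ <|
    le_antisymm (span_le.2 (Set.range_subset_iff.2 hmem)) hspan⟩

namespace ChevalleyGenerators

variable {K : Type*} [Field K] [CharZero K] {ι : Type*} [DecidableEq ι] [Fintype ι]
  {A : Matrix ι ι ℤ} {L : Type*} [LieRing L] [LieAlgebra K L] {G : ChevalleyGenerators K A L}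
  {c : ι → ℤ}

/-- Some translate of `c` by a multiple of `δ` is an extremal root. -/
def HasExtremalRoot (G : ChevalleyGenerators K A L) (δ c : ι → ℤ) : Prop :=
  ∃ n : ℤ, IsExtremal A δ (c + n • δ) ∧ G.weightSpace (c + n • δ) ≠ ⊥

theorem HasExtremalRoot.add (hA : Function.Injective A.mulVec) (hsymm : A.IsSymm)
    (hdiag : ∀ i, A i i = 2) {δ β : ι → ℤ} (hδ : δ ⬝ᵥ A *ᵥ δ = 0) (hβ : δ ⬝ᵥ A *ᵥ β = 0)
    (hβ2 : β ⬝ᵥ A *ᵥ β = 2) (R : G.RootLoopSl2 δ β) (hc : HasExtremalRoot G δ c) :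
    HasExtremalRoot G δ (c + β) := by
  obtain ⟨n, hn, hbot⟩ := hc
  obtain ⟨v, hv, hv0⟩ := exists_mem_ne_zero_of_ne_bot hbot
  have hweight : c + n • δ + β + ((c + n • δ) ⬝ᵥ A *ᵥ β + 1) • δ =
      c + β + (n + (c + n • δ) ⬝ᵥ A *ᵥ β + 1) • δ := by module
  refine ⟨_, hweight ▸ hn.reflect hsymm hδ hβ hβ2, (Submodule.ne_bot_iff _).2 ⟨_, ?_,
    R.lie_x_ne_zero hA hsymm hdiag hδ hβ hβ2 hn hv hv0⟩⟩
  exact hweight ▸ R.lie_x_mem_weightSpace_reflect hv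

end ChevalleyGenerators

open ChevalleyGenerators

namespace OverextendedDiagram

variable {ι : Type*} [Fintype ι] [DecidableEq ι] {A : Matrix ι ι ℤ} {J : Type*} [Fintype J]
  [LinearOrder J] (D : OverextendedDiagram A J) {c : ι → ℤ}
  {K : Type*} [Field K] [CharZero K] {L : Type*} [LieRing L] [LieAlgebra K L]
  {G : ChevalleyGenerators K A L} (S : G.LoopSystem D.δ D.node)

include S

theorem e_mem (he : ∀ i, G.e i ≠ 0) {T : LieSubalgebra K L}
    (hx : ∀ j n, (S.loop j).x n ∈ T) (hy : ∀ j n, (S.loop j).y n ∈ T) (i : ι)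
    (hi : i ≠ D.overNode) : G.e i ∈ T := by
  have he_node (j : J) : G.e (D.node j) ∈ T := (S.loop j).x_zero ▸ hx j 0
  have hf_node (j : J) : G.f (D.node j) ∈ T := (S.loop j).y_zero ▸ hy j 0
  obtain rfl | hia := eq_or_ne i D.affineNode
  · obtain ⟨j⟩ := D.nonempty
    have hnorm := (norm_eq_of_reflTransGen D.isSymm D.diag (D.reachable j)).trans (D.norm_single _)
    refine weightSpace_le_of_reflTransGen D.mulVec_injective D.isSymm D.diag
      (Set.forall_mem_range.2 he_node) (Set.forall_mem_range.2 hf_node) (D.norm_single _)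
      (D.reachable j) (fun z hz => ?_) (G.e_mem_weightSpace _)
    obtain ⟨a, rfl⟩ := exists_eq_smul_of_rank_le_one
      (G.rank_weightSpace_le_one D.mulVec_injective D.isSymm D.diag hnorm) hz
      (by simpa using (S.loop j).y_mem 1)
      (LoopSl2.ne_zero D.isSymm D.norm_δ (D.mulVec_δ_node j) _ (he _) 1).2.1
    exact T.smul_mem a (hy j 1)
  · obtain ⟨j, rfl⟩ := D.eq_node i hi hia
    exact he_node j

/-! ### Level one -/

theorem x_y_mem_lieStabilizer_fockSpace (j : J) (n : ℤ) :
    (S.loop j).x n ∈ lieStabilizer S.fockSpace ∧ (S.loop j).y n ∈ lieStabilizer S.fockSpace := by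
  have hβ := D.δ_dotProduct_mulVec_node j
  have hh (n : ℤ) := S.h_mem_lieStabilizer D.mulVec_injective D.isSymm D.diag D.norm_δ j n
  exact ⟨S.x_mem_lieStabilizer D.mulVec_injective D.isSymm D.diag D.norm_δ hβ (D.norm_single _)
      (S.loop j).toRootLoopSl2 hh (fun i m n => ⟨_, S.lie_h_x i j m n⟩) n,
    S.x_mem_lieStabilizer D.mulVec_injective D.isSymm D.diag D.norm_δ
      (by simpa [mulVec_neg] using hβ) (by simpa [mulVec_neg] using D.norm_single _)
      (S.loop j).toRootLoopSl2.neg (fun n => neg_mem (hh n))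
      (fun i m n => ⟨_, S.lie_h_y i j m n⟩) n⟩

theorem weightSpace_le_fockSpace (he : ∀ i, G.e i ≠ 0) (hc : c D.overNode = 1) :
    G.weightSpace c ≤ S.fockSpace :=
  G.weightSpace_le_of_level_one D.mulVec_injective
    (D.e_mem S he (fun j n => (D.x_y_mem_lieStabilizer_fockSpace S j n).1)
      fun j n => (D.x_y_mem_lieStabilizer_fockSpace S j n).2)
    (S.fockMonomial_mem_fockSpace D.isExtremal_single_overNode (G.e_mem_weightSpace _) 0) hc

theorem hasExtremalRoot_single_overNode_add (he : G.e D.overNode ≠ 0) {v : ι → ℤ}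
    (hv : v ∈ AddSubgroup.closure (Set.range fun j => Pi.single (D.node j) 1)) :
    HasExtremalRoot G D.δ (Pi.single D.overNode 1 + v) := by
  induction hv using AddSubgroup.closure_induction_right with
  | zero =>
    refine ⟨0, ?_, ?_⟩ <;> rw [add_zero, zero_smul, add_zero]
    · exact D.isExtremal_single_overNode
    · exact (Submodule.ne_bot_iff _).2 ⟨_, G.e_mem_weightSpace _, he⟩
  | add_right v _ β hβ ih =>
    obtain ⟨j, rfl⟩ := hβ
    rw [← add_assoc]
    exact ih.add D.mulVec_injective D.isSymm D.diag D.norm_δ (D.δ_dotProduct_mulVec_node j)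
      (D.norm_single _) (S.loop j).toRootLoopSl2
  | add_neg_cancel v _ β hβ ih =>
    obtain ⟨j, rfl⟩ := hβ
    rw [← add_assoc]
    exact ih.add D.mulVec_injective D.isSymm D.diag D.norm_δ
      (by simpa [mulVec_neg] using D.δ_dotProduct_mulVec_node j)
      (by simpa [mulVec_neg] using D.norm_single _) (S.loop j).toRootLoopSl2.neg

theorem weightSpace_ne_bot_of_isExtremal (he : G.e D.overNode ≠ 0) (hc : IsExtremal A D.δ c) :
    G.weightSpace c ≠ ⊥ := by
  have hover : (c - Pi.single D.overNode 1 : ι → ℤ) D.overNode = 0 := by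
    have := hc.level
    rw [D.δ_dotProduct_mulVec] at this
    rw [Pi.sub_apply, Pi.single_eq_same]
    omega
  obtain ⟨y, hy⟩ := D.eq_zsmul_δ_add hover
  generalize (c - Pi.single D.overNode 1 : ι → ℤ) D.affineNode = m at hy
  have hv : ∑ j, y j • Pi.single (D.node j) 1 ∈
      AddSubgroup.closure (Set.range fun j => Pi.single (M := fun _ => ℤ) (D.node j) 1) :=
    sum_mem fun j _ =>
      AddSubgroup.zsmul_mem _ (AddSubgroup.subset_closure (Set.mem_range_self j)) (y j)
  obtain ⟨n, hn, hbot⟩ := D.hasExtremalRoot_single_overNode_add S he hv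
  have hc_eq : Pi.single D.overNode 1 + ∑ j, y j • Pi.single (D.node j) 1 + n • D.δ =
      c + (n - m) • D.δ := by
    rw [eq_add_of_sub_eq hy]
    module
  have hnorm := hn.norm
  rw [hc_eq, norm_add_zsmul_of_level_one D.isSymm D.norm_δ hc.level, hc.norm] at hnorm
  rwa [hc_eq, show n - m = 0 by omega, zero_smul, add_zero] at hbot

omit S in
theorem isExtremal_add_zsmul_iff (hc : c D.overNode = 1) {N : ℕ} (hN : c ⬝ᵥ A *ᵥ c = 2 - 2 * N)
    (n : ℤ) : IsExtremal A D.δ (c + n • D.δ) ↔ n = -N := by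
  have hlevel : D.δ ⬝ᵥ A *ᵥ c = -1 := by rw [D.δ_dotProduct_mulVec, hc]
  have hnorm := norm_add_zsmul_of_level_one D.isSymm D.norm_δ hlevel n
  rw [hN] at hnorm
  refine ⟨fun h => ?_, fun h => ⟨?_, by omega⟩⟩
  · have := h.norm
    omega
  · rw [mulVec_add, mulVec_smul, dotProduct_add, dotProduct_smul, D.norm_δ, hlevel, smul_zero,
      add_zero]

theorem nonempty_basis_weightSpace_of_level_one (he : ∀ i, G.e i ≠ 0)
    (hc : c D.overNode = 1) {N : ℕ} (hN : c ⬝ᵥ A *ᵥ c = 2 - 2 * N) :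
    Nonempty (Module.Basis {s : Multiset (J × ℕ) // fockDegree s = N} K (G.weightSpace c)) := by
  have hext := (D.isExtremal_add_zsmul_iff hc hN _).2 rfl
  obtain ⟨x, hx, hx0⟩ :=
    exists_mem_ne_zero_of_ne_bot (D.weightSpace_ne_bot_of_isExtremal S (he _) hext)
  have hspan {z : L} := mem_span_image_of_iSupIndep (x := z) (c := c)
    (G.iSupIndep_weightSpace D.mulVec_injective) (v := S.fockVector)
    (ω := fun p => (p.2.1 : ι → ℤ) + fockDegree p.1 • D.δ)
    (fun p => S.fockMonomial_mem_weightSpace p.2.2.2 p.1)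
  refine nonempty_basis_of_le_span (S.linearIndependent_fockMonomial D.det_submatrix_ne_zero
    D.mulVec_injective D.isSymm D.diag D.norm_δ hext hx hx0 N) (fun s => ?_)
    fun z hz => span_le.2 ?_ (hspan (D.weightSpace_le_fockSpace S he hc hz) hz)
  · have := S.fockMonomial_mem_weightSpace hx s
    rwa [s.2, neg_smul, natCast_zsmul, neg_add_cancel_right] at this
  · rintro _ ⟨⟨s, ⟨d, hd⟩, w, hw⟩, hp : d + fockDegree s • D.δ = c, rfl⟩
    have hd_eq : d = c + (-fockDegree s : ℤ) • D.δ := by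
      rw [← hp]
      module
    have hs : fockDegree s = N := by
      have := (D.isExtremal_add_zsmul_iff hc hN _).1 (hd_eq ▸ hd)
      omega
    obtain ⟨a, rfl⟩ := exists_eq_smul_of_rank_le_one
      (G.rank_weightSpace_le_one D.mulVec_injective D.isSymm D.diag hd.norm) hw
      (by rwa [hd_eq, hs]) hx0
    rw [SetLike.mem_coe, LoopSystem.fockVector, LoopSystem.fockMonomial_smul]
    exact smul_mem _ a (subset_span ⟨⟨s, hs⟩, rfl⟩)

end OverextendedDiagram

/-! ### Level zero -/

namespace ChevalleyGenerators

variable {K : Type*} [Field K] {ι : Type*} [DecidableEq ι] [Fintype ι] {A : Matrix ι ι ℤ}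
  {L : Type*} [LieRing L] [LieAlgebra K L] {G : ChevalleyGenerators K A L} {δ c : ι → ℤ}
  {J : Type*} {node : J → ι}

namespace LoopSystem

variable (S : G.LoopSystem δ node)

/-- The part of degree `n` of the Heisenberg algebra of a loop realisation. -/
def heisenberg (n : ℤ) : Submodule K L := span K (Set.range fun j => (S.loop j).h n)

/-- The elements whose components of weight `n • δ`, for `n ≠ 0`, lie in the Heisenberg algebra. -/
def loopSpace : Submodule K L :=
  span K (Set.range fun p : {p : (ι → ℤ) × L // p.2 ∈ G.weightSpace p.1 ∧
    ∀ n ≠ 0, p.1 = n • δ → p.2 ∈ S.heisenberg n} => p.1.2)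

variable {S}

theorem mem_loopSpace {x : L} (hx : x ∈ G.weightSpace c)
    (h : ∀ n ≠ 0, c = n • δ → x ∈ S.heisenberg n) : x ∈ S.loopSpace :=
  subset_span ⟨⟨(c, x), hx, h⟩, rfl⟩

theorem mem_heisenberg_of_mem_loopSpace [CharZero K] (hA : Function.Injective A.mulVec) {n : ℤ}
    (hn : n ≠ 0) {x : L} (hx : x ∈ G.weightSpace (n • δ)) (hxS : x ∈ S.loopSpace) :
    x ∈ S.heisenberg n := by
  refine span_le.2 ?_ (mem_span_image_of_iSupIndep (G.iSupIndep_weightSpace hA)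
    (ω := fun p => p.1.1) (fun p => p.2.1) hxS hx)
  rintro _ ⟨p, hp, rfl⟩
  exact p.2.2 n hn hp

variable (S)

theorem x_mem_lieStabilizer_loopSpace [CharZero K] (hA : Function.Injective A.mulVec)
    (hsymm : A.IsSymm) (hdiag : ∀ i, A i i = 2) (hδ : δ ⬝ᵥ A *ᵥ δ = 0) {β : ι → ℤ}
    (hβ : δ ⬝ᵥ A *ᵥ β = 0) (hβ2 : β ⬝ᵥ A *ᵥ β = 2) (R : G.RootLoopSl2 δ β)
    (hh : ∀ n, R.h n ∈ S.heisenberg n) (hy : ∀ n, R.y n ≠ 0) (n : ℤ) :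
    R.x n ∈ lieStabilizer S.loopSpace := by
  refine mem_lieStabilizer_span ?_
  rintro _ ⟨⟨⟨c, x⟩, hx, -⟩, rfl⟩
  refine mem_loopSpace (lie_mem_weightSpace (R.x_mem n) hx rfl) fun m hm hc => ?_
  have hc_eq : c = (m - n) • δ - β := by
    rw [show c = m • δ - (n • δ + β) from eq_sub_of_add_eq' hc]
    module
  have hnorm : c ⬝ᵥ A *ᵥ c = 2 := by
    rw [hc_eq, sub_eq_add_neg, norm_zsmul_add hsymm hδ (by simp [mulVec_neg, hβ])]
    simpa [mulVec_neg] using hβ2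
  obtain ⟨a, rfl⟩ := exists_eq_smul_of_rank_le_one (G.rank_weightSpace_le_one hA hsymm hdiag hnorm)
    hx (hc_eq ▸ R.y_mem (m - n)) (hy _)
  rw [lie_smul, R.lie_x_y, add_sub_cancel, if_neg hm, add_zero]
  exact smul_mem _ _ (hh m)

theorem linearIndependent_loop_h [CharZero K] [Fintype J] [DecidableEq J]
    (hdet : (A.submatrix node node).det ≠ 0) (hδ0 : G.coroot δ ≠ 0) (k : ℕ) :
    LinearIndependent K fun j => (S.loop j).h (k + 1) := by
  rw [Fintype.linearIndependent_iff]
  intro g hg i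
  have hdual (j : J) : ⁅S.annihilation (i, k), (S.loop j).h (k + 1)⁆ =
      if i = j then -G.coroot δ else 0 := by
    simpa [LoopSystem.creation] using S.annihilation_lie_creation hdet (i, k) (j, k)
  have := congrArg (⁅S.annihilation (i, k), ·⁆) hg
  simpa [lie_sum, hdual, hδ0] using this

end LoopSystem

end ChevalleyGenerators

open ChevalleyGenerators

namespace OverextendedDiagram

variable {ι : Type*} [Fintype ι] [DecidableEq ι] {A : Matrix ι ι ℤ} {J : Type*} [Fintype J]
  [LinearOrder J] (D : OverextendedDiagram A J)
  {K : Type*} [Field K] [CharZero K] {L : Type*} [LieRing L] [LieAlgebra K L]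
  {G : ChevalleyGenerators K A L} (S : G.LoopSystem D.δ D.node)

omit [CharZero K] in
theorem coroot_δ_ne_zero (he : G.e D.overNode ≠ 0) : G.coroot D.δ ≠ 0 := fun h => by
  have := coroot_lie G (b := D.δ) (G.e_mem_weightSpace D.overNode)
  rw [h, zero_lie, D.δ_dotProduct_mulVec] at this
  simp [he] at this

variable (he : ∀ i, G.e i ≠ 0)

include he

theorem x_y_mem_lieStabilizer_loopSpace (j : J) (n : ℤ) :
    (S.loop j).x n ∈ lieStabilizer S.loopSpace ∧ (S.loop j).y n ∈ lieStabilizer S.loopSpace := by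
  have hβ := D.δ_dotProduct_mulVec_node j
  have hh (n : ℤ) : (S.loop j).h n ∈ S.heisenberg n := subset_span ⟨j, rfl⟩
  have hne (n : ℤ) := LoopSl2.ne_zero D.isSymm D.norm_δ (D.mulVec_δ_node j) (S.loop j) (he _) n
  exact ⟨S.x_mem_lieStabilizer_loopSpace D.mulVec_injective D.isSymm D.diag D.norm_δ hβ
      (D.norm_single _) (S.loop j).toRootLoopSl2 hh (fun n => (hne n).2.1) n,
    S.x_mem_lieStabilizer_loopSpace D.mulVec_injective D.isSymm D.diag D.norm_δ
      (by simpa [mulVec_neg] using hβ) (by simpa [mulVec_neg] using D.norm_single _)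
      (S.loop j).toRootLoopSl2.neg (fun n => neg_mem (hh n)) (fun n => (hne n).1) n⟩

theorem weightSpace_zsmul_δ_le_heisenberg {n : ℤ} (hn : 0 < n) :
    G.weightSpace (n • D.δ) ≤ S.heisenberg n := by
  have hle : G.weightSpace (n • D.δ) ≤ S.loopSpace :=
    G.weightSpace_le_of_level_zero D.mulVec_injective
      (D.e_mem S he (fun j n => (D.x_y_mem_lieStabilizer_loopSpace S he j n).1)
        fun j n => (D.x_y_mem_lieStabilizer_loopSpace S he j n).2)
      (fun i _ => LoopSystem.mem_loopSpace (G.e_mem_weightSpace i) fun m _ h =>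
        absurd h (D.single_ne_zsmul_δ i m))
      ⟨D.affineNode, by simpa [D.δ_affineNode]⟩ (by simp [D.δ_overNode])
  exact fun x hx =>
    LoopSystem.mem_heisenberg_of_mem_loopSpace D.mulVec_injective hn.ne' hx (hle hx)

include S in
theorem nonempty_basis_weightSpace_zsmul_δ {n : ℤ} (hn : 0 < n) :
    Nonempty (Module.Basis J K (G.weightSpace (n • D.δ))) := by
  obtain ⟨k, rfl⟩ : ∃ k : ℕ, n = k + 1 := ⟨(n - 1).toNat, by omega⟩
  exact nonempty_basis_of_le_span
    (S.linearIndependent_loop_h D.det_submatrix_ne_zero (D.coroot_δ_ne_zero (he _)) k)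
    (fun j => (S.loop j).h_mem _) (D.weightSpace_zsmul_δ_le_heisenberg S he hn)

end OverextendedDiagram

/-! ### Coloured partitions -/

theorem map_sub_one_map_add_one {m : Multiset ℕ} (hm : ∀ x ∈ m, 0 < x) :
    (m.map (· - 1)).map (· + 1) = m := by
  rw [Multiset.map_map]
  exact (Multiset.map_congr rfl fun x hx => Nat.sub_add_cancel (hm x hx)).trans m.map_id

/-- Partitions of `n`, encoded by the multiset of their parts diminished by one. -/
def partitionEquiv (n : ℕ) : {m : Multiset ℕ // (m.map (· + 1)).sum = n} ≃ Nat.Partition n where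
  toFun m := ⟨m.1.map (· + 1), by simp, m.2⟩
  invFun P := ⟨P.parts.map (· - 1), by
    rw [map_sub_one_map_add_one fun _ => P.parts_pos, P.parts_sum]⟩
  left_inv m := by simp
  right_inv P := Nat.Partition.ext (map_sub_one_map_add_one fun _ => P.parts_pos)

/-- A multiset of coloured numbers, split by colour. -/
noncomputable def colorEquiv (J : Type*) [Fintype J] [DecidableEq J] :
    Multiset (J × ℕ) ≃+ (J → Multiset ℕ) :=
  Multiset.toFinsupp.trans <| Finsupp.curryAddEquiv.trans <| Finsupp.addEquivFunOnFinite.trans <|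
    AddEquiv.piCongrRight fun _ => Multiset.toFinsupp.symm

theorem colorEquiv_singleton {J : Type*} [Fintype J] [DecidableEq J] (a : J × ℕ) :
    colorEquiv J {a} = Pi.single a.1 {a.2} := by
  funext j
  change Finsupp.toMultiset (Finsupp.curryAddEquiv (Multiset.toFinsupp {a}) j) = _
  obtain rfl | hj := eq_or_ne j a.1 <;> simp [*]

theorem fockDegree_eq_sum_colorEquiv {J : Type*} [Fintype J] [DecidableEq J]
    (s : Multiset (J × ℕ)) : fockDegree s = ∑ j, ((colorEquiv J s j).map (· + 1)).sum := by
  induction s using Multiset.induction_on with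
  | empty => simp
  | cons a s ih =>
    have hsingle (j : J) : (((Pi.single a.1 {a.2} : J → Multiset ℕ) j).map (· + 1)).sum =
        if j = a.1 then a.2 + 1 else 0 := by
      obtain rfl | hj := eq_or_ne j a.1 <;> simp [*]
    rw [fockDegree_cons, ih]
    simp only [← Multiset.singleton_add, map_add, Pi.add_apply,
      colorEquiv_singleton, Multiset.map_add, Multiset.sum_add, Finset.sum_add_distrib, hsingle,
      Finset.sum_ite_eq', Finset.mem_univ, if_true]

theorem card_sum_eq {α : Type*} (w : α → ℕ) (ℓ n : ℕ) [∀ n, Finite {x // w x = n}] :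
    Nat.card {f : Fin ℓ → α // ∑ i, w (f i) = n} =
      ∑ k ∈ Finset.Nat.antidiagonalTuple ℓ n, ∏ i, Nat.card {x // w x = k i} := by
  have e' (k : Fin ℓ → ℕ) : {f : Fin ℓ → α // (fun i => w (f i)) = k} ≃ ∀ i, {x // w x = k i} :=
    (Equiv.subtypeEquivRight fun _ => funext_iff).trans
      (Equiv.subtypePiEquivPi (p := fun i x => w x = k i))
  have e := Equiv.sigmaSubtypeFiberEquivSubtype (fun (f : Fin ℓ → α) i => w (f i))
    (q := (· ∈ Finset.Nat.antidiagonalTuple ℓ n)) (p := fun f => ∑ i, w (f i) = n)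
    fun _ => Finset.Nat.mem_antidiagonalTuple.symm
  have (k : Fin ℓ → ℕ) := Finite.of_equiv _ (e' k).symm
  rw [← Nat.card_congr e, Nat.card_sigma]
  simp only [Nat.card_congr (e' _), Nat.card_pi]
  exact Finset.sum_coe_sort _ fun k : Fin ℓ → ℕ => ∏ i, Nat.card {x // w x = k i}

theorem card_fockDegree_eq (ℓ n : ℕ) :
    Nat.card {s : Multiset (Fin ℓ × ℕ) // fockDegree s = n} = pColored ℓ n := by
  have (n : ℕ) := Finite.of_equiv _ (partitionEquiv n).symm
  rw [Nat.card_congr ((colorEquiv (Fin ℓ)).toEquiv.subtypeEquiv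
      (q := fun f => ∑ i, ((f i).map (· + 1)).sum = n)
      fun s => by rw [fockDegree_eq_sum_colorEquiv]; rfl),
    card_sum_eq fun m : Multiset ℕ => (m.map (· + 1)).sum, pColored]
  simp only [Nat.card_congr (partitionEquiv _), Nat.card_eq_fintype_card, p]

theorem pColored_one (ℓ : ℕ) : pColored ℓ 1 = ℓ := by
  let f (j : Fin ℓ) : {s : Multiset (Fin ℓ × ℕ) // fockDegree s = 1} :=
    ⟨{(j, 0)}, by simp [fockDegree]⟩
  have hf : Function.Injective f := fun i j h => by simpa [f] using h
  rw [← card_fockDegree_eq, ← Nat.card_eq_of_bijective f ⟨hf, ?_⟩, Nat.card_fin]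
  rintro ⟨s, hs⟩
  obtain rfl | ⟨⟨j, n⟩, hj⟩ := s.empty_or_exists_mem
  · simp at hs
  obtain ⟨t, rfl⟩ := Multiset.exists_cons_of_mem hj
  rw [fockDegree_cons] at hs
  obtain rfl : t = 0 := fockDegree_eq_zero_iff.1 (by omega)
  obtain rfl : n = 0 := by omega
  exact ⟨j, rfl⟩

/-! ### Nonvanishing of the Chevalley generators -/

/-- Generalized Cartan matrices in the sense of Kac. -/
structure IsGeneralizedCartan {ι : Type*} (A : Matrix ι ι ℤ) : Prop where
  diag : ∀ i, A i i = 2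
  nonpos : ∀ i j, i ≠ j → A i j ≤ 0
  eq_zero_symm : ∀ i j, A i j = 0 → A j i = 0

attribute [local instance] LieRing.ofAssociativeRing

section Representation

variable {R L M : Type*} [CommRing R] [LieRing L] [LieAlgebra R L] [AddCommGroup M] [Module R M]

theorem pow_ad_apply_eq_zero {a b : Module.End R M} {v : M} (ha : a v = 0) (hb : b v = 0) (n : ℕ) :
    ((ad R (Module.End R M) a ^ n) b) v = 0 := by
  induction n with
  | zero => simpa using hb
  | succ n ih =>
    rw [pow_succ', Module.End.mul_apply, ad_apply, Ring.lie_def, LinearMap.sub_apply,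
      Module.End.mul_apply, Module.End.mul_apply, ih, ha, map_zero, map_zero, sub_zero]

theorem comp_pow_ad_eq_zero {a b : Module.End R M} {ε : M →ₗ[R] R} (ha : ε ∘ₗ a = 0)
    (hb : ε ∘ₗ b = 0) (n : ℕ) : ε ∘ₗ (ad R (Module.End R M) a ^ n) b = 0 := by
  induction n with
  | zero => simpa using hb
  | succ n ih =>
    rw [pow_succ', Module.End.mul_apply, ad_apply, Ring.lie_def, LinearMap.comp_sub,
      Module.End.mul_eq_comp, Module.End.mul_eq_comp, ← LinearMap.comp_assoc,
      ← LinearMap.comp_assoc, ih, ha, LinearMap.zero_comp, LinearMap.zero_comp, sub_zero]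

theorem map_pow_ad {L' : Type*} [LieRing L'] [LieAlgebra R L'] (φ : L →ₗ⁅R⁆ L') (x y : L) (n : ℕ) :
    φ ((ad R L x ^ n) y) = (ad R L' (φ x) ^ n) (φ y) := by
  induction n with
  | zero => rfl
  | succ n ih =>
    rw [pow_succ', pow_succ', Module.End.mul_apply, Module.End.mul_apply, ad_apply, ad_apply,
      LieHom.map_lie, ih]

variable [LieRingModule L M] [LieModule R L M]

/-- The representation on `W` of its stabilizer. -/
def lieStabilizerRep (W : Submodule R M) :
    lieStabilizer (L := L) W →ₗ⁅R⁆ Module.End R W where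
  toFun x := (LieModule.toEnd R L M x).restrict x.2
  map_add' x y := LinearMap.ext fun m => Subtype.ext (add_lie (x : L) y (m : M))
  map_smul' a x := LinearMap.ext fun m => Subtype.ext (smul_lie a (x : L) (m : M))
  map_lie' {x y} := LinearMap.ext fun m => Subtype.ext (lie_lie (x : L) y (m : M))

end Representation

namespace ChevalleyRelations

variable {K : Type*} [Field K] {ι : Type*} [DecidableEq ι] {A : Matrix ι ι ℤ}
  {L : Type*} [LieRing L] [LieAlgebra K L] (G : ChevalleyRelations K A L)

theorem lie_f_e (i j : ι) : ⁅G.f i, G.e j⁆ = if i = j then -G.h i else 0 :=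
  G.dual.lie_e_f i j

theorem lie_f_pow_ad_e [CharZero K] (hA : IsGeneralizedCartan A) {i j : ι} (hij : i ≠ j) (k : ι) :
    ⁅G.f k, (ad K L (G.e i) ^ (1 - A i j).toNat) (G.e j)⁆ = 0 := by
  obtain ⟨n, hn⟩ := Int.eq_ofNat_of_zero_le (neg_nonneg.2 (hA.nonpos i j hij))
  rw [show (1 - A i j).toNat = n + 1 by omega]
  obtain rfl | hki := eq_or_ne k i
  · obtain hh | hh := eq_or_ne (G.h k) 0
    · have he : G.e k = 0 := by
        have := G.lie_h_e k k
        rw [hh, zero_lie, hA.diag, eq_comm, smul_eq_zero] at this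
        exact this.resolve_left (by simp)
      simp [he]
    · have hweight : ⁅-G.h k, G.e j⁆ = (n : K) • G.e j := by
        rw [neg_lie, G.lie_h_e, ← neg_smul, ← Int.cast_neg, hn, Int.cast_natCast]
      have hfe : ⁅G.f k, G.e j⁆ = 0 := by simp [G.lie_f_e, hij]
      have hrel := sl2_lie_e_pow_succ_f (G.isSl2Triple (hA.diag k) hh).symm hweight n
      exact hrel.trans (by simp [hfe])
  · have hcomm : Commute (ad K L (G.f k)) (ad K L (G.e i)) := by
      have hfe : ⁅G.f k, G.e i⁆ = 0 := by simp [G.lie_f_e, hki]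
      rw [commute_iff_lie_eq, ← LieHom.map_lie, hfe, map_zero]
    rw [← ad_apply (R := K), ← Module.End.mul_apply, (hcomm.pow_right _).eq, Module.End.mul_apply,
      ad_apply, G.lie_f_e]
    split_ifs with hkj
    · subst hkj
      rw [pow_succ, Module.End.mul_apply, ad_apply, lie_neg, lie_skew, G.lie_h_e]
      cases n with
      | zero => simp [hA.eq_zero_symm i k (by simpa using hn)]
      | succ n => simp [pow_succ]
    · rw [map_zero]

variable {L' : Type*} [LieRing L'] [LieAlgebra K L']

/-- The image of the generators under a homomorphism. -/
def map (φ : L →ₗ⁅K⁆ L') : ChevalleyRelations K A L' where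
  e i := φ (G.e i)
  f i := φ (G.f i)
  h i := φ (G.h i)
  lie_h_h i j := by rw [← LieHom.map_lie, G.lie_h_h, map_zero]
  lie_e_f i j := by rw [← LieHom.map_lie, G.lie_e_f, apply_ite φ, map_zero]
  lie_h_e i j := by rw [← LieHom.map_lie, G.lie_h_e, map_smul]
  lie_h_f i j := by rw [← LieHom.map_lie, G.lie_h_f, map_neg, map_smul]

/-- The generators, as elements of a subalgebra containing them. -/
def codRestrict (S : LieSubalgebra K L) (he : ∀ i, G.e i ∈ S) (hf : ∀ i, G.f i ∈ S)
    (hh : ∀ i, G.h i ∈ S) : ChevalleyRelations K A S where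
  e i := ⟨G.e i, he i⟩
  f i := ⟨G.f i, hf i⟩
  h i := ⟨G.h i, hh i⟩
  lie_h_h i j := Subtype.ext (G.lie_h_h i j)
  lie_e_f i j := Subtype.ext <| (G.lie_e_f i j).trans (by split_ifs <;> rfl)
  lie_h_e i j := Subtype.ext (G.lie_h_e i j)
  lie_h_f i j := Subtype.ext (G.lie_h_f i j)

section HighestWeight

variable {M : Type*} [AddCommGroup M] [Module K M] [LieRingModule L M] {v : M}

/-- The vector `f j₁ ⋯ f jₙ v` for `w = [j₁, …, jₙ]`. -/
def lowerWord (v : M) (w : List ι) : M := w.foldr (fun i x => ⁅G.f i, x⁆) v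

/-- For a highest weight vector `v`, the submodule generated by it. -/
def lowerSpan (v : M) : Submodule K M := span K (Set.range (G.lowerWord v))

theorem lowerWord_mem_lowerSpan (w : List ι) : G.lowerWord v w ∈ G.lowerSpan v :=
  subset_span ⟨w, rfl⟩

theorem mem_lowerSpan_self (v : M) : v ∈ G.lowerSpan v := G.lowerWord_mem_lowerSpan []

variable [LieModule K L M]

theorem f_mem_lieStabilizer_lowerSpan (i : ι) : G.f i ∈ lieStabilizer (G.lowerSpan v) := by
  apply mem_lieStabilizer_span
  rintro _ ⟨w, rfl⟩
  exact G.lowerWord_mem_lowerSpan (i :: w)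

variable {μ : ι → K} (hv : ∀ i, ⁅G.h i, v⁆ = μ i • v)

include hv

theorem h_mem_lieStabilizer_lowerSpan (i : ι) : G.h i ∈ lieStabilizer (G.lowerSpan v) := by
  apply mem_lieStabilizer_span
  rintro _ ⟨w, rfl⟩
  induction w with
  | nil =>
    change ⁅G.h i, v⁆ ∈ _
    rw [hv]
    exact smul_mem _ _ (G.mem_lowerSpan_self v)
  | cons j w ih =>
    change ⁅G.h i, ⁅G.f j, G.lowerWord v w⁆⁆ ∈ _
    rw [leibniz_lie, G.lie_h_f, neg_lie, smul_lie]
    exact add_mem (neg_mem (smul_mem _ _ (G.lowerWord_mem_lowerSpan (j :: w))))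
      (G.f_mem_lieStabilizer_lowerSpan j _ ih)

theorem e_mem_lieStabilizer_lowerSpan (hev : ∀ i, ⁅G.e i, v⁆ = 0) (i : ι) :
    G.e i ∈ lieStabilizer (G.lowerSpan v) := by
  apply mem_lieStabilizer_span
  rintro _ ⟨w, rfl⟩
  induction w with
  | nil =>
    change ⁅G.e i, v⁆ ∈ _
    rw [hev]
    exact zero_mem _
  | cons j w ih =>
    change ⁅G.e i, ⁅G.f j, G.lowerWord v w⁆⁆ ∈ _
    rw [leibniz_lie, G.lie_e_f]
    refine add_mem ?_ (G.f_mem_lieStabilizer_lowerSpan j _ ih)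
    split_ifs
    · exact G.h_mem_lieStabilizer_lowerSpan hv i _ (G.lowerWord_mem_lowerSpan w)
    · rw [zero_lie]
      exact zero_mem _

/-- The action of the generators on the submodule generated by a highest weight vector. -/
def lowerSpanRep (hev : ∀ i, ⁅G.e i, v⁆ = 0) :
    ChevalleyRelations K A (Module.End K (G.lowerSpan v)) :=
  (G.codRestrict _ (G.e_mem_lieStabilizer_lowerSpan hv hev) G.f_mem_lieStabilizer_lowerSpan
    (G.h_mem_lieStabilizer_lowerSpan hv)).map (lieStabilizerRep _)

theorem eq_zero_of_lie_lowerSpanRep_f (hev : ∀ i, ⁅G.e i, v⁆ = 0)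
    {t : Module.End K (G.lowerSpan v)}
    (ht : ∀ k, ⁅(G.lowerSpanRep hv hev).f k, t⁆ = 0)
    (htv : t ⟨v, G.mem_lowerSpan_self v⟩ = 0) : t = 0 := by
  have hword (w : List ι) : t ⟨G.lowerWord v w, G.lowerWord_mem_lowerSpan w⟩ = 0 := by
    induction w with
    | nil => exact htv
    | cons k w ih =>
      have hcomm : Commute ((G.lowerSpanRep hv hev).f k) t := commute_iff_lie_eq.2 (ht k)
      have := LinearMap.congr_fun hcomm.eq ⟨_, G.lowerWord_mem_lowerSpan w⟩
      rw [Module.End.mul_apply, ih, map_zero] at this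
      exact this.symm
  ext ⟨x, hx⟩
  congr 1
  change t ⟨x, hx⟩ = 0
  induction hx using span_induction with
  | mem x h =>
    obtain ⟨w, rfl⟩ := h
    exact hword w
  | zero => exact map_zero t
  | add x y hx hy ihx ihy =>
    exact (map_add t ⟨x, hx⟩ ⟨y, hy⟩).trans (by rw [ihx, ihy, add_zero])
  | smul a x hx ih => exact (map_smul t a ⟨x, hx⟩).trans (by rw [ih, smul_zero])

end HighestWeight

end ChevalleyRelations

section Coverma

variable (K : Type*) [Field K] {ι : Type*} (A : Matrix ι ι ℤ)

/-- The label at `i` of the weight `ρ - ∑ αⱼ`, the sum being over the letters `j` of `w`. -/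
def vermaLabel (i : ι) (w : List ι) : K := 1 - (w.map fun j => (A i j : K)).sum

theorem vermaLabel_cons (i j : ι) (w : List ι) :
    vermaLabel K A i (j :: w) = vermaLabel K A i w - A i j := by
  rw [vermaLabel, vermaLabel, List.map_cons, List.sum_cons]
  ring

/-- The operator `h i` on functions of words. -/
def covermaH (i : ι) : Module.End K (List ι → K) :=
  LinearMap.pi fun w => vermaLabel K A i w • LinearMap.proj w

variable [DecidableEq ι]

/-- The value of `f i φ` at a word. The recursion is forced by the brackets `⁅e j, f i⁆`. -/
def covermaFAux (i : ι) : List ι → (List ι → K) →ₗ[K] K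
  | [] => 0
  | j :: w => covermaFAux i w ∘ₗ LinearMap.funLeft K K (List.cons j) +
      if j = i then vermaLabel K A j w • LinearMap.proj w else 0

theorem covermaFAux_covermaH (i j : ι) (w : List ι) (φ : List ι → K) :
    covermaFAux K A j w (covermaH K A i φ)
      = (vermaLabel K A i w + A i j) * covermaFAux K A j w φ := by
  induction w generalizing φ with
  | nil => simp [covermaFAux]
  | cons k w ih =>
    have hcomm : LinearMap.funLeft K K (List.cons k) (covermaH K A i φ)
        = covermaH K A i (LinearMap.funLeft K K (List.cons k) φ)
          - (A i k : K) • LinearMap.funLeft K K (List.cons k) φ := by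
      ext u
      simp [covermaH, vermaLabel_cons, LinearMap.funLeft]
      ring
    simp only [covermaFAux, LinearMap.add_apply, LinearMap.comp_apply, hcomm, map_sub, ih,
      map_smul, vermaLabel_cons, smul_eq_mul]
    split_ifs with hkj
    · subst hkj
      simp [covermaH]
      ring
    · simp
      ring

/-- The dual of the Verma module of highest weight `ρ`. As the Verma module has a basis indexed by
words in the `f i`, this is the space of functions of words, on which `e i` is the transpose of
prepending the letter `i`. -/
def coverma : ChevalleyRelations K A (Module.End K (List ι → K)) where
  e i := LinearMap.funLeft K K (List.cons i)
  f i := LinearMap.pi (covermaFAux K A i)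
  h := covermaH K A
  lie_h_h i j := by
    ext φ w
    simp [Ring.lie_def, covermaH]
    ring
  lie_e_f i j := by
    ext φ w
    simp only [Ring.lie_def, LinearMap.sub_apply, Module.End.mul_apply, LinearMap.funLeft_apply,
      LinearMap.pi_apply, covermaFAux, LinearMap.add_apply, LinearMap.comp_apply, Pi.sub_apply,
      add_sub_cancel_left]
    split_ifs <;> rfl
  lie_h_e i j := by
    ext φ w
    simp [Ring.lie_def, LinearMap.funLeft, covermaH, vermaLabel_cons]
    ring
  lie_h_f i j := by
    ext φ w
    have h := covermaFAux_covermaH K A i j w φ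
    simp only [Ring.lie_def, LinearMap.sub_apply, Module.End.mul_apply, LinearMap.pi_apply,
      Pi.sub_apply, h, LinearMap.neg_apply, LinearMap.smul_apply, Pi.neg_apply, Pi.smul_apply,
      smul_eq_mul]
    simp [covermaH]
    ring

variable (ι) in
/-- The highest weight vector of the dual Verma module. -/
def vacuum : List ι → K := Pi.single [] 1

theorem coverma_h_vacuum (i : ι) :
    ⁅(coverma K A).h i, vacuum K ι⁆ = (1 : K) • vacuum K ι := by
  ext w
  cases w <;> simp [coverma, covermaH, vacuum, vermaLabel]

theorem coverma_e_vacuum (i : ι) : ⁅(coverma K A).e i, vacuum K ι⁆ = 0 := by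
  ext w
  simp [coverma, vacuum]

/-- The irreducible representation of highest weight `ρ`, the socle of the dual Verma module. -/
def irreducibleRep : ChevalleyRelations K A (Module.End K ((coverma K A).lowerSpan (vacuum K ι))) :=
  (coverma K A).lowerSpanRep (coverma_h_vacuum K A) (coverma_e_vacuum K A)

/-- The coefficient of the highest weight vector. -/
def vacuumCoeff : (coverma K A).lowerSpan (vacuum K ι) →ₗ[K] K :=
  LinearMap.proj [] ∘ₗ Submodule.subtype _

variable {K A}

theorem eq_zero_of_lie_irreducibleRep_e {t : Module.End K ((coverma K A).lowerSpan (vacuum K ι))}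
    (ht : ∀ k, ⁅(irreducibleRep K A).e k, t⁆ = 0) (hε : vacuumCoeff K A ∘ₗ t = 0) : t = 0 := by
  have hcoeff (w : List ι) : ∀ x, (t x : List ι → K) w = 0 := by
    induction w with
    | nil => exact LinearMap.congr_fun hε
    | cons k w ih =>
      intro x
      have hcomm : (irreducibleRep K A).e k * t = t * (irreducibleRep K A).e k :=
        sub_eq_zero.1 (ht k)
      have := congrFun (congrArg Subtype.val (LinearMap.congr_fun hcomm x)) w
      exact this.trans (ih _)
  ext x w
  exact hcoeff w x

variable [CharZero K] (hA : IsGeneralizedCartan A)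

include hA

theorem irreducibleRep_serre_e (i j : ι) (hij : i ≠ j) :
    (ad K _ ((irreducibleRep K A).e i) ^ (1 - A i j).toNat) ((irreducibleRep K A).e j) = 0 := by
  refine (coverma K A).eq_zero_of_lie_lowerSpanRep_f (coverma_h_vacuum K A) (coverma_e_vacuum K A)
    ((irreducibleRep K A).lie_f_pow_ad_e hA hij) ?_
  have he (k : ι) : (irreducibleRep K A).e k ⟨vacuum K ι, (coverma K A).mem_lowerSpan_self _⟩ = 0 :=
    Subtype.ext (coverma_e_vacuum K A k)
  exact pow_ad_apply_eq_zero (he i) (he j) _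

theorem irreducibleRep_serre_f (i j : ι) (hij : i ≠ j) :
    (ad K _ ((irreducibleRep K A).f i) ^ (1 - A i j).toNat) ((irreducibleRep K A).f j) = 0 := by
  refine eq_zero_of_lie_irreducibleRep_e ((irreducibleRep K A).dual.lie_f_pow_ad_e hA hij) ?_
  have hf (k : ι) : vacuumCoeff K A ∘ₗ (irreducibleRep K A).f k = 0 := rfl
  exact comp_pow_ad_eq_zero (hf i) (hf j) _

omit [CharZero K] hA in
theorem irreducibleRep_e_ne_zero (i : ι) : (irreducibleRep K A).e i ≠ 0 := by
  intro h
  have hvac := (coverma K A).mem_lowerSpan_self (vacuum K ι)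
  have := congrArg (vacuumCoeff K A) (LinearMap.congr_fun h ((irreducibleRep K A).f i ⟨_, hvac⟩))
  have hone :
      vacuumCoeff K A ((irreducibleRep K A).e i ((irreducibleRep K A).f i ⟨_, hvac⟩)) = 1 := by
    change (coverma K A).f i (vacuum K ι) [i] = 1
    simp [coverma, covermaFAux, vermaLabel, vacuum]
  rw [hone] at this
  simp at this

end Coverma

section Presentation

variable {ℓ : ℕ} {A : Matrix (Fin ℓ) (Fin ℓ) ℤ} {L : Type*} [LieRing L] [LieAlgebra ℂ L]

/-- The homomorphism from the free Lie algebra determined by the generators. -/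
noncomputable def ChevalleyRelations.freeLift (G : ChevalleyRelations ℂ A L) :
    FreeLie ℓ →ₗ⁅ℂ⁆ L :=
  FreeLieAlgebra.lift ℂ fun
    | .e i => G.e i
    | .f i => G.f i
    | .h i => G.h i

theorem ChevalleyRelations.serreIdeal_le_ker_freeLift (G : ChevalleyRelations ℂ A L)
    (he : ∀ i j, i ≠ j → (ad ℂ L (G.e i) ^ (1 - A i j).toNat) (G.e j) = 0)
    (hf : ∀ i j, i ≠ j → (ad ℂ L (G.f i) ^ (1 - A i j).toNat) (G.f j) = 0) :
    serreIdeal A ≤ G.freeLift.ker := by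
  have hE (i : Fin ℓ) : G.freeLift (E i) = G.e i := FreeLieAlgebra.lift_of_apply ..
  have hF (i : Fin ℓ) : G.freeLift (F i) = G.f i := FreeLieAlgebra.lift_of_apply ..
  have hH (i : Fin ℓ) : G.freeLift (H i) = G.h i := FreeLieAlgebra.lift_of_apply ..
  rw [serreIdeal, LieSubmodule.lieSpan_le]
  rintro _ (((((⟨i, j, rfl⟩ | ⟨i, j, rfl⟩) | ⟨i, j, rfl⟩) | ⟨i, j, rfl⟩) | ⟨i, j, hij, rfl⟩) |
    ⟨i, j, hij, rfl⟩) <;> rw [SetLike.mem_coe, LieHom.mem_ker]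
  · rw [LieHom.map_lie, hH, hH, G.lie_h_h]
  · rw [map_sub, LieHom.map_lie, hE, hF, G.lie_e_f, apply_ite G.freeLift, hH, map_zero, sub_self]
  · rw [map_sub, LieHom.map_lie, map_smul, hH, hE, G.lie_h_e, sub_self]
  · rw [map_add, LieHom.map_lie, map_smul, hH, hF, G.lie_h_f, neg_add_cancel]
  · rw [map_pow_ad, hE, hE, he i j hij]
  · rw [map_pow_ad, hF, hF, hf i j hij]

theorem E_notMem_serreIdeal (hA : IsGeneralizedCartan A) (i : Fin ℓ) : E i ∉ serreIdeal A := by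
  intro h
  have hker := (irreducibleRep ℂ A).serreIdeal_le_ker_freeLift (irreducibleRep_serre_e hA)
    (irreducibleRep_serre_f hA) h
  rw [LieHom.mem_ker] at hker
  have hE : (irreducibleRep ℂ A).freeLift (E i) = (irreducibleRep ℂ A).e i :=
    FreeLieAlgebra.lift_of_apply ..
  exact irreducibleRep_e_ne_zero i (hE.symm.trans hker)

theorem eq_top_of_generators_mem (S : LieSubalgebra ℂ (FreeLie ℓ)) (hE : ∀ i, E i ∈ S)
    (hF : ∀ i, F i ∈ S) (hH : ∀ i, H i ∈ S) : S = ⊤ := by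
  let g : ChevalleyGen ℓ → S
    | .e i => ⟨E i, hE i⟩
    | .f i => ⟨F i, hF i⟩
    | .h i => ⟨H i, hH i⟩
  have hid : S.incl.comp (FreeLieAlgebra.lift ℂ g) = LieHom.id := by
    refine FreeLieAlgebra.hom_ext fun c => ?_
    rw [LieHom.comp_apply, FreeLieAlgebra.lift_of_apply]
    cases c <;> rfl
  refine eq_top_iff.2 fun x _ => ?_
  rw [← LieHom.id_apply (R := ℂ) x, ← hid]
  exact (FreeLieAlgebra.lift ℂ g x).2

/-- The projection from the free Lie algebra onto `g(A)`. -/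
noncomputable def toGA (A : Matrix (Fin ℓ) (Fin ℓ) ℤ) : FreeLie ℓ →ₗ⁅ℂ⁆ gA A :=
  { LieSubmodule.Quotient.mk' (serreIdeal A) with map_lie' := rfl }

theorem toGA_eq_zero {x : FreeLie ℓ} (hx : x ∈ serreRelations A) : toGA A x = 0 :=
  (LieSubmodule.Quotient.mk_eq_zero (N := serreIdeal A)).2 (LieSubmodule.subset_lieSpan hx)

theorem lie_toGA_E_F (i j : Fin ℓ) :
    ⁅toGA A (E i), toGA A (F j)⁆ = if i = j then toGA A (H i) else 0 := by
  have := toGA_eq_zero (A := A) (.inl (.inl (.inl (.inl (.inr ⟨i, j, rfl⟩)))))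
  rwa [map_sub, sub_eq_zero, LieHom.map_lie, apply_ite (toGA A), map_zero] at this

/-- The generators of the Serre presentation. -/
noncomputable def serreGenerators (A : Matrix (Fin ℓ) (Fin ℓ) ℤ) :
    ChevalleyGenerators ℂ A (gA A) where
  e i := toGA A (E i)
  f i := toGA A (F i)
  h i := toGA A (H i)
  lie_h_h i j := by
    rw [← LieHom.map_lie, toGA_eq_zero (.inl (.inl (.inl (.inl (.inl ⟨i, j, rfl⟩)))))]
  lie_e_f := lie_toGA_E_F
  lie_h_e i j := by
    rw [← LieHom.map_lie, ← map_smul, ← sub_eq_zero, ← map_sub,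
      toGA_eq_zero (.inl (.inl (.inl (.inr ⟨i, j, rfl⟩))))]
  lie_h_f i j := by
    rw [← LieHom.map_lie, ← map_smul, eq_neg_iff_add_eq_zero, ← map_add,
      toGA_eq_zero (.inl (.inl (.inr ⟨i, j, rfl⟩)))]
  serre_e i j hij := by rw [← map_pow_ad, toGA_eq_zero (.inl (.inr ⟨i, j, hij, rfl⟩))]
  serre_f i j hij := by rw [← map_pow_ad, toGA_eq_zero (.inr ⟨i, j, hij, rfl⟩)]
  eq_top S he hf := by
    have hh (i : Fin ℓ) : toGA A (H i) ∈ S := by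
      simpa [lie_toGA_E_F] using S.lie_mem (he i) (hf i)
    have hcomap : S.comap (toGA A) = ⊤ := eq_top_of_generators_mem _ he hf hh
    refine eq_top_iff.2 fun z _ => ?_
    obtain ⟨x, rfl⟩ := LieSubmodule.Quotient.surjective_mk' (serreIdeal A) z
    exact (hcomap ▸ LieSubalgebra.mem_top x : x ∈ S.comap (toGA A))

theorem serreGenerators_e_ne_zero (hA : IsGeneralizedCartan A) (i : Fin ℓ) :
    (serreGenerators A).e i ≠ 0 := fun h =>
  E_notMem_serreIdeal hA i ((LieSubmodule.Quotient.mk_eq_zero (N := serreIdeal A)).1 h)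

end Presentation

/-! ### Root multiplicities -/

theorem even_dotProduct_mulVec {ι : Type*} [Fintype ι] {A : Matrix ι ι ℤ}
    (hsymm : A.IsSymm) (hdiag : ∀ i, Even (A i i)) (c : ι → ℤ) : Even (c ⬝ᵥ A *ᵥ c) := by
  classical
  rw [pi_eq_sum_univ' c]
  refine Finset.sum_induction _ (fun b => Even (b ⬝ᵥ A *ᵥ b)) (fun b d hb hd => ?_) (by simp)
    fun i _ => ?_
  · rw [norm_add hsymm]
    exact (hb.add (even_two_mul _)).add hd
  · rw [mulVec_smul, smul_dotProduct, dotProduct_smul, single_one_dotProduct, mulVec_single_one,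
      col_apply]
    exact ((hdiag i).mul_left _).mul_left _

namespace OverextendedDiagram

variable {m ℓ : ℕ} {A : Matrix (Fin m) (Fin m) ℤ}

theorem mult_eq_of_level_zero (hA : IsGeneralizedCartan A) (D : OverextendedDiagram A (Fin ℓ))
    {n : ℤ} (hn : 0 < n) : mult A (n • D.δ) = ℓ := by
  have he := serreGenerators_e_ne_zero hA
  obtain ⟨S⟩ := D.nonempty_loopSystem he
  obtain ⟨b⟩ := D.nonempty_basis_weightSpace_zsmul_δ S he hn
  exact (Module.finrank_eq_card_basis b).trans (Fintype.card_fin ℓ)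

theorem mult_eq_of_level_one (hA : IsGeneralizedCartan A) (D : OverextendedDiagram A (Fin ℓ))
    {c : Fin m → ℤ} (hc : c D.overNode = 1) {N : ℕ} (hN : c ⬝ᵥ A *ᵥ c = 2 - 2 * N) :
    mult A c = pColored ℓ N := by
  have he := serreGenerators_e_ne_zero hA
  obtain ⟨S⟩ := D.nonempty_loopSystem he
  obtain ⟨b⟩ := D.nonempty_basis_weightSpace_of_level_one S he hc hN
  exact (Module.finrank_eq_nat_card_basis b).trans (card_fockDegree_eq ℓ N)

end OverextendedDiagram

/-! ### The diagram of `E₁₀` -/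

theorem isGeneralizedCartan_AE10 : IsGeneralizedCartan AE10 where
  diag := by decide +kernel
  nonpos := by
    unfold AE10
    decide +kernel
  eq_zero_symm := by
    unfold AE10
    decide +kernel

/-- The inclusion of the diagram of `E₈` in that of `E₁₀`. -/
def e8Node (j : Fin 8) : Fin 10 := j.natAdd 2

/-- The null root `α₁ + θ` of the affine subdiagram, where `θ` is the highest root of `E₈`. -/
def e10δ : Fin 10 → ℤ := ![0, 1, 2, 3, 4, 5, 6, 4, 2, 3]

/-- The reflections in the nodes of this word take the highest root of `E₈` to its first simple
root, hence the affine simple root `δ - θ` to `δ` minus that simple root. -/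
def e8Word : List (Fin 8) :=
  [0, 1, 2, 3, 4, 5, 6, 7, 4, 3, 2, 1, 5, 4, 3, 2, 7, 4, 3, 5, 4, 6, 5, 7, 4, 3, 2, 1]

/-- The reflections in the nodes of the word at `j` take the first simple root of `E₈` to the one at
`j`: for adjacent nodes `i` and `k`, `sᵢ sₖ αᵢ = αₖ`. -/
def e8Path : Fin 8 → List (Fin 8) :=
  ![[], [1, 0], [1, 0, 2, 1], [1, 0, 2, 1, 3, 2], [1, 0, 2, 1, 3, 2, 4, 3],
    [1, 0, 2, 1, 3, 2, 4, 3, 5, 4], [1, 0, 2, 1, 3, 2, 4, 3, 5, 4, 6, 5],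
    [1, 0, 2, 1, 3, 2, 4, 3, 7, 4]]

theorem e8_posDef {y : Fin 8 → ℤ} (hy : y ≠ 0) :
    0 < y ⬝ᵥ AE10.submatrix e8Node e8Node *ᵥ y := by
  set q := y ⬝ᵥ AE10.submatrix e8Node e8Node *ᵥ y with hq
  let w : Fin 8 → ℤ := ![360, 120, 60, 36, 24, 30, 90, 40]
  let x : Fin 8 → ℤ := ![y 0, 3 * y 0 - 2 * y 1, 4 * y 1 - 3 * y 2, 5 * y 2 - 4 * y 3,
    6 * y 3 - 5 * y 4, 4 * y 4 - 6 * y 5, 2 * y 5 - 4 * y 6, 3 * y 4 - 6 * y 7]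
  have hsquares : 720 * q = ∑ k, w k * x k ^ 2 := by
    simp [hq, w, x, dotProduct, mulVec, Fin.sum_univ_succ, AE10, e10Edges, e8Node]
    ring
  have hw : ∀ k, 0 < w k := by decide
  by_contra! hq_nonpos
  have hx (k : Fin 8) : x k = 0 := by
    by_contra hk
    have hle := Finset.single_le_sum
      (fun k _ => mul_nonneg (hw k).le (sq_nonneg (x k))) (Finset.mem_univ k)
    linarith [mul_pos (hw k) (sq_pos_of_ne_zero hk)]
  simp only [Fin.forall_fin_succ, cons_val_zero, cons_val_succ, cons_val_fin_one, forall_const,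
    x] at hx
  exact hy (funext fun j => by fin_cases j <;> simp <;> omega)

theorem e10_reachable (j : Fin 8) :
    Relation.ReflTransGen (ReflectionStep AE10 (Set.range e8Node)) (Pi.single 1 1)
      (e10δ - Pi.single (e8Node j) 1) := by
  have hfold : ∀ j, (((e8Word ++ e8Path j).map e8Node).foldl (fun c i => simpleReflection AE10 i c)
      (Pi.single 1 1)) = e10δ - Pi.single (e8Node j) 1 := by
    decide +kernel
  have hstep : ∀ j k (hk : k < ((e8Word ++ e8Path j).map e8Node).length),
      ((AE10 *ᵥ (((e8Word ++ e8Path j).map e8Node).take k).foldl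
        (fun c i => simpleReflection AE10 i c) (Pi.single 1 1))
        ((e8Word ++ e8Path j).map e8Node)[k]).natAbs ≤ 1 := by
    decide +kernel
  rw [← hfold j]
  refine reflTransGen_foldl_simpleReflection (fun i hi => ?_) (hstep j)
  obtain ⟨k, -, rfl⟩ := List.mem_map.1 hi
  exact Set.mem_range_self k

/-- `E₁₀` as the over-extension of `E₈`. -/
def e10Diagram : OverextendedDiagram AE10 (Fin 8) where
  node := e8Node
  affineNode := 1
  overNode := 0
  δ := e10δ
  isSymm := by unfold IsSymm; decide +kernel
  diag := isGeneralizedCartan_AE10.diag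
  eq_node := by decide +kernel
  node_ne_overNode := by decide +kernel
  δ_affineNode := rfl
  δ_overNode := rfl
  mulVec_δ := by decide +kernel
  posDef _ := e8_posDef
  parent i := if i = 7 then 4 else i - 1
  eq_zero_or_parent_eq := by decide +kernel
  reachable := e10_reachable

theorem normE10_eq_dotProduct_mulVec (c : Fin 10 → ℤ) : normE10 c = c ⬝ᵥ AE10 *ᵥ c := by
  simp only [normE10, dotProduct, mulVec, Finset.mul_sum, mul_assoc]

end KacMoody

open KacMoody Matrix in
theorem kac_moody_wakimoto_level_le_one_general {m ℓ : ℕ} {A : Matrix (Fin m) (Fin m) ℤ}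
    (hA : IsGeneralizedCartan A) (D : OverextendedDiagram A (Fin ℓ)) (c : Fin m → ℕ)
    (hlevel : c D.overNode ≤ 1) (hne : c ≠ 0)
    (hnorm : (fun i => (c i : ℤ)) ⬝ᵥ A *ᵥ (fun i => (c i : ℤ)) ≤ 0) :
    mult A (fun i => (c i : ℤ)) =
      pColored ℓ (1 - (fun i => (c i : ℤ)) ⬝ᵥ A *ᵥ (fun i => (c i : ℤ)) / 2).toNat := by
  set α : Fin m → ℤ := fun i => (c i : ℤ) with hα
  obtain hover | hover := Nat.le_one_iff_eq_zero_or_eq_one.1 hlevel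
  · have hα_eq := D.eq_zsmul_δ_of_norm_nonpos (c := α) (by simp [hα, hover]) hnorm
    have hpos : 0 < α D.affineNode := by
      refine lt_of_le_of_ne (Int.natCast_nonneg _) fun h => hne (funext fun i => ?_)
      rw [← h, zero_smul] at hα_eq
      exact Int.natCast_eq_zero.1 (congrFun hα_eq i)
    have hnorm0 : α ⬝ᵥ A *ᵥ α = 0 := by
      rw [hα_eq, mulVec_smul, dotProduct_smul, smul_dotProduct, D.norm_δ, smul_zero, smul_zero]
    rw [hnorm0, hα_eq, D.mult_eq_of_level_zero hA hpos]
    exact (pColored_one ℓ).symm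
  · obtain ⟨k, hk⟩ := even_dotProduct_mulVec D.isSymm (fun i => D.diag i ▸ even_two) α
    have hN : α ⬝ᵥ A *ᵥ α = 2 - 2 * (1 - α ⬝ᵥ A *ᵥ α / 2).toNat := by omega
    exact D.mult_eq_of_level_one hA (by simp [hα, hover]) hN

/-- **(Kac–Moody–Wakimoto, levels 0 and 1 for `E₁₀`.)**  For every `c : Fin 10 → ℕ` with
`c 0 ≤ 1` (level 0 or 1), `α = ∑ c i • α i ≠ 0` and `(α|α) ≤ 0`, one has
`mult(α) = p⁽⁸⁾(1 − (α|α)/2)`. -/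
theorem kac_moody_wakimoto_level_le_one (c : Fin 10 → ℕ)
    (hlevel : c 0 ≤ 1) (hne : c ≠ 0)
    (hnorm : normE10 (fun i => (c i : ℤ)) ≤ 0) :
    KacMoody.mult AE10 (fun i => (c i : ℤ)) =
      pColored 8 ((1 - normE10 (fun i => (c i : ℤ)) / 2).toNat) := by
  rw [KacMoody.normE10_eq_dotProduct_mulVec] at hnorm ⊢
  exact kac_moody_wakimoto_level_le_one_general KacMoody.isGeneralizedCartan_AE10
    KacMoody.e10Diagram c hlevel hne hnorm
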